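/- arXiv:1609.08132 — 3 statements merged into one kernel-verified Lean document; each statement's English description precedes it below -/
import Mathlib

section
/- There exists a finite simple graph G such that G is a 3-tree, G admits a straight-line plane drawing (i.e., G is a planar 3-tree), and for every straight-line plane drawing p of G there is no 1-string representation of G that is order-preserving with respect to p. -/
/-- An arc: an injective continuous map from `[0,1]` to `ℝ²`
(formalized as a map `ℝ → ℝ × ℝ` that is continuous and injective on `[0,1]`). -/
structure Arc where
  toFun : ℝ → ℝ × ℝ
  contOn : ContinuousOn toFun (Set.Icc 0 1)
  injOn : Set.InjOn toFun (Set.Icc 0 1)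

/-- The image of an arc. -/
def Arc.img (γ : Arc) : Set (ℝ × ℝ) := γ.toFun '' Set.Icc 0 1

/-- The endpoints of an arc. -/
def Arc.ends (γ : Arc) : Set (ℝ × ℝ) := {γ.toFun 0, γ.toFun 1}

/-- Two arcs cross properly at `q`: `q` is an interior point of both arcs, and there is
an open neighbourhood of `q` mapped homeomorphically onto the open unit disk with `q ↦ 0`,
taking the first arc to the horizontal diameter and the second to the vertical diameter. -/
def CrossesProperlyAt (γ₁ γ₂ : Arc) (q : ℝ × ℝ) : Prop :=
  (∃ s ∈ Set.Ioo (0:ℝ) 1, γ₁.toFun s = q) ∧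
  (∃ t ∈ Set.Ioo (0:ℝ) 1, γ₂.toFun t = q) ∧
  ∃ h : PartialHomeomorph (ℝ × ℝ) (ℝ × ℝ),
    q ∈ h.source ∧ h.target = Metric.ball (0 : ℝ × ℝ) 1 ∧ h q = 0 ∧
    h '' (h.source ∩ γ₁.img) = {z : ℝ × ℝ | z ∈ Metric.ball (0 : ℝ × ℝ) 1 ∧ z.2 = 0} ∧
    h '' (h.source ∩ γ₂.img) = {z : ℝ × ℝ | z ∈ Metric.ball (0 : ℝ × ℝ) 1 ∧ z.1 = 0}

/-- A 1-string representation of a simple graph `G`. -/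
structure OneStringRep {V : Type} (G : SimpleGraph V) where
  γ : V → Arc
  adj_inter : ∀ u v : V, G.Adj u v → ∃ q : ℝ × ℝ, (γ u).img ∩ (γ v).img = {q}
  nonadj_disjoint : ∀ u v : V, u ≠ v → ¬G.Adj u v → (γ u).img ∩ (γ v).img = ∅
  proper : ∀ u v : V, u ≠ v → ∀ q ∈ (γ u).img ∩ (γ v).img, CrossesProperlyAt (γ u) (γ v) q
  no_triple : ∀ u v w : V, u ≠ v → u ≠ w → v ≠ w → (γ u).img ∩ (γ v).img ∩ (γ w).img = ∅

/-- A straight-line plane drawing of a simple graph. -/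
def IsPlaneDrawing {V : Type} (G : SimpleGraph V) (p : V → ℝ × ℝ) : Prop :=
  Function.Injective p ∧
  (∀ u v x y : V, G.Adj u v → G.Adj x y → u ≠ x → u ≠ y → v ≠ x → v ≠ y →
    segment ℝ (p u) (p v) ∩ segment ℝ (p x) (p y) = ∅) ∧
  (∀ u v w : V, G.Adj u v → G.Adj u w → v ≠ w →
    segment ℝ (p u) (p v) ∩ segment ℝ (p u) (p w) = {p u}) ∧
  (∀ u v w : V, G.Adj u v → w ≠ u → w ≠ v → p w ∉ segment ℝ (p u) (p v))

/-- The angle of the vector from `a` to `b`. -/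
noncomputable def angleAt (a b : ℝ × ℝ) : ℝ := Complex.arg ⟨b.1 - a.1, b.2 - a.2⟩

/-- A 1-string representation is order-preserving w.r.t. a straight-line plane drawing `p`:
for each vertex `v`, listing the neighbours `w₁, …, w_k` sorted by the angle of `p wᵢ - p v`,
there are a traversal direction of `γ v` and a cyclic rotation of the list such that the
intersection points of `γ v` with the `γ wᵢ` occur along `γ v`, in that traversal direction,
exactly in the rotated order. -/
def OrderPreserving {V : Type} (G : SimpleGraph V) (p : V → ℝ × ℝ)
    (R : OneStringRep G) : Prop :=
  ∀ v : V, ∃ l : List V,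
    l.Nodup ∧ (∀ w : V, w ∈ l ↔ G.Adj v w) ∧
    l.Pairwise (fun w w' => angleAt (p v) (p w) < angleAt (p v) (p w')) ∧
    ∃ (r : ℕ) (dir : Bool) (t : V → ℝ),
      (∀ w ∈ l, t w ∈ Set.Icc (0:ℝ) 1 ∧ (R.γ v).toFun (t w) ∈ (R.γ w).img) ∧
      (l.rotate r).Pairwise (fun w w' => if dir then t w < t w' else t w' < t w)

/-- The union of the images of a family of arcs. -/
def arcUnion {V : Type} (γ : V → Arc) : Set (ℝ × ℝ) := ⋃ v, (γ v).img

/-- The contour of a family of arcs: the unbounded connected component of the complement of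
the union of the images (formalized as the union of all unbounded connected components). -/
def contour {V : Type} (γ : V → Arc) : Set (ℝ × ℝ) :=
  {x | x ∈ (arcUnion γ)ᶜ ∧ ¬ Bornology.IsBounded (connectedComponentIn (arcUnion γ)ᶜ x)}

/-- A `k`-tree: there is an ordering of the vertices such that the first `k` form a clique and
every later vertex has exactly `k` earlier neighbours, which form a clique. -/
def IsKTree {V : Type} (k : ℕ) (G : SimpleGraph V) : Prop :=
  ∃ (n : ℕ) (e : V ≃ Fin n), k ≤ n ∧
    G.IsClique {v : V | (e v).val < k} ∧
    ∀ i : Fin n, k ≤ i.val →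
      ∃ S : Finset V, S.card = k ∧
        (∀ w : V, w ∈ S ↔ G.Adj (e.symm i) w ∧ (e w).val < i.val) ∧
        G.IsClique ↑S

/-- An L-shape: an arc whose image is the union of a vertical segment from `(x, y+h)` to
`(x, y)` and a horizontal segment from `(x, y)` to `(x+w, y)` with `w, h > 0`. -/
def IsLShape (γ : Arc) : Prop :=
  ∃ x y w h : ℝ, 0 < w ∧ 0 < h ∧
    γ.img = segment ℝ (x, y + h) (x, y) ∪ segment ℝ (x, y) (x + w, y)

/-- A 1-bend orthogonal arc: its image is a single horizontal or vertical segment, or the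
union of a horizontal segment and a vertical segment sharing exactly one endpoint. -/
def IsOneBendOrth (γ : Arc) : Prop :=
  (∃ a b : ℝ × ℝ, a ≠ b ∧ (a.1 = b.1 ∨ a.2 = b.2) ∧ γ.img = segment ℝ a b) ∨
  (∃ a b c : ℝ × ℝ, a ≠ b ∧ b ≠ c ∧
    ((a.1 = b.1 ∧ b.2 = c.2) ∨ (a.2 = b.2 ∧ b.1 = c.1)) ∧
    γ.img = segment ℝ a b ∪ segment ℝ b c ∧ segment ℝ a b ∩ segment ℝ b c = {b})

/-- A graph is 2-connected if it has at least 3 vertices and deleting any single vertex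
leaves a connected graph. -/
def TwoConnected {V : Type} (G : SimpleGraph V) : Prop :=
  3 ≤ Nat.card V ∧ ∀ v : V, ((⊤ : G.Subgraph).deleteVerts {v}).coe.Connected

section
open unitInterval

theorem lift_exists (H : I × I → ℂ) (hc : Continuous H) (h0 : ∀ z, H z ≠ 0) :
    ∃ L : I × I → ℂ, Continuous L ∧ ∀ z, Complex.exp (L z) = H z := by
  have h01 : (0:ℝ) ≤ 1 := zero_le_one
  let pr : ℝ × ℝ → I × I := fun z => (Set.projIcc 0 1 h01 z.1, Set.projIcc 0 1 h01 z.2)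
  have hpr : Continuous pr := by
    dsimp only [pr]
    exact (continuous_projIcc.comp continuous_fst).prodMk (continuous_projIcc.comp continuous_snd)
  have := Complex.isCoveringMap_exp.existsUnique_continuousMap_lifts
    (f := (⟨fun z => ⟨H (pr z), h0 _⟩, by fun_prop⟩ : C(ℝ × ℝ, {z : ℂ // z ≠ 0})))
    (a₀ := ((0, 0) : ℝ × ℝ)) (e₀ := Complex.log (H (pr (0,0))))
    (by ext; simp [Complex.exp_log (h0 _)])
  obtain ⟨F, ⟨-, hF⟩, -⟩ := this
  refine ⟨fun z => F (z.1, z.2), by fun_prop, fun z => ?_⟩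
  have := congrArg Subtype.val (congrFun hF ((z.1 : ℝ), (z.2 : ℝ)))
  simpa [pr] using this

theorem log_diff (L L' : I → ℂ) (hL : Continuous L) (hL' : Continuous L')
    (h : ∀ t, Complex.exp (L t) = Complex.exp (L' t)) : L 1 - L 0 = L' 1 - L' 0 := by
  have key : (fun t : I => L t - (L 0 - L' 0)) = L' := by
    have hcov := Complex.isCoveringMap_exp
    refine hcov.eq_of_comp_eq (by fun_prop) hL' ?_ 0 (by simp)
    funext t
    apply Subtype.ext
    change Complex.exp (L t - (L 0 - L' 0)) = Complex.exp (L' t)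
    rw [Complex.exp_sub, Complex.exp_sub, h t, h 0, div_self (Complex.exp_ne_zero _), div_one]
  have := congrFun key 1
  change L 1 - (L 0 - L' 0) = L' 1 at this
  rw [← this]; ring

open Classical in
noncomputable def va (f : I → ℂ) : ℂ :=
  if h : ∃ L : I → ℂ, Continuous L ∧ ∀ t, Complex.exp (L t) = f t then
    h.choose 1 - h.choose 0 else 0

theorem va_eq {f L : I → ℂ} (hL : Continuous L) (h : ∀ t, Complex.exp (L t) = f t) :
    va f = L 1 - L 0 := by
  have hex : ∃ L : I → ℂ, Continuous L ∧ ∀ t, Complex.exp (L t) = f t := ⟨L, hL, h⟩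
  rw [va, dif_pos hex]
  exact log_diff _ _ hex.choose_spec.1 hL (fun t => by rw [hex.choose_spec.2, h])

theorem lift1 (f : I → ℂ) (hc : Continuous f) (h0 : ∀ z, f z ≠ 0) :
    ∃ L : I → ℂ, Continuous L ∧ ∀ z, Complex.exp (L z) = f z := by
  obtain ⟨L, hL, h⟩ := lift_exists (fun z => f z.1) (by fun_prop) (fun z => h0 _)
  exact ⟨fun t => L (t, 0), by fun_prop, fun z => h (z, 0)⟩

theorem va_rect (H : I × I → ℂ) (hc : Continuous H) (h0 : ∀ z, H z ≠ 0) :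
    va (fun s => H (s, 0)) + va (fun t => H (1, t)) =
      va (fun t => H (0, t)) + va (fun s => H (s, 1)) := by
  obtain ⟨L, hL, h⟩ := lift_exists H hc h0
  rw [va_eq (L := fun s => L (s, 0)) (by fun_prop) (fun t => h _),
    va_eq (L := fun s => L (s, 1)) (by fun_prop) (fun t => h _),
    va_eq (L := fun s => L (0, s)) (by fun_prop) (fun t => h _),
    va_eq (L := fun s => L (1, s)) (by fun_prop) (fun t => h _)]
  ring

theorem va_negsymm (f : I → ℂ) (hc : Continuous f) (h0 : ∀ z, f z ≠ 0) :
    va (fun t => - f (σ t)) = - va f := by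
  obtain ⟨L, hL, h⟩ := lift1 f hc h0
  rw [va_eq hL h, va_eq (L := fun t => L (σ t) + Real.pi * Complex.I) (by fun_prop)]
  · simp
  · intro t; rw [Complex.exp_add, h, Complex.exp_pi_mul_I]; ring

theorem va_exp (f : I → ℂ) (hc : Continuous f) (h0 : ∀ z, f z ≠ 0) :
    Complex.exp (va f) = f 1 / f 0 := by
  obtain ⟨L, hL, h⟩ := lift1 f hc h0
  rw [va_eq hL h, Complex.exp_sub, h, h]

theorem lemX (g : ℝ × ℝ → ℂ) (hg : ContinuousOn g (Set.Icc (-1) 1 ×ˢ Set.Icc (-1) 1))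
    (hi : Set.InjOn g (Set.Icc (-1) 1 ×ˢ Set.Icc (-1) 1))
    (α β : I → ℂ) (hα : Continuous α) (hβ : Continuous β)
    (hα0 : α 0 = g (1, 0)) (hα1 : α 1 = g (-1, 0))
    (hβ0 : β 0 = g (0, 1)) (hβ1 : β 1 = g (0, -1))
    (hαβ : ∀ s t, α s ≠ β t)
    (hαg : ∀ s, ∀ y ∈ Set.Icc (-1:ℝ) 1, α s ≠ g (0, y))
    (hβg : ∀ s, ∀ y ∈ Set.Icc (-1:ℝ) 1, β s ≠ g (y, 0)) : False := by
  -- bounds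
  have hξ : ∀ s : I, -1 ≤ 2 * (s:ℝ) - 1 ∧ 2 * (s:ℝ) - 1 ≤ 1 := fun s =>
    ⟨by linarith [s.2.1], by linarith [s.2.2]⟩
  have hcomp : ∀ (φ : I × I → ℝ × ℝ), Continuous φ →
      (∀ z, φ z ∈ Set.Icc (-1:ℝ) 1 ×ˢ Set.Icc (-1:ℝ) 1) → Continuous (fun z => g (φ z)) := by
    intro φ hφ hm
    exact hg.comp_continuous hφ hm
  have hcomp1 : ∀ (φ : I → ℝ × ℝ), Continuous φ →
      (∀ z, φ z ∈ Set.Icc (-1:ℝ) 1 ×ˢ Set.Icc (-1:ℝ) 1) → Continuous (fun z => g (φ z)) := by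
    intro φ hφ hm
    exact hg.comp_continuous hφ hm
  have R1 := va_rect (fun z => g (2 * (z.1:ℝ) - 1, 0) - β z.2)
    ((hcomp (fun z => (2 * (z.1:ℝ) - 1, 0)) (by fun_prop)
      (fun z => ⟨hξ z.1, by constructor <;> norm_num⟩)).sub (by fun_prop))
    (fun z h => hβg z.2 _ (hξ z.1) (sub_eq_zero.1 h).symm)
  have R2 := va_rect (fun z => α z.1 - g (0, 2 * (z.2:ℝ) - 1))
    (Continuous.sub (by fun_prop) (hcomp (fun z => (0, 2 * (z.2:ℝ) - 1)) (by fun_prop)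
      (fun z => ⟨by constructor <;> norm_num, hξ z.2⟩)))
    (fun z h => hαg z.1 _ (hξ z.2) (sub_eq_zero.1 h))
  have R3 := va_rect (fun z => α z.1 - β z.2) (by fun_prop)
    (fun z h => hαβ _ _ (sub_eq_zero.1 h))
  -- the deformation
  set D : ℝ → ℝ → ℝ → ℂ := fun x y τ =>
    g (x - τ * x / 2, - (τ * y / 2)) - g (- (τ * x / 2), y - τ * y / 2) with hD
  have m1 : ∀ x τ : ℝ, (-1 ≤ x ∧ x ≤ 1) → (0 ≤ τ ∧ τ ≤ 1) → x - τ * x / 2 ∈ Set.Icc (-1:ℝ) 1 := by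
    rintro x τ ⟨h1, h2⟩ ⟨h3, h4⟩
    constructor <;> nlinarith
  have m2 : ∀ x τ : ℝ, (-1 ≤ x ∧ x ≤ 1) → (0 ≤ τ ∧ τ ≤ 1) → -(τ * x / 2) ∈ Set.Icc (-1:ℝ) 1 := by
    rintro x τ ⟨h1, h2⟩ ⟨h3, h4⟩
    constructor <;> nlinarith
  have hD0 : ∀ x y τ : ℝ, (-1 ≤ x ∧ x ≤ 1) → (-1 ≤ y ∧ y ≤ 1) → (0 ≤ τ ∧ τ ≤ 1) →
      (x ≠ 0 ∨ y ≠ 0) → D x y τ ≠ 0 := by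
    intro x y τ hx hy hτ hne h
    have := hi (Set.mk_mem_prod (m1 x τ hx hτ) (m2 y τ hy hτ))
      (Set.mk_mem_prod (m2 x τ hx hτ) (m1 y τ hy hτ)) (sub_eq_zero.1 h)
    simp only [Prod.mk.injEq] at this
    rcases hne with h' | h'
    · exact h' (by linarith [this.1])
    · exact h' (by linarith [this.2])
  have hDc : ∀ (X Y T : I × I → ℝ), Continuous X → Continuous Y → Continuous T →
      (∀ z, -1 ≤ X z ∧ X z ≤ 1) → (∀ z, -1 ≤ Y z ∧ Y z ≤ 1) → (∀ z, 0 ≤ T z ∧ T z ≤ 1) →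
      Continuous (fun z => D (X z) (Y z) (T z)) := by
    intro X Y T hX hY hT bX bY bT
    exact (hcomp (fun z => (X z - T z * X z / 2, - (T z * Y z / 2))) (by fun_prop)
      (fun z => ⟨m1 _ _ (bX z) (bT z), m2 _ _ (bY z) (bT z)⟩)).sub
      (hcomp (fun z => (- (T z * X z / 2), Y z - T z * Y z / 2)) (by fun_prop)
      (fun z => ⟨m2 _ _ (bX z) (bT z), m1 _ _ (bY z) (bT z)⟩))
  have b1 : (-1:ℝ) ≤ 1 ∧ (1:ℝ) ≤ 1 := by norm_num
  have b2 : (-1:ℝ) ≤ -1 ∧ (-1:ℝ) ≤ 1 := by norm_num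
  have RN := va_rect (fun z => D (2 * (z.1:ℝ) - 1) 1 z.2)
    (hDc _ _ _ (by fun_prop) (by fun_prop) (by fun_prop) (fun z => hξ _) (fun _ => b1) (fun z => z.2.2))
    (fun z => hD0 _ _ _ (hξ _) b1 z.2.2 (Or.inr (by norm_num)))
  have RS := va_rect (fun z => D (2 * (z.1:ℝ) - 1) (-1) z.2)
    (hDc _ _ _ (by fun_prop) (by fun_prop) (by fun_prop) (fun z => hξ _) (fun _ => b2) (fun z => z.2.2))
    (fun z => hD0 _ _ _ (hξ _) b2 z.2.2 (Or.inr (by norm_num)))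
  have RE := va_rect (fun z => D 1 (2 * (z.1:ℝ) - 1) z.2)
    (hDc _ _ _ (by fun_prop) (by fun_prop) (by fun_prop) (fun _ => b1) (fun z => hξ _) (fun z => z.2.2))
    (fun z => hD0 _ _ _ b1 (hξ _) z.2.2 (Or.inl (by norm_num)))
  have RW := va_rect (fun z => D (-1) (2 * (z.1:ℝ) - 1) z.2)
    (hDc _ _ _ (by fun_prop) (by fun_prop) (by fun_prop) (fun _ => b2) (fun z => hξ _) (fun z => z.2.2))
    (fun z => hD0 _ _ _ b2 (hξ _) z.2.2 (Or.inl (by norm_num)))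
  have b01 : (0:ℝ) ≤ 1 ∧ (1:ℝ) ≤ 1 := by norm_num
  have cN : Continuous (fun s : I => D (2 * (s:ℝ) - 1) 1 1) :=
    (hDc (fun z => 2 * (z.1:ℝ) - 1) (fun _ => 1) (fun _ => 1) (by fun_prop) (by fun_prop)
      (by fun_prop) (fun z => hξ _) (fun _ => b1) (fun _ => b01)).comp
      (f := fun s : I => (s, (0:I))) (by fun_prop)
  have cE : Continuous (fun s : I => D 1 (2 * (s:ℝ) - 1) 1) :=
    (hDc (fun _ => 1) (fun z => 2 * (z.1:ℝ) - 1) (fun _ => 1) (by fun_prop) (by fun_prop)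
      (by fun_prop) (fun _ => b1) (fun z => hξ _) (fun _ => b01)).comp
      (f := fun s : I => (s, (0:I))) (by fun_prop)
  have nN : ∀ s : I, D (2 * (s:ℝ) - 1) 1 1 ≠ 0 :=
    fun s => hD0 _ _ _ (hξ s) b1 b01 (Or.inr (by norm_num))
  have nE : ∀ s : I, D 1 (2 * (s:ℝ) - 1) 1 ≠ 0 :=
    fun s => hD0 _ _ _ b1 (hξ s) b01 (Or.inl (by norm_num))
  have odd : ∀ x y, D (-x) (-y) 1 = - D x y 1 := by
    intro x y
    simp only [hD]
    rw [neg_sub]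
    congr 3 <;> ring
  have S1 := va_negsymm _ cN nN
  have W1 := va_negsymm _ cE nE
  have eS : (fun t : I => - D (2 * ((σ t : I):ℝ) - 1) 1 1) = fun s : I => D (2 * (s:ℝ) - 1) (-1) 1 := by
    funext t
    rw [← odd]; congr 1; rw [coe_symm_eq]; ring
  have eW : (fun t : I => - D 1 (2 * ((σ t : I):ℝ) - 1) 1) = fun s : I => D (-1) (2 * (s:ℝ) - 1) 1 := by
    funext t
    rw [← odd]; congr 1; rw [coe_symm_eq]; ring
  rw [eS] at S1
  rw [eW] at W1
  have e1 := va_exp _ cN nN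
  have e2 := va_exp _ cE nE
  have key := odd 1 (-1)
  have n1 := nN 0
  have n2 := nN 1
  norm_num at R1 R2 R3 RN RS RE RW S1 W1 e1 e2 key n1 n2
  rw [hβ0, hβ1, ← hα0, ← hα1] at R1
  rw [← hβ0, ← hβ1, hα0, hα1] at R2
  have dN : (fun s : I => D (2 * (s:ℝ) - 1) 1 0) = fun s : I => g (2 * (s:ℝ) - 1, 0) - g (0, 1) := by
    funext s; simp [hD]
  have dS : (fun s : I => D (2 * (s:ℝ) - 1) (-1) 0) = fun s : I => g (2 * (s:ℝ) - 1, 0) - g (0, -1) := by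
    funext s; simp [hD]
  have dE : (fun s : I => D 1 (2 * (s:ℝ) - 1) 0) = fun s : I => g (1, 0) - g (0, 2 * (s:ℝ) - 1) := by
    funext s; simp [hD]
  have dW : (fun s : I => D (-1) (2 * (s:ℝ) - 1) 0) = fun s : I => g (-1, 0) - g (0, 2 * (s:ℝ) - 1) := by
    funext s; simp [hD]
  rw [dN] at RN
  rw [dS] at RS
  rw [dE] at RE
  rw [dW] at RW
  have hz : va (fun s : I => D (2 * (s:ℝ) - 1) 1 1) = va (fun s : I => D 1 (2 * (s:ℝ) - 1) 1) := by
    linear_combination (1/2 : ℂ) * (R1 + R2 + R3 - RN + RS + RE - RW + S1 - W1)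
  rw [hz, e2] at e1
  rw [key] at e1 n1
  have n3 : D 1 (-1) 1 ≠ 0 := fun h => n1 (by rw [h, neg_zero])
  field_simp at e1
  norm_num at e1

end

theorem germ (b : Arc) (c : ℝ → ℝ × ℝ) (hc : ContinuousAt c 0)
    (hcb : ∀ s ∈ Set.Ioo (-1:ℝ) 1, c s ∈ b.img) (t0 t1 t2 : ℝ) (h1 : 0 ≤ t1) (h10 : t1 < t0)
    (h02 : t0 < t2) (h2 : t2 ≤ 1) (h0 : c 0 = b.toFun t0) :
    ∃ r > 0, ∀ s : ℝ, |s| < r → c s ∈ b.toFun '' Set.Icc t1 t2 := by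
  have hcomp : IsCompact (b.toFun '' (Set.Icc 0 t1 ∪ Set.Icc t2 1)) := by
    apply (isCompact_Icc.union isCompact_Icc).image_of_continuousOn
    apply b.contOn.mono
    rintro y (hy | hy)
    · exact ⟨hy.1, by linarith [hy.2]⟩
    · exact ⟨by linarith [hy.1], hy.2⟩
  have hn : c 0 ∉ b.toFun '' (Set.Icc 0 t1 ∪ Set.Icc t2 1) := by
    rw [h0]
    rintro ⟨y, hy, e⟩
    have hy' : y ∈ Set.Icc (0:ℝ) 1 := by
      rcases hy with hy | hy
      · exact ⟨hy.1, by linarith [hy.2]⟩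
      · exact ⟨by linarith [hy.1], hy.2⟩
    have := b.injOn hy' ⟨by linarith, by linarith⟩ e
    subst this
    rcases hy with hy | hy
    · linarith [hy.2]
    · linarith [hy.1]
  have hev := hc.eventually (hcomp.isClosed.isOpen_compl.mem_nhds hn)
  obtain ⟨r, hr, h⟩ := Metric.eventually_nhds_iff.1 hev
  refine ⟨min r 1, by positivity, fun s hs => ?_⟩
  have hs1 : |s| < 1 := lt_of_lt_of_le hs (min_le_right _ _)
  have hsr : |s| < r := lt_of_lt_of_le hs (min_le_left _ _)
  obtain ⟨y, hy, e⟩ := hcb s ⟨(abs_lt.1 hs1).1, (abs_lt.1 hs1).2⟩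
  have hh := @h s (by simpa [Real.dist_eq] using hsr)
  refine ⟨y, ?_, e⟩
  by_contra hcon
  apply hh
  refine ⟨y, ?_, e⟩
  by_cases hy1 : y ≤ t1
  · exact Or.inl ⟨hy.1, hy1⟩
  · by_cases hy2 : t2 ≤ y
    · exact Or.inr ⟨hy2, hy.2⟩
    · exact absurd ⟨by linarith, by linarith⟩ hcon

theorem joinArc (b : Arc) (s t : ℝ) (h : s ≤ t) (h0 : 0 ≤ s) (h1 : t ≤ 1) (S : Set (ℝ × ℝ))
    (hS : b.toFun '' Set.Icc s t ⊆ S) : JoinedIn S (b.toFun s) (b.toFun t) := by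
  have hp : IsPathConnected (b.toFun '' Set.Icc s t) := by
    apply IsPathConnected.image'
    · exact (convex_Icc s t).isPathConnected ⟨s, le_rfl, h⟩
    · exact b.contOn.mono (Set.Icc_subset_Icc h0 h1)
  exact (hp.joinedIn _ ⟨s, ⟨le_rfl, h⟩, rfl⟩ _ ⟨t, ⟨h, le_rfl⟩, rfl⟩).mono hS

theorem joinOuter (b : Arc) (K : Set (ℝ × ℝ)) (t0 t1 t2 : ℝ) (h1 : 0 ≤ t1) (h10 : t1 < t0)
    (h02 : t0 < t2) (h2 : t2 ≤ 1) (hK : JoinedIn K (b.toFun t1) (b.toFun t2))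
    (hq : b.toFun t0 ∉ K) (y z : ℝ × ℝ) (hy : y ∈ b.toFun '' Set.Icc t1 t2) (hyq : y ≠ b.toFun t0)
    (hz : z ∈ b.toFun '' Set.Icc t1 t2) (hzq : z ≠ b.toFun t0) :
    JoinedIn ((b.toFun '' Set.Icc t1 t2 ∪ K) \ {b.toFun t0}) y z := by
  have main : ∀ y : ℝ × ℝ, y ∈ b.toFun '' Set.Icc t1 t2 → y ≠ b.toFun t0 →
      JoinedIn ((b.toFun '' Set.Icc t1 t2 ∪ K) \ {b.toFun t0}) y (b.toFun t1) := by
    rintro _ ⟨t, ht, rfl⟩ hne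
    have hK' : JoinedIn ((b.toFun '' Set.Icc t1 t2 ∪ K) \ {b.toFun t0}) (b.toFun t1) (b.toFun t2) :=
      hK.mono (fun w hw => ⟨Or.inr hw, fun e => hq (e ▸ hw)⟩)
    have hne' : t ≠ t0 := fun e => hne (e ▸ rfl)
    rcases lt_or_gt_of_ne hne' with hlt | hgt
    · refine (joinArc b t1 t ht.1 h1 (by linarith [ht.2]) _ ?_).symm
      rintro _ ⟨w, hw, rfl⟩
      refine ⟨Or.inl ⟨w, ⟨hw.1, by linarith [hw.2]⟩, rfl⟩, fun e => ?_⟩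
      have := b.injOn (x₁ := w) (x₂ := t0) ⟨by linarith [hw.1], by linarith [hw.2]⟩ ⟨by linarith, by linarith⟩ e
      linarith [hw.2]
    · refine (joinArc b t t2 ht.2 (by linarith [ht.1]) h2 _ ?_).trans hK'.symm
      rintro _ ⟨w, hw, rfl⟩
      refine ⟨Or.inl ⟨w, ⟨by linarith [hw.1, ht.1], hw.2⟩, rfl⟩, fun e => ?_⟩
      have := b.injOn (x₁ := w) (x₂ := t0) ⟨by linarith [hw.1, ht.1], by linarith [hw.2]⟩ ⟨by linarith, by linarith⟩ e
      linarith [hw.1]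
  exact (main y hy hyq).trans (main z hz hzq).symm

theorem lemC (b x : Arc) (q : ℝ × ℝ) (hcr : CrossesProperlyAt b x q)
    (hbx : b.img ∩ x.img = {q}) (t0 t1 t2 s0 s1 s2 : ℝ)
    (h1 : 0 ≤ t1) (h10 : t1 < t0) (h02 : t0 < t2) (h2 : t2 ≤ 1)
    (k1 : 0 ≤ s1) (k10 : s1 < s0) (k02 : s0 < s2) (k2 : s2 ≤ 1)
    (hbq : b.toFun t0 = q) (hxq : x.toFun s0 = q)
    (K K' : Set (ℝ × ℝ)) (hK : JoinedIn K (b.toFun t1) (b.toFun t2))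
    (hK' : JoinedIn K' (x.toFun s1) (x.toFun s2))
    (hd : Disjoint K K') (hd1 : Disjoint K (x.toFun '' Set.Icc s1 s2))
    (hd2 : Disjoint K' (b.toFun '' Set.Icc t1 t2)) : False := by
  obtain ⟨-, -, h, hqs, htar, hq0, hb, hx⟩ := hcr
  obtain ⟨g, hgdef⟩ : ∃ g : ℝ × ℝ → ℝ × ℝ, g = fun z => h.symm z := ⟨_, rfl⟩
  have hball : ∀ z : ℝ × ℝ, z ∈ Metric.ball (0 : ℝ × ℝ) 1 ↔ |z.1| < 1 ∧ |z.2| < 1 := by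
    intro z
    rw [mem_ball_zero_iff, Prod.norm_def, max_lt_iff, Real.norm_eq_abs, Real.norm_eq_abs]
  have hgc : ContinuousOn g (Metric.ball 0 1) := by
    rw [← htar, hgdef]; exact h.continuousOn_invFun
  have hgi : Set.InjOn g (Metric.ball 0 1) := by
    rw [← htar]
    intro y hy z hz e
    rw [hgdef] at e
    have := congrArg h e
    simp only at this
    rwa [h.right_inv hy, h.right_inv hz] at this
  have hg0 : g 0 = q := by
    rw [← hq0, hgdef]; exact h.left_inv hqs
  have hgb : ∀ s ∈ Set.Ioo (-1:ℝ) 1, g (s, 0) ∈ b.img := by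
    intro s hs
    have : ((s, 0) : ℝ × ℝ) ∈ h '' (h.source ∩ b.img) := by
      rw [hb]; refine ⟨(hball _).2 ⟨abs_lt.2 hs, by simp⟩, rfl⟩
    obtain ⟨w, hw, e⟩ := this
    rw [← e, hgdef]; simp only; rw [h.left_inv hw.1]; exact hw.2
  have hgx : ∀ s ∈ Set.Ioo (-1:ℝ) 1, g (0, s) ∈ x.img := by
    intro s hs
    have : ((0, s) : ℝ × ℝ) ∈ h '' (h.source ∩ x.img) := by
      rw [hx]; refine ⟨(hball _).2 ⟨by simp, abs_lt.2 hs⟩, rfl⟩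
    obtain ⟨w, hw, e⟩ := this
    rw [← e, hgdef]; simp only; rw [h.left_inv hw.1]; exact hw.2
  have hgca : ContinuousAt g 0 := hgc.continuousAt (Metric.ball_mem_nhds _ one_pos)
  obtain ⟨r1, hr1, H1⟩ := germ b (fun s => g (s, 0))
    (ContinuousAt.comp (f := fun s : ℝ => ((s, 0) : ℝ × ℝ)) hgca (by fun_prop)) hgb t0 t1 t2 h1 h10 h02 h2
    (by rw [hbq]; exact hg0)
  obtain ⟨r2, hr2, H2⟩ := germ x (fun s => g (0, s))
    (ContinuousAt.comp (f := fun s : ℝ => ((0, s) : ℝ × ℝ)) hgca (by fun_prop)) hgx s0 s1 s2 k1 k10 k02 k2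
    (by rw [hxq]; exact hg0)
  obtain ⟨r, hr, hrr⟩ : ∃ r : ℝ, 0 < r ∧ r < min (min r1 r2) 1 :=
    exists_between (by positivity)
  have hrr1 : r < r1 := by have := min_le_left (min r1 r2) 1; have := min_le_left r1 r2; linarith
  have hrr2 : r < r2 := by have := min_le_left (min r1 r2) 1; have := min_le_right r1 r2; linarith
  have hrr3 : r < 1 := by have := min_le_right (min r1 r2) 1; linarith
  have hsm : ∀ y ∈ Set.Icc (-1:ℝ) 1, |r * y| ≤ r := by
    intro y hy
    rw [abs_mul, abs_of_pos hr]
    have := abs_le.2 hy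
    nlinarith
  have hsmb : ∀ z ∈ Set.Icc (-1:ℝ) 1 ×ˢ Set.Icc (-1:ℝ) 1, (r * z.1, r * z.2) ∈ Metric.ball (0 : ℝ × ℝ) 1 :=
    fun z hz => (hball _).2 ⟨(hsm _ hz.1).trans_lt hrr3, (hsm _ hz.2).trans_lt hrr3⟩
  have hqne : ∀ s t : ℝ, |s| < 1 → |t| < 1 → (s ≠ 0 ∨ t ≠ 0) → g (s, t) ≠ q := by
    intro s t hs ht hne e
    rw [← hg0] at e
    have := hgi ((hball _).2 ⟨hs, ht⟩) ((hball _).2 ⟨by simp, by simp⟩) e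
    simp only [Prod.mk_eq_zero] at this
    tauto
  have hrab : |r| < 1 := by rw [abs_of_pos hr]; exact hrr3
  have hrab' : |-r| < 1 := by rw [abs_neg]; exact hrab
  have qK : q ∉ K := fun hh => Set.disjoint_left.1 hd1 hh ⟨s0, ⟨k10.le, k02.le⟩, hxq⟩
  have qK' : q ∉ K' := fun hh => Set.disjoint_left.1 hd2 hh ⟨t0, ⟨h10.le, h02.le⟩, hbq⟩
  have JA := joinOuter b K t0 t1 t2 h1 h10 h02 h2 hK (by rwa [hbq]) (g (r, 0)) (g (-r, 0))
    (H1 r (by rwa [abs_of_pos hr])) (by rw [hbq]; exact hqne _ _ hrab (by simp) (Or.inl hr.ne'))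
    (H1 (-r) (by rwa [abs_neg, abs_of_pos hr]))
    (by rw [hbq]; exact hqne _ _ hrab' (by simp) (Or.inl (neg_ne_zero.2 hr.ne')))
  have JB := joinOuter x K' s0 s1 s2 k1 k10 k02 k2 hK' (by rwa [hxq]) (g (0, r)) (g (0, -r))
    (H2 r (by rwa [abs_of_pos hr])) (by rw [hxq]; exact hqne _ _ (by simp) hrab (Or.inr hr.ne'))
    (H2 (-r) (by rwa [abs_neg, abs_of_pos hr]))
    (by rw [hxq]; exact hqne _ _ (by simp) hrab' (Or.inr (neg_ne_zero.2 hr.ne')))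
  rw [hbq] at JA
  rw [hxq] at JB
  obtain ⟨α, hα⟩ := JA
  obtain ⟨β, hβ⟩ := JB
  have sb : b.toFun '' Set.Icc t1 t2 ⊆ b.img := Set.image_mono (Set.Icc_subset_Icc h1 h2)
  have sx : x.toFun '' Set.Icc s1 s2 ⊆ x.img := Set.image_mono (Set.Icc_subset_Icc k1 k2)
  have hbx' : ∀ z, z ∈ b.toFun '' Set.Icc t1 t2 → z ∈ x.toFun '' Set.Icc s1 s2 → z = q := by
    intro z hz hz'
    have : z ∈ b.img ∩ x.img := ⟨sb hz, sx hz'⟩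
    rwa [hbx] at this
  have tri : ∀ z, z ∈ (b.toFun '' Set.Icc t1 t2 ∪ K) \ {q} →
      z ∉ (x.toFun '' Set.Icc s1 s2 ∪ K') := by
    rintro z ⟨hz | hz, hne⟩ (hz' | hz')
    · exact hne (hbx' z hz hz')
    · exact Set.disjoint_left.1 hd2 hz' hz
    · exact Set.disjoint_left.1 hd1 hz hz'
    · exact Set.disjoint_left.1 hd hz hz'
  let C : ℝ × ℝ → ℂ := fun z => ⟨z.1, z.2⟩
  have hC : Continuous C := by
    have : C = fun z => Complex.equivRealProdCLM.symm z := by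
      funext z; apply Complex.ext <;> simp [C]
    rw [this]; fun_prop
  have hCi : Function.Injective C := by
    intro y z e
    have h1 := congrArg Complex.re e
    have h2 := congrArg Complex.im e
    exact Prod.ext h1 h2
  refine lemX (fun z => C (g (r * z.1, r * z.2))) ?_ ?_ (fun s => C (α s)) (fun s => C (β s))
    (by fun_prop) (by fun_prop) (by simp) (by simp) (by simp) (by simp) ?_ ?_ ?_
  · refine hC.comp_continuousOn (hgc.comp (by fun_prop) hsmb)
  · intro y hy z hz e
    have := hgi (hsmb y hy) (hsmb z hz) (hCi e)
    simp only [Prod.mk.injEq] at this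
    exact Prod.ext (mul_left_cancel₀ hr.ne' this.1) (mul_left_cancel₀ hr.ne' this.2)
  · intro s t e
    exact tri _ (hα s) (hCi e ▸ (hβ t).1)
  · intro s y hy e
    apply tri _ (hα s)
    rw [hCi e]
    left
    simp only [mul_zero]
    exact H2 _ ((hsm y hy).trans_lt hrr2)
  · intro s y hy e
    have h3 := hCi e
    simp only [mul_zero] at h3
    have h4 := H1 _ ((hsm y hy).trans_lt hrr1)
    rw [← h3] at h4
    exact tri _ ⟨Or.inl h4, (hβ s).2⟩ (hβ s).1

def Bw (a x c : ℝ) : Prop := (a < x ∧ x < c) ∨ (c < x ∧ x < a)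

theorem coreTri (B U V W W' : ℝ × ℝ) (l m l' m' : ℝ)
    (hW : W = B + l • (U - B) + m • (V - B)) (hW' : W' = B + l' • (U - B) + m' • (V - B))
    (hl : 0 < l) (hm : 0 < m) (h' : l' < 0 ∨ m' < 0)
    (h0 : segment ℝ B W ∩ segment ℝ U V = ∅)
    (h1 : segment ℝ W W' ∩ segment ℝ B U = ∅)
    (h2 : segment ℝ W W' ∩ segment ℝ B V = ∅)
    (h3 : segment ℝ W W' ∩ segment ℝ U V = ∅) : False := by
  have hlm : l + m < 1 := by
    by_contra hcon
    have hs : 0 < l + m := by linarith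
    have hs1 : (l + m)⁻¹ ≤ 1 := inv_le_one_of_one_le₀ (by linarith)
    have : ((l + m)⁻¹ * l) • U + ((l + m)⁻¹ * m) • V ∈ segment ℝ B W ∩ segment ℝ U V := by
      constructor
      · refine ⟨1 - (l + m)⁻¹, (l + m)⁻¹, by linarith, by positivity, by ring, ?_⟩
        rw [hW]
        ext <;> simp <;> field_simp <;> ring
      · exact ⟨_, _, by positivity, by positivity, by field_simp, rfl⟩
    rw [h0] at this
    exact this
  obtain ⟨t, ht, hft⟩ : ∃ t ∈ Set.Icc (0:ℝ) 1, min (min (l + t * (l' - l)) (m + t * (m' - m)))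
      (1 - (l + t * (l' - l)) - (m + t * (m' - m))) = 0 := by
    have hc : ContinuousOn (fun t : ℝ => min (min (l + t * (l' - l)) (m + t * (m' - m)))
      (1 - (l + t * (l' - l)) - (m + t * (m' - m)))) (Set.Icc 0 1) := by fun_prop
    have := intermediate_value_Icc' (zero_le_one (α := ℝ)) hc
    apply this
    constructor
    · simp only [one_mul, min_le_iff]
      rcases h' with h' | h'
      · left; left; linarith
      · left; right; linarith
    · simp only [zero_mul, le_min_iff]
      exact ⟨⟨by linarith, by linarith⟩, by linarith⟩
  obtain ⟨ht0, ht1⟩ := ht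
  obtain ⟨x, hx⟩ : ∃ x, x = l + t * (l' - l) := ⟨_, rfl⟩
  obtain ⟨y, hy⟩ : ∃ y, y = m + t * (m' - m) := ⟨_, rfl⟩
  rw [← hx, ← hy] at hft
  have mem : B + x • (U - B) + y • (V - B) ∈ segment ℝ W W' := by
    refine ⟨1 - t, t, by linarith, ht0, by ring, ?_⟩
    rw [hW, hW', hx, hy]
    ext <;> simp <;> ring
  have hx0 : 0 ≤ x := by
    have := min_le_left (min x y) (1 - x - y); have := min_le_left x y; linarith
  have hy0 : 0 ≤ y := by
    have := min_le_left (min x y) (1 - x - y); have := min_le_right x y; linarith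
  have hxy : 0 ≤ 1 - x - y := by
    have := min_le_right (min x y) (1 - x - y); linarith
  have : x = 0 ∨ y = 0 ∨ 1 - x - y = 0 := by
    rcases min_choice (min x y) (1 - x - y) with h | h
    · rcases min_choice x y with h5 | h5
      · left; linarith
      · right; left; linarith
    · right; right; linarith
  rcases this with h | h | h
  · have : B + x • (U - B) + y • (V - B) ∈ segment ℝ W W' ∩ segment ℝ B V := by
      refine ⟨mem, 1 - y, y, by linarith, hy0, by ring, ?_⟩
      rw [h]; ext <;> simp <;> ring
    rw [h2] at this; exact this
  · have : B + x • (U - B) + y • (V - B) ∈ segment ℝ W W' ∩ segment ℝ B U := by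
      refine ⟨mem, 1 - x, x, by linarith, hx0, by ring, ?_⟩
      rw [h]; ext <;> simp <;> ring
    rw [h1] at this; exact this
  · have : B + x • (U - B) + y • (V - B) ∈ segment ℝ W W' ∩ segment ℝ U V := by
      refine ⟨mem, x, y, hx0, hy0, by linarith, ?_⟩
      have : y = 1 - x := by linarith
      rw [this]; ext <;> simp <;> ring
    rw [h3] at this; exact this

theorem polar (a b : ℝ × ℝ) (h : a ≠ b) : ∃ r : ℝ, 0 < r ∧
    b = a + r • (Real.cos (angleAt a b), Real.sin (angleAt a b)) := by
  obtain ⟨z, hz⟩ : ∃ z : ℂ, z = ⟨b.1 - a.1, b.2 - a.2⟩ := ⟨_, rfl⟩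
  have hz0 : z ≠ 0 := by
    intro h0
    rw [hz] at h0
    have h1 := congrArg Complex.re h0
    have h2 := congrArg Complex.im h0
    simp at h1 h2
    apply h; ext <;> linarith
  refine ⟨‖z‖, norm_pos_iff.2 hz0, ?_⟩
  have e1 := Complex.norm_mul_cos_arg z
  have e2 := Complex.norm_mul_sin_arg z
  unfold angleAt
  rw [← hz]
  have e3 : z.re = b.1 - a.1 := by rw [hz]
  have e4 : z.im = b.2 - a.2 := by rw [hz]
  ext <;> simp <;> linarith

theorem polarTri (B U V W W' : ℝ × ℝ) (a b c d rU rV rW rW' : ℝ)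
    (pU : 0 < rU) (pV : 0 < rV) (pW : 0 < rW) (pW' : 0 < rW')
    (hU : U = B + rU • (Real.cos a, Real.sin a)) (hV : V = B + rV • (Real.cos b, Real.sin b))
    (hW : W = B + rW • (Real.cos c, Real.sin c)) (hW' : W' = B + rW' • (Real.cos d, Real.sin d))
    (s1 : 0 < Real.sin (b - c) / Real.sin (b - a)) (s2 : 0 < Real.sin (c - a) / Real.sin (b - a))
    (s3 : Real.sin (b - d) / Real.sin (b - a) < 0 ∨ Real.sin (d - a) / Real.sin (b - a) < 0)
    (h0 : segment ℝ B W ∩ segment ℝ U V = ∅)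
    (h1 : segment ℝ W W' ∩ segment ℝ B U = ∅)
    (h2 : segment ℝ W W' ∩ segment ℝ B V = ∅)
    (h3 : segment ℝ W W' ∩ segment ℝ U V = ∅) : False := by
  have hS : Real.sin (b - a) ≠ 0 := by
    intro h; rw [h] at s1; simp at s1
  have key : ∀ e r : ℝ, B + r • (Real.cos e, Real.sin e) =
      B + (r / rU * (Real.sin (b - e) / Real.sin (b - a))) • (U - B)
        + (r / rV * (Real.sin (e - a) / Real.sin (b - a))) • (V - B) := by
    intro e r
    rw [hU, hV]
    have := Real.sin_sq_add_cos_sq e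
    ext <;> simp <;> field_simp <;> simp only [Real.sin_sub] <;> ring
  refine coreTri B U V W W' _ _ _ _ (hW.trans (key c rW)) (hW'.trans (key d rW')) (by positivity)
    (by positivity) ?_ h0 h1 h2 h3
  rcases s3 with h | h
  · left; exact mul_neg_of_pos_of_neg (by positivity) h
  · right; exact mul_neg_of_pos_of_neg (by positivity) h

theorem sin_neg' {x : ℝ} (h1 : Real.pi < x) (h2 : x < 2 * Real.pi) : Real.sin x < 0 := by
  have := Real.sin_pos_of_pos_of_lt_pi (x := x - Real.pi) (by linarith) (by linarith)
  rw [Real.sin_sub_pi] at this; linarith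

theorem sin_neg'' {x : ℝ} (h1 : -Real.pi < x) (h2 : x < 0) : Real.sin x < 0 :=
  Real.sin_neg_of_neg_of_neg_pi_lt h2 h1

theorem angSep {V : Type} (G : SimpleGraph V) (p : V → ℝ × ℝ) (hp : IsPlaneDrawing G p)
    (b u v w w' : V) (hu : G.Adj b u) (hv : G.Adj b v) (hw : G.Adj b w) (hw' : G.Adj b w')
    (huv : G.Adj u v) (hww : G.Adj w w') (n1 : u ≠ w) (n2 : u ≠ w') (n3 : v ≠ w) (n4 : v ≠ w')
    (a1 : angleAt (p b) (p u) < angleAt (p b) (p w)) (a2 : angleAt (p b) (p w) < angleAt (p b) (p v))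
    (a3 : angleAt (p b) (p w') < angleAt (p b) (p u) ∨ angleAt (p b) (p v) < angleAt (p b) (p w')) :
    False := by
  obtain ⟨hinj, hdis, -, hon⟩ := hp
  have neu : ∀ {x}, G.Adj b x → p b ≠ p x := fun h e => h.ne (hinj e)
  obtain ⟨rU, pU, hU⟩ := polar _ _ (neu hu)
  obtain ⟨rV, pV, hV⟩ := polar _ _ (neu hv)
  obtain ⟨rW, pW, hW⟩ := polar _ _ (neu hw)
  obtain ⟨rW', pW', hW'⟩ := polar _ _ (neu hw')
  have bd : ∀ x, -Real.pi < angleAt (p b) x ∧ angleAt (p b) x ≤ Real.pi := fun x =>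
    ⟨Complex.neg_pi_lt_arg _, Complex.arg_le_pi _⟩
  have bu := bd (p u)
  have bv := bd (p v)
  have bw := bd (p w)
  have bw' := bd (p w')
  have D1 := hdis b w u v hw huv hu.ne hv.ne n1.symm n3.symm
  have D1' := hdis b w' u v hw' huv hu.ne hv.ne n2.symm n4.symm
  have D2 := hdis w w' b u hww hu hw.ne' n1.symm hw'.ne' n2.symm
  have D3 := hdis w w' b v hww hv hw.ne' n3.symm hw'.ne' n4.symm
  have D4 := hdis w w' u v hww huv n1.symm n3.symm n2.symm n4.symm
  have D2' := hdis w' w b u hww.symm hu hw'.ne' n2.symm hw.ne' n1.symm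
  have D3' := hdis w' w b v hww.symm hv hw'.ne' n4.symm hw.ne' n3.symm
  have D4' := hdis w' w u v hww.symm huv n2.symm n4.symm n1.symm n3.symm
  have hbuv := hon u v b huv hu.ne hv.ne
  generalize angleAt (p b) (p u) = a at *
  generalize angleAt (p b) (p v) = c at *
  generalize angleAt (p b) (p w) = e at *
  generalize angleAt (p b) (p w') = f at *
  rcases lt_trichotomy (c - a) Real.pi with h | h | h
  · have hS : 0 < Real.sin (c - a) := Real.sin_pos_of_pos_of_lt_pi (by linarith) h
    refine polarTri _ _ _ _ _ a c e f rU rV rW rW' pU pV pW pW' hU hV hW hW'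
      (div_pos (Real.sin_pos_of_pos_of_lt_pi (by linarith) (by linarith)) hS)
      (div_pos (Real.sin_pos_of_pos_of_lt_pi (by linarith) (by linarith)) hS) ?_ D1 D2 D3 D4
    rcases a3 with h3 | h3
    · by_cases h4 : Real.pi < c - f
      · left; exact div_neg_of_neg_of_pos (sin_neg' h4 (by linarith)) hS
      · right; exact div_neg_of_neg_of_pos (sin_neg'' (by linarith) (by linarith)) hS
    · by_cases h4 : Real.pi < f - a
      · right; exact div_neg_of_neg_of_pos (sin_neg' h4 (by linarith)) hS
      · left; exact div_neg_of_neg_of_pos (sin_neg'' (by linarith) (by linarith)) hS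
  · apply hbuv
    have hc : c = a + Real.pi := by linarith
    refine ⟨rV / (rU + rV), rU / (rU + rV), by positivity, by positivity, by field_simp; ring, ?_⟩
    rw [hU, hV, hc]
    ext <;> simp [Real.cos_add_pi, Real.sin_add_pi] <;> field_simp <;> ring
  · have hS : Real.sin (c - a) < 0 := sin_neg' h (by linarith)
    refine polarTri _ _ _ _ _ a c f e rU rV rW' rW pU pV pW' pW hU hV hW' hW
      (div_pos_of_neg_of_neg ?_ hS) (div_pos_of_neg_of_neg ?_ hS) ?_ D1' D2' D3' D4'
    · rcases a3 with h3 | h3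
      · exact sin_neg' (by linarith) (by linarith)
      · exact sin_neg'' (by linarith) (by linarith)
    · rcases a3 with h3 | h3
      · exact sin_neg'' (by linarith) (by linarith)
      · exact sin_neg' (by linarith) (by linarith)
    · by_cases h4 : e - a < Real.pi
      · right; exact div_neg_of_pos_of_neg (Real.sin_pos_of_pos_of_lt_pi (by linarith) h4) hS
      · left
        exact div_neg_of_pos_of_neg (Real.sin_pos_of_pos_of_lt_pi (by linarith) (by linarith)) hS

theorem angBw {V : Type} (G : SimpleGraph V) (p : V → ℝ × ℝ) (hp : IsPlaneDrawing G p)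
    (b u v w w' : V) (hu : G.Adj b u) (hv : G.Adj b v) (hw : G.Adj b w) (hw' : G.Adj b w')
    (huv : G.Adj u v) (hww : G.Adj w w') (n1 : u ≠ w) (n2 : u ≠ w') (n3 : v ≠ w) (n4 : v ≠ w')
    (d1 : angleAt (p b) (p u) ≠ angleAt (p b) (p w')) (d2 : angleAt (p b) (p v) ≠ angleAt (p b) (p w'))
    (h : Bw (angleAt (p b) (p u)) (angleAt (p b) (p w)) (angleAt (p b) (p v))) :
    Bw (angleAt (p b) (p u)) (angleAt (p b) (p w')) (angleAt (p b) (p v)) := by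
  by_contra hcon
  rcases h with h | h
  · refine angSep G p hp b u v w w' hu hv hw hw' huv hww n1 n2 n3 n4 h.1 h.2 ?_
    by_contra h2
    push Not at h2
    exact hcon (Or.inl ⟨lt_of_le_of_ne h2.1 d1, lt_of_le_of_ne h2.2 d2.symm⟩)
  · refine angSep G p hp b v u w w' hv hu hw hw' huv.symm hww n3 n4 n1 n2 h.1 h.2 ?_
    by_contra h2
    push Not at h2
    exact hcon (Or.inr ⟨lt_of_le_of_ne h2.1 d2, lt_of_le_of_ne h2.2 d1.symm⟩)

theorem rotSep {V : Type} (l : List V) (a t : V → ℝ) (r : ℕ)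
    (ha : l.Pairwise (fun x y => a x < a y)) (ht : (l.rotate r).Pairwise (fun x y => t x < t y))
    (u v w w' : V) (hu : u ∈ l) (hv : v ∈ l) (hw : w ∈ l) (hw' : w' ∈ l)
    (nuv : u ≠ v) (n1 : u ≠ w) (n2 : u ≠ w') (n3 : v ≠ w) (n4 : v ≠ w')
    (h : Bw (a u) (a w) (a v) → Bw (a u) (a w') (a v))
    (h' : Bw (a u) (a w') (a v) → Bw (a u) (a w) (a v)) :
    Bw (t u) (t w) (t v) → Bw (t u) (t w') (t v) := by
  rw [List.rotate_eq_drop_append_take_mod] at ht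
  obtain ⟨l1, l2, e1, e2⟩ : ∃ l1 l2, l1 = l.take (r % l.length) ∧ l2 = l.drop (r % l.length) :=
    ⟨_, _, rfl, rfl⟩
  rw [← e1, ← e2] at ht
  have e : l = l1 ++ l2 := by rw [e1, e2, List.take_append_drop]
  rw [e] at ha hu hv hw hw'
  rw [List.pairwise_append] at ha ht
  obtain ⟨A1, A2, A3⟩ := ha
  obtain ⟨T2, T1, T3⟩ := ht
  have S : ∀ L : List V, L.Pairwise (fun x y => a x < a y) → L.Pairwise (fun x y => t x < t y) →
      ∀ x ∈ L, ∀ y ∈ L, x ≠ y → (a x < a y ∧ t x < t y) ∨ (a y < a x ∧ t y < t x) := by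
    intro L A T x hx y hy hne
    have : Std.Symm (fun x y : V => (a x < a y ∧ t x < t y) ∨ (a y < a x ∧ t y < t x)) :=
      ⟨fun x y h => Or.symm h⟩
    exact List.Pairwise.forall (R := fun x y => (a x < a y ∧ t x < t y) ∨ (a y < a x ∧ t y < t x))
      ((A.and T).imp (fun h => Or.inl h)) hx hy hne
  have S1 := S l1 A1 T1
  have S2 := S l2 A2 T2
  clear S
  rw [List.mem_append] at hu hv hw hw'
  clear A1 A2 T1 T2 e e1 e2
  unfold Bw at *
  rcases hu with hu | hu <;> rcases hv with hv | hv <;> rcases hw with hw | hw <;>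
    rcases hw' with hw' | hw' <;> grind

structure TData {V : Type} (G : SimpleGraph V) (R : OneStringRep G) (T : V → V → ℝ) : Prop where
  mem : ∀ v w, G.Adj v w → T v w ∈ Set.Icc (0:ℝ) 1
  eq : ∀ v w, G.Adj v w → (R.γ v).toFun (T v w) = (R.γ w).toFun (T w v)
  inj : ∀ b u v, G.Adj b u → G.Adj b v → u ≠ v → T b u ≠ T b v
  N : ∀ b u v w w', G.Adj b u → G.Adj b v → G.Adj b w → G.Adj b w' → G.Adj u v → G.Adj w w' →
    u ≠ w → u ≠ w' → v ≠ w → v ≠ w' → Bw (T b u) (T b w) (T b v) → Bw (T b u) (T b w') (T b v)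

theorem Bw_neg (a x c : ℝ) : Bw (-a) (-x) (-c) ↔ Bw a x c := by
  unfold Bw; simp only [neg_lt_neg_iff]; tauto

theorem getT {V : Type} (G : SimpleGraph V) (p : V → ℝ × ℝ) (hp : IsPlaneDrawing G p)
    (R : OneStringRep G) (h : OrderPreserving G p R) : ∃ T, TData G R T := by
  choose l hnd hmem hang r dir t ht hord using h
  have hmem1 : ∀ v w, G.Adj v w → t v w ∈ Set.Icc (0:ℝ) 1 := fun v w hvw =>
    (ht v w ((hmem v w).2 hvw)).1
  have himg : ∀ v w, G.Adj v w → (R.γ v).toFun (t v w) ∈ (R.γ w).img := fun v w hvw =>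
    (ht v w ((hmem v w).2 hvw)).2
  refine ⟨t, hmem1, ?_, ?_, ?_⟩
  · intro v w hvw
    obtain ⟨q, hq⟩ := R.adj_inter v w hvw
    have h1 : (R.γ v).toFun (t v w) ∈ (R.γ v).img ∩ (R.γ w).img :=
      ⟨⟨_, hmem1 v w hvw, rfl⟩, himg v w hvw⟩
    have h2 : (R.γ w).toFun (t w v) ∈ (R.γ v).img ∩ (R.γ w).img :=
      ⟨himg w v hvw.symm, ⟨_, hmem1 w v hvw.symm, rfl⟩⟩
    rw [hq] at h1 h2
    exact h1.trans h2.symm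
  · intro b u v hu hv hne e
    have : (R.γ b).toFun (t b u) ∈ (R.γ b).img ∩ (R.γ u).img ∩ (R.γ v).img :=
      ⟨⟨⟨_, hmem1 b u hu, rfl⟩, himg b u hu⟩, e ▸ himg b v hv⟩
    rw [R.no_triple b u v hu.ne hv.ne hne] at this
    exact this
  · intro b u v w w' hu hv hw hw' huv hww n1 n2 n3 n4
    have hA : ∀ x y, G.Adj b x → G.Adj b y → x ≠ y →
        angleAt (p b) (p x) ≠ angleAt (p b) (p y) := by
      intro x y hx hy hne
      have : Std.Symm (fun x y : V => angleAt (p b) (p x) ≠ angleAt (p b) (p y)) :=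
        ⟨fun x y h => Ne.symm h⟩
      exact List.Pairwise.forall (R := fun x y => angleAt (p b) (p x) ≠ angleAt (p b) (p y))
        ((hang b).imp (fun h => ne_of_lt h)) ((hmem b x).2 hx) ((hmem b y).2 hy) hne
    have h1 := angBw G p hp b u v w w' hu hv hw hw' huv hww n1 n2 n3 n4 (hA _ _ hu hw' n2)
      (hA _ _ hv hw' n4)
    have h2 := angBw G p hp b u v w' w hu hv hw' hw huv hww.symm n2 n1 n4 n3 (hA _ _ hu hw n1)
      (hA _ _ hv hw n3)
    have ho := hord b
    cases hd : dir b with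
    | true =>
      rw [hd] at ho
      exact rotSep (l b) (fun x => angleAt (p b) (p x)) (t b) (r b) (hang b) (by simpa using ho)
        u v w w' ((hmem b _).2 hu) ((hmem b _).2 hv) ((hmem b _).2 hw) ((hmem b _).2 hw')
        huv.ne n1 n2 n3 n4 h1 h2
    | false =>
      rw [hd] at ho
      have := rotSep (l b) (fun x => angleAt (p b) (p x)) (fun x => - t b x) (r b) (hang b)
        (by simpa using ho)
        u v w w' ((hmem b _).2 hu) ((hmem b _).2 hv) ((hmem b _).2 hw) ((hmem b _).2 hw')
        huv.ne n1 n2 n3 n4 h1 h2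
      simpa only [Bw_neg] using this

def seg {V : Type} {G : SimpleGraph V} (R : OneStringRep G) (v : V) (a c : ℝ) : Set (ℝ × ℝ) :=
  (R.γ v).toFun '' Set.uIcc a c

section
variable {V : Type} {G : SimpleGraph V} {R : OneStringRep G} {T : V → V → ℝ}

theorem uIcc_sub {a c : ℝ} (ha : a ∈ Set.Icc (0:ℝ) 1) (hc : c ∈ Set.Icc (0:ℝ) 1) :
    Set.uIcc a c ⊆ Set.Icc (0:ℝ) 1 := Set.uIcc_subset_Icc ha hc

theorem seg_sub (v : V) {a c : ℝ} (ha : a ∈ Set.Icc (0:ℝ) 1) (hc : c ∈ Set.Icc (0:ℝ) 1) :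
    seg R v a c ⊆ (R.γ v).img := Set.image_mono (uIcc_sub ha hc)

theorem disj_na {u v : V} (hne : u ≠ v) (hna : ¬ G.Adj u v) {a c d e : ℝ}
    (ha : a ∈ Set.Icc (0:ℝ) 1) (hc : c ∈ Set.Icc (0:ℝ) 1)
    (hd : d ∈ Set.Icc (0:ℝ) 1) (he : e ∈ Set.Icc (0:ℝ) 1) :
    Disjoint (seg R u a c) (seg R v d e) := by
  rw [Set.disjoint_left]
  intro z hz hz'
  have : z ∈ (R.γ u).img ∩ (R.γ v).img := ⟨seg_sub u ha hc hz, seg_sub v hd he hz'⟩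
  rw [R.nonadj_disjoint u v hne hna] at this
  exact this

theorem disj_T (H : TData G R T) {u v : V} (hadj : G.Adj u v) {a c d e : ℝ}
    (ha : a ∈ Set.Icc (0:ℝ) 1) (hc : c ∈ Set.Icc (0:ℝ) 1)
    (hd : d ∈ Set.Icc (0:ℝ) 1) (he : e ∈ Set.Icc (0:ℝ) 1) (hn : T u v ∉ Set.uIcc a c) :
    Disjoint (seg R u a c) (seg R v d e) := by
  rw [Set.disjoint_left]
  intro z hz hz'
  have h1 : z ∈ (R.γ u).img ∩ (R.γ v).img := ⟨seg_sub u ha hc hz, seg_sub v hd he hz'⟩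
  have h2 : (R.γ u).toFun (T u v) ∈ (R.γ u).img ∩ (R.γ v).img :=
    ⟨⟨_, H.mem _ _ hadj, rfl⟩, ⟨_, H.mem _ _ hadj.symm, (H.eq _ _ hadj).symm⟩⟩
  obtain ⟨q, hq⟩ := R.adj_inter u v hadj
  rw [hq] at h1 h2
  obtain ⟨y, hy, e⟩ := hz
  have := (R.γ u).injOn (uIcc_sub ha hc hy) (H.mem _ _ hadj) (e.trans (h1.trans h2.symm))
  exact hn (this ▸ hy)

theorem disj_self {u : V} {a c d e : ℝ}
    (ha : a ∈ Set.Icc (0:ℝ) 1) (hc : c ∈ Set.Icc (0:ℝ) 1)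
    (hd : d ∈ Set.Icc (0:ℝ) 1) (he : e ∈ Set.Icc (0:ℝ) 1)
    (hn : (max a c < d ∧ max a c < e) ∨ (max d e < a ∧ max d e < c)) :
    Disjoint (seg R u a c) (seg R u d e) := by
  rw [Set.disjoint_left]
  rintro z ⟨y, hy, e1⟩ ⟨y', hy', e2⟩
  have := (R.γ u).injOn (uIcc_sub ha hc hy) (uIcc_sub hd he hy') (e1.trans e2.symm)
  subst this
  rw [Set.mem_uIcc] at hy hy'
  simp only [max_lt_iff] at hn
  rcases hn with hn | hn <;> rcases hy with hy | hy <;> rcases hy' with hy' | hy' <;> linarith [hn.1.1, hn.1.2, hn.2.1, hn.2.2, hy.1, hy.2, hy'.1, hy'.2]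

theorem joinSeg (v : V) {a c : ℝ} (ha : a ∈ Set.Icc (0:ℝ) 1) (hc : c ∈ Set.Icc (0:ℝ) 1) :
    JoinedIn (seg R v a c) ((R.γ v).toFun a) ((R.γ v).toFun c) := by
  rcases le_total a c with h | h
  · exact joinArc _ _ _ h ha.1 hc.2 _ (by rw [seg, Set.uIcc_of_le h])
  · exact (joinArc _ _ _ h hc.1 ha.2 _ (by rw [seg, Set.uIcc_of_ge h])).symm

theorem join2 (H : TData G R T) (b v w d : V) (h1 : G.Adj b v) (h2 : G.Adj v w) (h3 : G.Adj w d) :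
    JoinedIn (seg R v (T v b) (T v w) ∪ seg R w (T w v) (T w d))
      ((R.γ b).toFun (T b v)) ((R.γ d).toFun (T d w)) := by
  rw [H.eq b v h1, ← H.eq w d h3]
  refine ((joinSeg v (H.mem _ _ h1.symm) (H.mem _ _ h2)).mono Set.subset_union_left).trans ?_
  rw [H.eq v w h2]
  exact (joinSeg w (H.mem _ _ h2.symm) (H.mem _ _ h3)).mono Set.subset_union_right

theorem nin {t a c : ℝ} (h1 : t ≠ a) (h2 : t ≠ c) (h : ¬ Bw a t c) : t ∉ Set.uIcc a c := by
  rw [Set.mem_uIcc]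
  rintro (⟨h3, h4⟩ | ⟨h3, h4⟩)
  · exact h (Or.inl ⟨lt_of_le_of_ne h3 h1.symm, lt_of_le_of_ne h4 h2⟩)
  · exact h (Or.inr ⟨lt_of_le_of_ne h3 h2.symm, lt_of_le_of_ne h4 h1⟩)

theorem lemD (H : TData G R T) (b x : V) (hadj : G.Adj b x) (t1 t2 s1 s2 : ℝ)
    (ht1 : t1 ∈ Set.Icc (0:ℝ) 1) (ht2 : t2 ∈ Set.Icc (0:ℝ) 1)
    (hs1 : s1 ∈ Set.Icc (0:ℝ) 1) (hs2 : s2 ∈ Set.Icc (0:ℝ) 1)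
    (hb : Bw t1 (T b x) t2) (hx : Bw s1 (T x b) s2) (K K' : Set (ℝ × ℝ))
    (hK : JoinedIn K ((R.γ b).toFun t1) ((R.γ b).toFun t2))
    (hK' : JoinedIn K' ((R.γ x).toFun s1) ((R.γ x).toFun s2))
    (hd : Disjoint K K') (hd1 : Disjoint K (seg R x s1 s2))
    (hd2 : Disjoint K' (seg R b t1 t2)) : False := by
  wlog h : t1 < t2 generalizing t1 t2
  · refine this t2 t1 ht2 ht1 (Or.symm hb) hK.symm (by rwa [seg, Set.uIcc_comm]) ?_
    rcases hb with hb | hb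
    · exact absurd (hb.1.trans hb.2) h
    · exact hb.1.trans hb.2
  wlog h' : s1 < s2 generalizing s1 s2
  · refine this s2 s1 hs2 hs1 (Or.symm hx) hK'.symm (by rwa [seg, Set.uIcc_comm]) ?_
    rcases hx with hx | hx
    · exact absurd (hx.1.trans hx.2) h'
    · exact hx.1.trans hx.2
  obtain ⟨q, hq⟩ := R.adj_inter b x hadj
  have hqm : (R.γ b).toFun (T b x) ∈ (R.γ b).img ∩ (R.γ x).img :=
    ⟨⟨_, H.mem _ _ hadj, rfl⟩, ⟨_, H.mem _ _ hadj.symm, (H.eq _ _ hadj).symm⟩⟩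
  have hqe : (R.γ b).toFun (T b x) = q := by rw [hq] at hqm; exact hqm
  rw [hqe] at hqm
  have hb' : t1 < T b x ∧ T b x < t2 := by
    rcases hb with hb | hb
    · exact hb
    · linarith [hb.1, hb.2]
  have hx' : s1 < T x b ∧ T x b < s2 := by
    rcases hx with hx | hx
    · exact hx
    · linarith [hx.1, hx.2]
  rw [seg, Set.uIcc_of_le h.le] at hd2
  rw [seg, Set.uIcc_of_le h'.le] at hd1
  exact lemC (R.γ b) (R.γ x) q (R.proper b x hadj.ne q hqm) hq (T b x) t1 t2 (T x b) s1 s2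
    ht1.1 hb'.1 hb'.2 ht2.2 hs1.1 hx'.1 hx'.2 hs2.2 hqe ((H.eq _ _ hadj).symm.trans hqe) K K' hK hK'
    hd hd1 hd2

structure Loc (G : SimpleGraph V) (T : V → V → ℝ) (s s' L A B Q x : V) : Prop where
  ss' : G.Adj s s'
  sL : G.Adj s L
  sA : G.Adj s A
  sB : G.Adj s B
  sQ : G.Adj s Q
  sx : G.Adj s x
  s'L : G.Adj s' L
  s'A : G.Adj s' A
  s'B : G.Adj s' B
  s'Q : G.Adj s' Q
  LA : G.Adj L A
  AB : G.Adj A B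
  BQ : G.Adj B Q
  Ax : G.Adj A x
  Bx : G.Adj B x
  LB : L ≠ B ∧ ¬ G.Adj L B
  LQ : L ≠ Q ∧ ¬ G.Adj L Q
  AQ : A ≠ Q ∧ ¬ G.Adj A Q
  Lx : L ≠ x ∧ ¬ G.Adj L x
  Qx : Q ≠ x ∧ ¬ G.Adj Q x
  s'x : s' ≠ x ∧ ¬ G.Adj s' x
  os : (T s L < T s A ∧ T s A < T s x ∧ T s x < T s B ∧ T s B < T s Q) ∨
       (T s L > T s A ∧ T s A > T s x ∧ T s x > T s B ∧ T s B > T s Q)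
  os' : ¬ Bw (T s A) (T s s') (T s B)
  oA : Bw (T A s) (T A x) (T A B)
  oAL : ¬ Bw (T A s) (T A L) (T A B)
  oAs' : ¬ Bw (T A s) (T A s') (T A B)
  oB : Bw (T B s) (T B x) (T B A)
  oBQ : ¬ Bw (T B s) (T B Q) (T B A)
  oBs' : ¬ Bw (T B s) (T B s') (T B A)
  fin : ¬ (Bw (T A s') (T A L) (T A B) ∧ Bw (T B s') (T B Q) (T B A))

theorem Loc.swap {s s' L A B Q x : V} (h : Loc G T s s' L A B Q x) : Loc G T s s' Q B A L x := by
  refine ⟨h.ss', h.sQ, h.sB, h.sA, h.sL, h.sx, h.s'Q, h.s'B, h.s'A, h.s'L, h.BQ.symm, h.AB.symm,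
    h.LA.symm, h.Bx, h.Ax, ⟨h.AQ.1.symm, fun e => h.AQ.2 e.symm⟩, ⟨h.LQ.1.symm, fun e => h.LQ.2 e.symm⟩,
    ⟨h.LB.1.symm, fun e => h.LB.2 e.symm⟩, h.Qx, h.Lx, h.s'x, ?_, fun e => h.os' (Or.symm e), h.oB, h.oBQ,
    h.oBs', h.oA, h.oAL, h.oAs', fun e => h.fin e.symm⟩
  rcases h.os with o | o
  · exact Or.inr ⟨o.2.2.2, o.2.2.1, o.2.1, o.1⟩
  · exact Or.inl ⟨o.2.2.2, o.2.2.1, o.2.1, o.1⟩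

end

section
variable {V : Type} {G : SimpleGraph V} {R : OneStringRep G} {T : V → V → ℝ}

theorem midS (H : TData G R T) {s s' L A B Q x : V} (h : Loc G T s s' L A B Q x)
    (hm : Bw (T x A) (T x s) (T x B)) : False := by
  have M : ∀ {v w}, G.Adj v w → T v w ∈ Set.Icc (0:ℝ) 1 := fun {v w} hh => H.mem v w hh
  have M' : ∀ {v w}, G.Adj v w → T w v ∈ Set.Icc (0:ℝ) 1 := fun {v w} hh => H.mem w v hh.symm
  have iAsL := H.inj A L s h.LA.symm h.sA.symm h.sL.ne'
  have iALx := H.inj A L x h.LA.symm h.Ax h.Lx.1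
  have iALB := H.inj A L B h.LA.symm h.AB h.LB.1
  have iAs'x := H.inj A s' x h.s'A.symm h.Ax h.s'x.1
  have iAs'B := H.inj A s' B h.s'A.symm h.AB h.s'B.ne
  have iBQx := H.inj B Q x h.BQ h.Bx h.Qx.1
  have iBQA := H.inj B Q A h.BQ h.AB.symm h.AQ.1.symm
  have iBs'x := H.inj B s' x h.s'B.symm h.Bx h.s'x.1
  have iBs'A := H.inj B s' A h.s'B.symm h.AB.symm h.s'A.ne
  have oA := h.oA
  have oAL := h.oAL
  have oAs' := h.oAs'
  have oB := h.oB
  have oBQ := h.oBQ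
  have oBs' := h.oBs'
  have os := h.os
  have hJ : JoinedIn ((seg R L (T L s) (T L s') ∪ seg R s' (T s' L) (T s' Q)) ∪
      seg R Q (T Q s') (T Q s)) ((R.γ s).toFun (T s L)) ((R.γ s).toFun (T s Q)) := by
    refine ((join2 H s L s' Q h.sL h.s'L.symm h.s'Q).mono Set.subset_union_left).trans ?_
    rw [H.eq s Q h.sQ]
    exact (joinSeg Q (M' h.s'Q) (M' h.sQ)).mono Set.subset_union_right
  refine lemD H s x h.sx (T s L) (T s Q) (T x A) (T x B) (M h.sL) (M h.sQ) (M' h.Ax) (M' h.Bx)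
    ?_ hm _ _ hJ (join2 H x A B x h.Ax.symm h.AB h.Bx) ?_ ?_ ?_
  · unfold Bw; grind
  · simp only [Set.disjoint_union_left]; simp only [Set.disjoint_union_right]
    refine ⟨⟨⟨?_, ?_⟩, ⟨?_, ?_⟩⟩, ⟨?_, ?_⟩⟩
    · refine (disj_T H h.LA.symm (M h.Ax) (M h.AB) (M' h.sL) (M' h.s'L) ?_).symm
      apply nin iALx iALB; unfold Bw at *; grind
    · exact disj_na h.LB.1 h.LB.2 (M' h.sL) (M' h.s'L) (M' h.AB) (M h.Bx)
    · refine (disj_T H h.s'A.symm (M h.Ax) (M h.AB) (M h.s'L) (M h.s'Q) ?_).symm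
      apply nin iAs'x iAs'B; unfold Bw at *; grind
    · refine (disj_T H h.s'B.symm (M' h.AB) (M h.Bx) (M h.s'L) (M h.s'Q) ?_).symm
      apply nin iBs'A iBs'x; unfold Bw at *; grind
    · exact disj_na h.AQ.1.symm (fun e => h.AQ.2 e.symm) (M' h.s'Q) (M' h.sQ) (M h.Ax) (M h.AB)
    · refine (disj_T H h.BQ (M' h.AB) (M h.Bx) (M' h.s'Q) (M' h.sQ) ?_).symm
      apply nin iBQA iBQx; unfold Bw at *; grind
  · simp only [Set.disjoint_union_left]
    exact ⟨⟨disj_na h.Lx.1 h.Lx.2 (M' h.sL) (M' h.s'L) (M' h.Ax) (M' h.Bx),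
      disj_na h.s'x.1 h.s'x.2 (M h.s'L) (M h.s'Q) (M' h.Ax) (M' h.Bx)⟩,
      disj_na h.Qx.1 h.Qx.2 (M' h.s'Q) (M' h.sQ) (M' h.Ax) (M' h.Bx)⟩
  · simp only [Set.disjoint_union_left]
    refine ⟨disj_T H h.sA.symm (M h.Ax) (M h.AB) (M h.sL) (M h.sQ) ?_,
      disj_T H h.sB.symm (M' h.AB) (M h.Bx) (M h.sL) (M h.sQ) ?_⟩
    · apply nin <;> unfold Bw at * <;> grind
    · apply nin <;> unfold Bw at * <;> grind

theorem midA (H : TData G R T) {s s' L A B Q x : V} (h : Loc G T s s' L A B Q x)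
    (hm : Bw (T x s) (T x A) (T x B)) : False := by
  have M : ∀ {v w}, G.Adj v w → T v w ∈ Set.Icc (0:ℝ) 1 := fun {v w} hh => H.mem v w hh
  have M' : ∀ {v w}, G.Adj v w → T w v ∈ Set.Icc (0:ℝ) 1 := fun {v w} hh => H.mem w v hh.symm
  have iALs := H.inj A L s h.LA.symm h.sA.symm h.sL.ne'
  have iALx := H.inj A L x h.LA.symm h.Ax h.Lx.1
  have iALB := H.inj A L B h.LA.symm h.AB h.LB.1
  have iAs'x := H.inj A s' x h.s'A.symm h.Ax h.s'x.1
  have iAs'B := H.inj A s' B h.s'A.symm h.AB h.s'B.ne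
  have iAs's := H.inj A s' s h.s'A.symm h.sA.symm h.ss'.ne'
  have iBs'x := H.inj B s' x h.s'B.symm h.Bx h.s'x.1
  have iBs'A := H.inj B s' A h.s'B.symm h.AB.symm h.s'A.ne
  have iBs's := H.inj B s' s h.s'B.symm h.sB.symm h.ss'.ne'
  have iss'x := H.inj s s' x h.ss' h.sx h.s'x.1
  have iss'B := H.inj s s' B h.ss' h.sB h.s'B.ne
  have oA := h.oA
  have oAL := h.oAL
  have oAs' := h.oAs'
  have oB := h.oB
  have oBs' := h.oBs'
  have os := h.os
  have os' := h.os'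
  have fin := h.fin
  have N1 := H.N A s' B s L h.s'A.symm h.AB h.sA.symm h.LA.symm h.s'B h.sL h.ss'.ne' h.s'L.ne
    h.sB.ne' h.LB.1.symm
  have N2 := H.N B s' A s Q h.s'B.symm h.AB.symm h.sB.symm h.BQ h.s'A h.sQ h.ss'.ne' h.s'Q.ne
    h.sA.ne' h.AQ.1
  have hK' := join2 H x s B x h.sx.symm h.sB h.Bx
  have hsA : ∀ {t1 t2 : ℝ}, t1 ∈ Set.Icc (0:ℝ) 1 → t2 ∈ Set.Icc (0:ℝ) 1 →
      Disjoint (seg R s (T s x) (T s B) ∪ seg R B (T B s) (T B x)) (seg R A t1 t2) := by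
    intro t1 t2 h1 h2
    simp only [Set.disjoint_union_left]
    refine ⟨disj_T H h.sA (M h.sx) (M h.sB) h1 h2 ?_,
      disj_T H h.AB.symm (M' h.sB) (M h.Bx) h1 h2 ?_⟩
    · apply nin <;> unfold Bw at * <;> grind
    · apply nin <;> unfold Bw at * <;> grind
  by_cases c2 : Bw (T A s) (T A x) (T A L)
  · refine lemD H A x h.Ax (T A s) (T A L) (T x s) (T x B) (M' h.sA) (M' h.LA) (M' h.sx) (M' h.Bx)
      c2 hm _ _ (join2 H A s L A h.sA.symm h.sL h.LA) hK' ?_ ?_ (hsA (M' h.sA) (M' h.LA))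
    · simp only [Set.disjoint_union_left]; simp only [Set.disjoint_union_right]
      refine ⟨⟨?_, ?_⟩, ⟨?_, ?_⟩⟩
      · apply disj_self (M h.sA) (M h.sL) (M h.sx) (M h.sB)
        simp only [max_lt_iff]; grind
      · apply disj_T H h.sB (M h.sA) (M h.sL) (M' h.sB) (M h.Bx)
        apply nin <;> unfold Bw at * <;> grind
      · refine (disj_T H h.sL (M h.sx) (M h.sB) (M' h.sL) (M h.LA) ?_).symm
        apply nin <;> unfold Bw at * <;> grind
      · exact disj_na h.LB.1 h.LB.2 (M' h.sL) (M h.LA) (M' h.sB) (M h.Bx)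
    · simp only [Set.disjoint_union_left]
      refine ⟨disj_T H h.sx (M h.sA) (M h.sL) (M' h.sx) (M' h.Bx) ?_,
        disj_na h.Lx.1 h.Lx.2 (M' h.sL) (M h.LA) (M' h.sx) (M' h.Bx)⟩
      apply nin <;> unfold Bw at * <;> grind
  have d1 : Disjoint (seg R s' (T s' L) (T s' A)) (seg R s (T s x) (T s B)) := by
    refine (disj_T H h.ss' (M h.sx) (M h.sB) (M h.s'L) (M h.s'A) ?_).symm
    apply nin iss'x iss'B; unfold Bw at *; grind
  have d2 : Disjoint (seg R s' (T s' L) (T s' A)) (seg R B (T B s) (T B x)) := by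
    refine (disj_T H h.s'B.symm (M' h.sB) (M h.Bx) (M h.s'L) (M h.s'A) ?_).symm
    apply nin iBs's iBs'x; unfold Bw at *; grind
  by_cases c1 : Bw (T A L) (T A x) (T A s')
  · refine lemD H A x h.Ax (T A L) (T A s') (T x s) (T x B) (M' h.LA) (M' h.s'A) (M' h.sx) (M' h.Bx)
      c1 hm _ _ (join2 H A L s' A h.LA.symm h.s'L.symm h.s'A) hK' ?_ ?_ (hsA (M' h.LA) (M' h.s'A))
    · simp only [Set.disjoint_union_left]; simp only [Set.disjoint_union_right]
      refine ⟨⟨?_, ?_⟩, ⟨d1, d2⟩⟩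
      · refine (disj_T H h.sL (M h.sx) (M h.sB) (M h.LA) (M' h.s'L) ?_).symm
        apply nin <;> unfold Bw at * <;> grind
      · exact disj_na h.LB.1 h.LB.2 (M h.LA) (M' h.s'L) (M' h.sB) (M h.Bx)
    · simp only [Set.disjoint_union_left]
      exact ⟨disj_na h.Lx.1 h.Lx.2 (M h.LA) (M' h.s'L) (M' h.sx) (M' h.Bx),
        disj_na h.s'x.1 h.s'x.2 (M h.s'L) (M h.s'A) (M' h.sx) (M' h.Bx)⟩
  have e1 : Bw (T A s') (T A s) (T A B) := by
    clear N1 N2 fin os os' oB oBs'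
    unfold Bw at *; grind
  have e2 : Bw (T A B) (T A x) (T A s') := by
    clear N1 N2 fin os os' oB oBs'
    unfold Bw at *; grind
  have e3 : ¬ Bw (T B s') (T B s) (T B A) := fun e => fin ⟨N1 e1, N2 e⟩
  clear N1 N2 fin e1 c1 c2 oA oAL oAs' os os'
  refine lemD H A x h.Ax (T A B) (T A s') (T x s) (T x B) (M h.AB) (M' h.s'A) (M' h.sx) (M' h.Bx)
    e2 hm _ _ (join2 H A B s' A h.AB h.s'B.symm h.s'A) hK' ?_ ?_ (hsA (M h.AB) (M' h.s'A))
  · simp only [Set.disjoint_union_left]; simp only [Set.disjoint_union_right]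
    refine ⟨⟨?_, ?_⟩, ⟨?_, ?_⟩⟩
    · apply disj_T H h.sB.symm (M' h.AB) (M' h.s'B) (M h.sx) (M h.sB)
      apply nin <;> unfold Bw at * <;> grind
    · apply disj_self (M' h.AB) (M' h.s'B) (M' h.sB) (M h.Bx)
      simp only [max_lt_iff]; unfold Bw at *; grind
    · refine (disj_T H h.ss' (M h.sx) (M h.sB) (M h.s'B) (M h.s'A) ?_).symm
      have os := h.os
      have os' := h.os'
      apply nin iss'x iss'B; unfold Bw at *; grind
    · refine (disj_T H h.s'B.symm (M' h.sB) (M h.Bx) (M h.s'B) (M h.s'A) ?_).symm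
      apply nin iBs's iBs'x; unfold Bw at *; grind
  · simp only [Set.disjoint_union_left]
    refine ⟨disj_T H h.Bx (M' h.AB) (M' h.s'B) (M' h.sx) (M' h.Bx) ?_,
      disj_na h.s'x.1 h.s'x.2 (M h.s'B) (M h.s'A) (M' h.sx) (M' h.Bx)⟩
    apply nin <;> unfold Bw at * <;> grind

theorem locFalse (H : TData G R T) {s s' L A B Q x : V} (h : Loc G T s s' L A B Q x) : False := by
  have i1 := H.inj x s A h.sx.symm h.Ax.symm h.sA.ne
  have i2 := H.inj x s B h.sx.symm h.Bx.symm h.sB.ne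
  have i3 := H.inj x A B h.Ax.symm h.Bx.symm h.AB.ne
  have m1 := midS H h
  have m2 := midA H h
  have m3 := midA H h.swap
  unfold Bw at m1 m2 m3
  grind

end

section
variable {V : Type} {G : SimpleGraph V} {R : OneStringRep G} {T : V → V → ℝ}

structure GapAdj (G : SimpleGraph V) (s s' L A B Q x : V) : Prop where
  ss' : G.Adj s s'
  sL : G.Adj s L
  sA : G.Adj s A
  sB : G.Adj s B
  sQ : G.Adj s Q
  sx : G.Adj s x
  s'L : G.Adj s' L
  s'A : G.Adj s' A
  s'B : G.Adj s' B
  s'Q : G.Adj s' Q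
  LA : G.Adj L A
  AB : G.Adj A B
  BQ : G.Adj B Q
  Ax : G.Adj A x
  Bx : G.Adj B x
  LB : L ≠ B ∧ ¬ G.Adj L B
  LQ : L ≠ Q ∧ ¬ G.Adj L Q
  AQ : A ≠ Q ∧ ¬ G.Adj A Q
  Lx : L ≠ x ∧ ¬ G.Adj L x
  Qx : Q ≠ x ∧ ¬ G.Adj Q x
  s'x : s' ≠ x ∧ ¬ G.Adj s' x

theorem GapAdj.swap {s s' L A B Q x : V} (h : GapAdj G s s' L A B Q x) :
    GapAdj G s s' Q B A L x :=
  ⟨h.ss', h.sQ, h.sB, h.sA, h.sL, h.sx, h.s'Q, h.s'B, h.s'A, h.s'L, h.BQ.symm, h.AB.symm,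
    h.LA.symm, h.Bx, h.Ax, ⟨h.AQ.1.symm, fun e => h.AQ.2 e.symm⟩, ⟨h.LQ.1.symm, fun e => h.LQ.2 e.symm⟩,
    ⟨h.LB.1.symm, fun e => h.LB.2 e.symm⟩, h.Qx, h.Lx, h.s'x⟩

theorem TData.Ni (H : TData G R T) {b u v w w' : V} (hu : G.Adj b u) (hv : G.Adj b v)
    (hw : G.Adj b w) (hw' : G.Adj b w') (huv : G.Adj u v) (hww : G.Adj w w')
    (n1 : u ≠ w) (n2 : u ≠ w') (n3 : v ≠ w) (n4 : v ≠ w') :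
    Bw (T b u) (T b w) (T b v) ↔ Bw (T b u) (T b w') (T b v) :=
  ⟨H.N b u v w w' hu hv hw hw' huv hww n1 n2 n3 n4,
    H.N b u v w' w hu hv hw' hw huv hww.symm n2 n1 n4 n3⟩

theorem posA (H : TData G R T) {s s' L A B Q x : V} (h : GapAdj G s s' L A B Q x)
    (hc : ¬ Bw (T A s) (T A L) (T A B)) :
    Bw (T A s) (T A x) (T A B) ∧ ¬ Bw (T A s) (T A s') (T A B) := by
  have As := h.sA.symm
  have As' := h.s'A.symm
  have AL := h.LA.symm
  have Ls' := h.s'L.symm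
  have Bs' := h.s'B.symm
  have N1 := H.Ni As h.AB AL As' h.sB Ls' h.sL.ne h.ss'.ne h.LB.1.symm h.s'B.ne'
  have N2 := H.Ni As h.Ax h.AB As' h.sx Bs' h.sB.ne h.ss'.ne h.Bx.ne' h.s'x.1.symm
  have N4 := H.Ni h.Ax h.AB As AL h.Bx.symm h.sL h.sx.ne' h.Lx.1.symm h.sB.ne' h.LB.1.symm
  have N5 := H.Ni h.Ax h.AB As As' h.Bx.symm h.ss' h.sx.ne' h.s'x.1.symm h.sB.ne' h.s'B.ne'
  have i1 := H.inj A x s h.Ax As h.sx.ne'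
  have i2 := H.inj A x B h.Ax h.AB h.Bx.ne'
  have i3 := H.inj A s B As h.AB h.sB.ne
  have i4 := H.inj A s' s As' As h.ss'.ne'
  have i5 := H.inj A s' B As' h.AB h.s'B.ne
  have i6 := H.inj A s' x As' h.Ax h.s'x.1
  rw [N1] at hc
  refine ⟨?_, hc⟩
  clear N1 N4
  unfold Bw at *
  grind

theorem posS (H : TData G R T) {s s' L A B Q x : V} (h : GapAdj G s s' L A B Q x)
    (h1 : ¬ Bw (T s L) (T s s') (T s A)) (h2 : ¬ Bw (T s A) (T s s') (T s B))
    (h3 : ¬ Bw (T s B) (T s s') (T s Q)) :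
    (T s L < T s A ∧ T s A < T s x ∧ T s x < T s B ∧ T s B < T s Q) ∨
       (T s L > T s A ∧ T s A > T s x ∧ T s x > T s B ∧ T s B > T s Q) := by
  have As' := h.s'A.symm
  have Ls' := h.s'L.symm
  have Bs' := h.s'B.symm
  have i1 := H.inj s x A h.sx h.sA h.Ax.ne'
  have i2 := H.inj s x B h.sx h.sB h.Bx.ne'
  have i3 := H.inj s A B h.sA h.sB h.AB.ne
  have i4 := H.inj s L A h.sL h.sA h.LA.ne
  have i5 := H.inj s B Q h.sB h.sQ h.BQ.ne
  have i6 := H.inj s L B h.sL h.sB h.LB.1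
  have i7 := H.inj s A Q h.sA h.sQ h.AQ.1
  have M1 := H.Ni h.sL h.sA h.sB h.ss' h.LA Bs' h.LB.1 Ls'.ne h.AB.ne As'.ne
  have M2 := H.Ni h.sA h.sB h.sL h.ss' h.AB Ls' h.LA.ne' As'.ne h.LB.1.symm Bs'.ne
  have M3 := H.Ni h.sA h.sB h.sQ h.ss' h.AB h.s'Q.symm h.AQ.1 As'.ne h.BQ.ne Bs'.ne
  have M4 := H.Ni h.sB h.sQ h.sA h.ss' h.BQ As' h.AB.ne' Bs'.ne h.AQ.1.symm h.s'Q.ne'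
  have mono : (T s L < T s A ∧ T s A < T s B ∧ T s B < T s Q) ∨
       (T s L > T s A ∧ T s A > T s B ∧ T s B > T s Q) := by
    rw [← M1] at h1
    rw [← M4] at h3
    have h4 := h2
    rw [← M2] at h2
    rw [← M3] at h4
    clear M1 M2 M3 M4
    unfold Bw at *
    grind
  clear M1 M2 M3 M4 h1 h3 i4 i5 i6 i7
  have N1 := H.Ni h.sA h.sx h.sB h.ss' h.Ax Bs' h.AB.ne As'.ne h.Bx.ne' h.s'x.1.symm
  have N2 := H.Ni h.sA h.sx h.sL h.ss' h.Ax Ls' h.LA.ne' As'.ne h.Lx.1.symm h.s'x.1.symm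
  have N3 := H.Ni h.sx h.sB h.sA h.ss' h.Bx.symm As' h.Ax.ne' h.s'x.1.symm h.AB.ne' Bs'.ne
  have N4 := H.Ni h.sx h.sB h.sL h.ss' h.Bx.symm Ls' h.Lx.1.symm h.s'x.1.symm h.LB.1.symm Bs'.ne
  have : Bw (T s A) (T s x) (T s B) := by
    unfold Bw at *
    rcases mono with m | m <;> grind
  clear N1 N2 N3 N4
  unfold Bw at this
  grind

theorem gapOne (H : TData G R T) {s s' L A B Q x : V} (h : GapAdj G s s' L A B Q x)
    (h1 : ¬ Bw (T s L) (T s s') (T s A)) (h2 : ¬ Bw (T s A) (T s s') (T s B))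
    (h3 : ¬ Bw (T s B) (T s s') (T s Q))
    (hA : ¬ Bw (T A s) (T A L) (T A B)) (hB : ¬ Bw (T B s) (T B Q) (T B A))
    (hf : ¬ (Bw (T A s') (T A L) (T A B) ∧ Bw (T B s') (T B Q) (T B A))) : False := by
  have pA := posA H h hA
  have pB := posA H h.swap hB
  have pS := posS H h h1 h2 h3
  exact locFalse H (s := s) (s' := s') (L := L) (A := A) (B := B) (Q := Q) (x := x)
    ⟨h.ss', h.sL, h.sA, h.sB, h.sQ, h.sx, h.s'L, h.s'A, h.s'B, h.s'Q, h.LA, h.AB, h.BQ,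
    h.Ax, h.Bx, h.LB, h.LQ, h.AQ, h.Lx, h.Qx, h.s'x, pS, h2, pA.1, hA, pA.2, pB.1, hB, pB.2, hf⟩

theorem notBoth (H : TData G R T) {s s' L A B Q x : V} (h : GapAdj G s s' L A B Q x) :
    ¬ (Bw (T A s) (T A L) (T A B) ∧ Bw (T A s') (T A L) (T A B)) := by
  have As := h.sA.symm
  have As' := h.s'A.symm
  have AL := h.LA.symm
  have N1 := H.Ni As h.AB AL As' h.sB h.s'L.symm h.sL.ne h.ss'.ne h.LB.1.symm h.s'B.ne'
  have N2 := H.Ni As' h.AB AL As h.s'B h.sL.symm h.s'L.ne h.ss'.ne' h.LB.1.symm h.sB.ne'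
  rw [N1, N2]
  unfold Bw
  grind

theorem gapBad (H : TData G R T) {u v L A B Q x y : V} (h : GapAdj G u v L A B Q x)
    (h' : GapAdj G v u L A B Q y)
    (h1 : ¬ Bw (T u L) (T u v) (T u A)) (h2 : ¬ Bw (T u A) (T u v) (T u B))
    (h3 : ¬ Bw (T u B) (T u v) (T u Q))
    (h1' : ¬ Bw (T v L) (T v u) (T v A)) (h2' : ¬ Bw (T v A) (T v u) (T v B))
    (h3' : ¬ Bw (T v B) (T v u) (T v Q)) :
    (Bw (T A u) (T A L) (T A B) ∨ Bw (T A v) (T A L) (T A B)) ∧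
    (Bw (T B u) (T B Q) (T B A) ∨ Bw (T B v) (T B Q) (T B A)) := by
  have g1 := gapOne H h h1 h2 h3
  have g2 := gapOne H h' h1' h2' h3'
  have n1 := notBoth H h
  have n2 := notBoth H h.swap
  clear h1 h2 h3 h1' h2' h3' h h'
  generalize Bw (T A u) (T A L) (T A B) = a at *
  generalize Bw (T A v) (T A L) (T A B) = b at *
  generalize Bw (T B u) (T B Q) (T B A) = c at *
  generalize Bw (T B v) (T B Q) (T B A) = d at *
  clear H
  by_cases a <;> by_cases b <;> by_cases c <;> by_cases d <;> simp_all

theorem midCut (H : TData G R T) {u v L A B Q x : V} (h : GapAdj G u v L A B Q x)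
    (e1 : Bw (T A u) (T A L) (T A B) ∨ Bw (T A v) (T A L) (T A B))
    (e2 : Bw (T A u) (T A B) (T A L) ∨ Bw (T A v) (T A B) (T A L)) : False := by
  have Au := h.sA.symm
  have Av := h.s'A.symm
  have AL := h.LA.symm
  have N1 := H.Ni Au h.AB AL Av h.sB h.s'L.symm h.sL.ne h.ss'.ne h.LB.1.symm h.s'B.ne'
  have N2 := H.Ni Av h.AB AL Au h.s'B h.sL.symm h.s'L.ne h.ss'.ne' h.LB.1.symm h.sB.ne'
  have N3 := H.Ni Au AL h.AB Av h.sL h.s'B.symm h.sB.ne h.ss'.ne h.LB.1 h.s'L.ne'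
  have N4 := H.Ni Av AL h.AB Au h.s'L h.sB.symm h.s'B.ne h.ss'.ne' h.LB.1 h.sL.ne'
  unfold Bw at *
  rcases e1 with e1 | e1 <;> rcases e2 with e2 | e2 <;> grind

theorem oneCut (H : TData G R T) {s s' a b c d : V} (ss' : G.Adj s s') (sa : G.Adj s a)
    (sb : G.Adj s b) (sc : G.Adj s c) (sd : G.Adj s d) (ha : G.Adj s' a) (hb : G.Adj s' b)
    (hc : G.Adj s' c) (hd : G.Adj s' d) (ab : G.Adj a b) (cd : G.Adj c d)
    (nac : a ≠ c) (nad : a ≠ d) (nbd : b ≠ d)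
    (h1 : Bw (T s a) (T s s') (T s b)) (h2 : Bw (T s c) (T s s') (T s d)) : False := by
  have N2 := (H.Ni sa sb ss' sd ab hd ha.ne' nad hb.ne' nbd).1 h1
  have N3 := (H.Ni sc sd ss' sa cd ha hc.ne' nac.symm hd.ne' nad.symm).1 h2
  by_cases hbc : b = c
  · subst hbc
    unfold Bw at *; grind
  · have N1 := (H.Ni sa sb ss' sc ab hc ha.ne' nac hb.ne' hbc).1 h1
    have N4 := (H.Ni sc sd ss' sb cd hb hc.ne' (Ne.symm hbc) hd.ne' nbd.symm).1 h2
    unfold Bw at *; grind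

end

def adjL (a b : ℕ) : Bool :=
  Nat.blt a b &&
    ((Nat.beq a 0 && Nat.beq b 1) || (Nat.ble a 1 && Nat.ble 2 b && Nat.blt b 15) ||
      (Nat.ble 2 a && Nat.beq b (a + 1) && Nat.blt b 15) ||
      (Nat.ble 15 b && (Nat.beq a ((b - 15) % 2) ||
        Nat.beq a (3 + 4 * ((b - 15) / 4) + ((b - 15) / 2) % 2) ||
        Nat.beq a (4 + 4 * ((b - 15) / 4) + ((b - 15) / 2) % 2))))

def adjB (a b : Fin 27) : Bool := adjL a.val b.val || adjL b.val a.val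

def GG : SimpleGraph (Fin 27) where
  Adj a b := adjB a b = true
  symm := ⟨by intro a b h; simp only [adjB, Bool.or_comm] at *; exact h⟩
  loopless := ⟨by intro a h; revert a; decide +kernel⟩

instance : DecidableRel GG.Adj := fun a b => inferInstanceAs (Decidable (adjB a b = true))

theorem GG_ktree : IsKTree 3 GG := by
  refine ⟨27, Equiv.refl _, by norm_num, ?_, ?_⟩
  · intro a ha b hb
    revert a b
    simp only [Set.mem_setOf_eq, Equiv.refl_apply]
    decide +kernel
  · intro i hi
    refine ⟨Finset.univ.filter (fun w => GG.Adj i w ∧ w.val < i.val), ?_, ?_, ?_⟩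
    · revert i; decide +kernel
    · intro w; simp
    · intro a ha b hb
      simp only [Finset.coe_filter, Finset.mem_univ, true_and, Set.mem_setOf_eq] at ha hb
      revert i
      revert a b
      decide +kernel

def WW (k : Fin 3) (i : ℕ) : Fin 27 := Fin.ofNat 27 (2 + 4 * k.val + i)
def XX (k : Fin 3) (i : ℕ) : Fin 27 := Fin.ofNat 27 (15 + 4 * k.val + i)

theorem gapAdj1 (k : Fin 3) : GapAdj GG 0 1 (WW k 0) (WW k 1) (WW k 2) (WW k 3) (XX k 0) := by
  constructor <;> revert k <;> decide +kernel
theorem gapAdj2 (k : Fin 3) : GapAdj GG 1 0 (WW k 0) (WW k 1) (WW k 2) (WW k 3) (XX k 1) := by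
  constructor <;> revert k <;> decide +kernel
theorem gapAdj3 (k : Fin 3) : GapAdj GG 0 1 (WW k 1) (WW k 2) (WW k 3) (WW k 4) (XX k 2) := by
  constructor <;> revert k <;> decide +kernel
theorem gapAdj4 (k : Fin 3) : GapAdj GG 1 0 (WW k 1) (WW k 2) (WW k 3) (WW k 4) (XX k 3) := by
  constructor <;> revert k <;> decide +kernel

def CutG (T : Fin 27 → Fin 27 → ℝ) (s s' : Fin 27) (j : ℕ) : Prop :=
  Bw (T s (Fin.ofNat 27 (2 + j))) (T s s') (T s (Fin.ofNat 27 (2 + (j + 1))))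

section
variable {R : OneStringRep GG} {T : Fin 27 → Fin 27 → ℝ}

theorem cutUniq (H : TData GG R T) {s s' : Fin 27} (hs : s.val < 2) (hs' : s'.val < 2)
    (ss : s ≠ s') (i j : ℕ) (hij : i < j) (hj : j < 12) (h1 : CutG T s s' i)
    (h2 : CutG T s s' j) : False := by
  have key : ∀ s s' : Fin 27, s.val < 2 → s'.val < 2 → s ≠ s' → GG.Adj s s' := by decide +kernel
  have key2 : ∀ s : Fin 27, s.val < 2 → ∀ j : Fin 13, GG.Adj s (Fin.ofNat 27 (2 + j.val)) := by
    decide +kernel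
  have key3 : ∀ j : Fin 12,
      GG.Adj (Fin.ofNat 27 (2 + j.val)) (Fin.ofNat 27 (2 + (j.val + 1))) := by decide +kernel
  have key4 : ∀ i j : Fin 13, i ≠ j →
      (Fin.ofNat 27 (2 + i.val)) ≠ (Fin.ofNat 27 (2 + j.val)) := by decide +kernel
  have f : ∀ a b : ℕ, a < 13 → b < 13 → a ≠ b →
      (Fin.ofNat 27 (2 + a)) ≠ (Fin.ofNat 27 (2 + b)) := fun a b ha hb hab =>
    key4 ⟨a, ha⟩ ⟨b, hb⟩ (by simpa using hab)
  exact oneCut H (key s s' hs hs' ss) (key2 s hs ⟨i, by omega⟩) (key2 s hs ⟨i + 1, by omega⟩)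
    (key2 s hs ⟨j, by omega⟩) (key2 s hs ⟨j + 1, by omega⟩)
    (key2 s' hs' ⟨i, by omega⟩) (key2 s' hs' ⟨i + 1, by omega⟩)
    (key2 s' hs' ⟨j, by omega⟩) (key2 s' hs' ⟨j + 1, by omega⟩) (key3 ⟨i, by omega⟩)
    (key3 ⟨j, by omega⟩) (f i j (by omega) (by omega) (by omega))
    (f i (j + 1) (by omega) (by omega) (by omega))
    (f (i + 1) (j + 1) (by omega) (by omega) (by omega)) h1 h2

theorem Bw_sym {a b c : ℝ} (h : Bw a b c) : Bw c b a := by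
  unfold Bw at *; tauto

theorem stretch (H : TData GG R T) (k : Fin 3)
    (h0 : ∀ i < 4, ¬ CutG T 0 1 (4 * k.val + i)) (h1 : ∀ i < 4, ¬ CutG T 1 0 (4 * k.val + i)) :
    False := by
  have e : ∀ i, WW k i = Fin.ofNat 27 (2 + (4 * k.val + i)) := fun i => by
    unfold WW; rw [Nat.add_assoc]
  have c0 : ∀ i < 4, ¬ Bw (T 0 (WW k i)) (T 0 1) (T 0 (WW k (i + 1))) := by
    intro i hi; rw [e, e]; exact h0 i hi
  have c1 : ∀ i < 4, ¬ Bw (T 1 (WW k i)) (T 1 0) (T 1 (WW k (i + 1))) := by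
    intro i hi; rw [e, e]; exact h1 i hi
  have b1 := gapBad H (gapAdj1 k) (gapAdj2 k) (c0 0 (by norm_num)) (c0 1 (by norm_num))
    (c0 2 (by norm_num)) (c1 0 (by norm_num)) (c1 1 (by norm_num)) (c1 2 (by norm_num))
  have b2 := gapBad H (gapAdj3 k) (gapAdj4 k) (c0 1 (by norm_num)) (c0 2 (by norm_num))
    (c0 3 (by norm_num)) (c1 1 (by norm_num)) (c1 2 (by norm_num)) (c1 3 (by norm_num))
  exact midCut H (gapAdj3 k) b2.1 b1.2

theorem GG_false (H : TData GG R T) : False := by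
  have st : ∀ k : Fin 3, (∃ i < 4, CutG T 0 1 (4 * k.val + i)) ∨
      (∃ i < 4, CutG T 1 0 (4 * k.val + i)) := by
    intro k
    by_contra hc
    push Not at hc
    exact stretch H k hc.1 hc.2
  have d : ∀ s s' : Fin 27, s.val < 2 → s'.val < 2 → s ≠ s' → ∀ k l : Fin 3, k < l →
      (∃ i < 4, CutG T s s' (4 * k.val + i)) → (∃ i < 4, CutG T s s' (4 * l.val + i)) → False := by
    rintro s s' hs hs' ss k l hkl ⟨i, hi, h1⟩ ⟨j, hj, h2⟩
    have : k.val < l.val := hkl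
    exact cutUniq H hs hs' ss _ _ (by omega) (by omega) h1 h2
  have d0 := d 0 1 (by decide) (by decide) (by decide)
  have d1 := d 1 0 (by decide) (by decide) (by decide)
  have a := d0 0 1 (by decide)
  have b := d0 0 2 (by decide)
  have c := d0 1 2 (by decide)
  have a' := d1 0 1 (by decide)
  have b' := d1 0 2 (by decide)
  have c' := d1 1 2 (by decide)
  rcases st 0 with x | x <;> rcases st 1 with y | y <;> rcases st 2 with z | z
  · exact a x y
  · exact a x y
  · exact b x z
  · exact c' y z
  · exact c y z
  · exact b' x z
  · exact a' x y
  · exact a' x y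
end

def sepI (n P Q X Y : ℤ × ℤ) : Bool :=
  let f : ℤ × ℤ → ℤ := fun z => n.1 * z.1 + n.2 * z.2
  (decide (f P < f X) && decide (f P < f Y) && decide (f Q < f X) && decide (f Q < f Y)) ||
  (decide (f X < f P) && decide (f Y < f P) && decide (f X < f Q) && decide (f Y < f Q))

def rc (P : ℤ × ℤ) : ℝ × ℝ := ((P.1 : ℝ), (P.2 : ℝ))

theorem sep_half {a b : ℝ} {P Q X Y z : ℝ × ℝ}
    (h1 : a * P.1 + b * P.2 < a * X.1 + b * X.2) (h2 : a * P.1 + b * P.2 < a * Y.1 + b * Y.2)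
    (h3 : a * Q.1 + b * Q.2 < a * X.1 + b * X.2) (h4 : a * Q.1 + b * Q.2 < a * Y.1 + b * Y.2)
    (hz : z ∈ segment ℝ P Q) (hz' : z ∈ segment ℝ X Y) : False := by
  obtain ⟨s, t, hs, ht, hst, rfl⟩ := hz
  obtain ⟨s', t', hs', ht', hst', e⟩ := hz'
  have e1 := congrArg Prod.fst e
  have e2 := congrArg Prod.snd e
  simp only [Prod.fst_add, Prod.snd_add, Prod.smul_fst, Prod.smul_snd, smul_eq_mul] at e1 e2
  obtain ⟨m, hm1, hm2⟩ : ∃ m, max (a * P.1 + b * P.2) (a * Q.1 + b * Q.2) < m ∧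
      m < min (a * X.1 + b * X.2) (a * Y.1 + b * Y.2) :=
    exists_between (by simp [*])
  rw [max_lt_iff] at hm1
  rw [lt_min_iff] at hm2
  have k1 : s * (a * P.1 + b * P.2) + t * (a * Q.1 + b * Q.2) ≤ m := by
    calc _ ≤ s * m + t * m := by
          apply add_le_add <;> apply mul_le_mul_of_nonneg_left <;> linarith
      _ = m := by rw [← add_mul, hst, one_mul]
  have k2 : m < s' * (a * X.1 + b * X.2) + t' * (a * Y.1 + b * Y.2) := by
    have : m = s' * m + t' * m := by rw [← add_mul, hst', one_mul]
    have q1 : 0 ≤ s' * (a * X.1 + b * X.2 - m) := mul_nonneg hs' (by linarith)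
    have q2 : 0 ≤ t' * (a * Y.1 + b * Y.2 - m) := mul_nonneg ht' (by linarith)
    rcases hs'.eq_or_lt with h | h
    · have h1 : t' = 1 := by linarith
      rw [← h, h1]; linarith
    · have : 0 < s' * (a * X.1 + b * X.2 - m) := mul_pos h (by linarith)
      linarith
  have : s' * (a * X.1 + b * X.2) + t' * (a * Y.1 + b * Y.2) =
    s * (a * P.1 + b * P.2) + t * (a * Q.1 + b * Q.2) := by
    linear_combination a * e1 + b * e2
  linarith

theorem sepI_spec {n P Q X Y : ℤ × ℤ} (h : sepI n P Q X Y = true) :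
    segment ℝ (rc P) (rc Q) ∩ segment ℝ (rc X) (rc Y) = ∅ := by
  rw [Set.eq_empty_iff_forall_notMem]
  rintro z ⟨h1, h2⟩
  simp only [sepI, Bool.or_eq_true, Bool.and_eq_true, decide_eq_true_eq] at h
  rcases h with ⟨⟨⟨a, b⟩, c⟩, d⟩ | ⟨⟨⟨a, b⟩, c⟩, d⟩
  · refine sep_half (a := n.1) (b := n.2) ?_ ?_ ?_ ?_ h1 h2 <;> simp only [rc] <;> assumption_mod_cast
  · refine sep_half (a := n.1) (b := n.2) ?_ ?_ ?_ ?_ h2 h1 <;> simp only [rc] <;> assumption_mod_cast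

def sepA (P Q X Y : ℤ × ℤ) : Bool :=
  sepI (1, 0) P Q X Y || sepI (0, 1) P Q X Y || sepI (Q.2 - P.2, P.1 - Q.1) P Q X Y ||
    sepI (Y.2 - X.2, X.1 - Y.1) P Q X Y

theorem sepA_spec {P Q X Y : ℤ × ℤ} (h : sepA P Q X Y = true) :
    segment ℝ (rc P) (rc Q) ∩ segment ℝ (rc X) (rc Y) = ∅ := by
  simp only [sepA, Bool.or_eq_true] at h
  rcases h with ((h | h) | h) | h <;> exact sepI_spec h

def shI (U V W : ℤ × ℤ) : Bool :=
  !decide ((V.1 - U.1) * (W.2 - U.2) = (V.2 - U.2) * (W.1 - U.1)) ||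
    decide ((V.1 - U.1) * (W.1 - U.1) < 0)

theorem sh_spec {U V W : ℤ × ℤ} (h : shI U V W = true) :
    segment ℝ (rc U) (rc V) ∩ segment ℝ (rc U) (rc W) = {rc U} := by
  apply Set.Subset.antisymm
  · rintro z ⟨⟨s, t, hs, ht, hst, rfl⟩, ⟨s', t', hs', ht', hst', e⟩⟩
    have e1 := congrArg Prod.fst e
    have e2 := congrArg Prod.snd e
    simp only [Prod.fst_add, Prod.snd_add, Prod.smul_fst, Prod.smul_snd, smul_eq_mul, rc] at e1 e2
    obtain rfl : s = 1 - t := by linarith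
    obtain rfl : s' = 1 - t' := by linarith
    have t0 : t = 0 := by
      simp only [shI, Bool.or_eq_true, Bool.not_eq_true', decide_eq_true_eq,
        decide_eq_false_iff_not] at h
      rcases h with h | h
      · have h : ((V.1 - U.1) * (W.2 - U.2) - (V.2 - U.2) * (W.1 - U.1) : ℝ) ≠ 0 := by
          intro hh; apply h; have := sub_eq_zero.1 hh; exact_mod_cast this
        have : t * ((V.1 - U.1) * (W.2 - U.2) - (V.2 - U.2) * (W.1 - U.1) : ℝ) = 0 := by
          linear_combination (-(W.2 - U.2 : ℝ)) * e1 + (W.1 - U.1 : ℝ) * e2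
        exact (mul_eq_zero.1 this).resolve_right h
      · have h : ((V.1 - U.1) * (W.1 - U.1) : ℝ) < 0 := by exact_mod_cast h
        have e3 : t * (V.1 - U.1 : ℝ) = t' * (W.1 - U.1) := by linear_combination - e1
        have hV : (V.1 - U.1 : ℝ) ≠ 0 := by rintro h0; rw [h0] at h; simp at h
        have : t * (V.1 - U.1 : ℝ) ^ 2 = t' * ((V.1 - U.1) * (W.1 - U.1)) := by
          linear_combination (V.1 - U.1 : ℝ) * e3
        have q : t' * ((V.1 - U.1) * (W.1 - U.1) : ℝ) ≤ 0 :=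
          mul_nonpos_of_nonneg_of_nonpos ht' h.le
        have q2 : 0 < (V.1 - U.1 : ℝ) ^ 2 := by positivity
        by_contra hne
        have : 0 < t := lt_of_le_of_ne ht (Ne.symm hne)
        nlinarith [mul_pos this q2]
    subst t0
    simp
  · rintro z rfl
    exact ⟨left_mem_segment ℝ _ _, left_mem_segment ℝ _ _⟩

def posN (a : ℕ) : ℤ × ℤ :=
  bif Nat.beq a 0 then (0, 100) else bif Nat.beq a 1 then (0, -100) else
  bif Nat.blt a 15 then (((2 * (a - 2) + 2 : ℕ) : ℤ), 0) else
  (((2 * (1 + 4 * ((a - 15) / 4) + ((a - 15) / 2) % 2) + 3 : ℕ) : ℤ),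
    bif Nat.beq (a % 2) 1 then 1 else -1)

def pos (a : Fin 27) : ℤ × ℤ := posN a.val

def edgesG : List (Fin 27 × Fin 27) :=
  ((List.finRange 27).product (List.finRange 27)).filter (fun e => adjL e.1.val e.2.val)

theorem mem_edgesG {a b : Fin 27} (h : GG.Adj a b) : (a, b) ∈ edgesG ∨ (b, a) ∈ edgesG := by
  have h : (adjL a.val b.val || adjL b.val a.val) = true := h
  rw [Bool.or_eq_true] at h
  rcases h with h | h
  · left; simp [edgesG, List.mem_filter, List.mem_product, h, List.product, List.mem_finRange]
  · right; simp [edgesG, List.mem_filter, List.mem_product, h, List.product, List.mem_finRange]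

theorem chk1 : (edgesG.all fun e => edgesG.all fun f =>
    (decide (e.1 = f.1) || decide (e.1 = f.2) || decide (e.2 = f.1) || decide (e.2 = f.2) ||
      sepA (pos e.1) (pos e.2) (pos f.1) (pos f.2))) = true := by decide +kernel

theorem chk2 : (edgesG.all fun e => (List.finRange 27).all fun w =>
    (decide (w = e.1) || decide (w = e.2) ||
      sepA (pos e.1) (pos e.2) (pos w) (pos w))) = true := by decide +kernel

theorem chk3 : ((List.finRange 27).all fun u => (List.finRange 27).all fun v => !adjB u v ||
  (List.finRange 27).all fun w => (!adjB u w || decide (v = w) ||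
      shI (pos u) (pos v) (pos w))) = true := by decide +kernel

theorem pos_inj : ∀ a b : Fin 27, pos a = pos b → a = b := by decide +kernel

attribute [irreducible] pos edgesG

theorem GG_drawing : IsPlaneDrawing GG (fun a => rc (pos a)) := by
  refine ⟨?_, ?_, ?_, ?_⟩
  · intro a b h
    apply pos_inj
    simp only [rc, Prod.mk.injEq, Int.cast_inj] at h
    exact Prod.ext h.1 h.2
  · have key : ∀ e ∈ edgesG, ∀ f ∈ edgesG, e.1 ≠ f.1 → e.1 ≠ f.2 → e.2 ≠ f.1 → e.2 ≠ f.2 →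
        segment ℝ (rc (pos e.1)) (rc (pos e.2)) ∩ segment ℝ (rc (pos f.1)) (rc (pos f.2)) = ∅ := by
      intro e he f hf h1 h2 h3 h4
      have := List.all_eq_true.1 (List.all_eq_true.1 chk1 e he) f hf
      simp only [h1, h2, h3, h4, decide_false, Bool.false_or] at this
      exact sepA_spec this
    intro u v x y huv hxy h1 h2 h3 h4
    rcases mem_edgesG huv with a | a <;> rcases mem_edgesG hxy with b | b
    · exact key _ a _ b h1 h2 h3 h4
    · have := key _ a _ b h2 h1 h4 h3
      rwa [segment_symm ℝ (rc (pos y))] at this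
    · have := key _ a _ b h3 h4 h1 h2
      rwa [segment_symm ℝ (rc (pos v))] at this
    · have := key _ a _ b h4 h3 h2 h1
      rwa [segment_symm ℝ (rc (pos v)), segment_symm ℝ (rc (pos y))] at this
  · intro u v w huv huw hvw
    have := List.all_eq_true.1 (List.all_eq_true.1 chk3 u (List.mem_finRange u)) v
      (List.mem_finRange v)
    have huv : adjB u v = true := huv
    have huw : adjB u w = true := huw
    rw [huv, Bool.not_true, Bool.false_or] at this
    have := List.all_eq_true.1 this w (List.mem_finRange w)
    simp only [huw, hvw, Bool.not_true, decide_false, Bool.false_or] at this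
    exact sh_spec this
  · have key : ∀ e ∈ edgesG, ∀ w, w ≠ e.1 → w ≠ e.2 →
        rc (pos w) ∉ segment ℝ (rc (pos e.1)) (rc (pos e.2)) := by
      intro e he w h1 h2 hm
      have := List.all_eq_true.1 (List.all_eq_true.1 chk2 e he) w (List.mem_finRange w)
      simp only [h1, h2, decide_false, Bool.false_or] at this
      have := sepA_spec this
      rw [Set.eq_empty_iff_forall_notMem] at this
      exact this _ ⟨hm, left_mem_segment ℝ _ _⟩
    intro u v w huv h1 h2
    rcases mem_edgesG huv with a | a
    · exact key _ a w h1 h2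
    · have := key _ a w h2 h1
      rwa [segment_symm ℝ (rc (pos v))] at this

/-- There exists a planar 3-tree with no order-preserving 1-string representation
with respect to any of its straight-line plane drawings. -/
theorem stmt_0 :
    ∃ (V : Type) (_ : Fintype V) (G : SimpleGraph V),
      IsKTree 3 G ∧
      (∃ p : V → ℝ × ℝ, IsPlaneDrawing G p) ∧
      ∀ p : V → ℝ × ℝ, IsPlaneDrawing G p →
        ∀ R : OneStringRep G, ¬ OrderPreserving G p R := by
  refine ⟨Fin 27, inferInstance, GG, GG_ktree, ⟨_, GG_drawing⟩, ?_⟩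
  intro p hp R hO
  obtain ⟨T, H⟩ := getT GG p hp R hO
  exact GG_false H
end

section
/- Let G be a partial 2-tree (a subgraph of a 2-tree; equivalently, a series-parallel graph). Then there exist a straight-line plane drawing p of G and a 1-string representation of G in which every arc is an L-shape and which is order-preserving with respect to p. -/
/-- A partial 2-tree: a graph isomorphic to a subgraph of some 2-tree. -/
def IsPartialTwoTree {V : Type} (G : SimpleGraph V) : Prop :=
  ∃ (W : Type) (H : SimpleGraph W), IsKTree 2 H ∧
    ∃ g : V ↪ W, ∀ u v : V, G.Adj u v → H.Adj (g u) (g v)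

open Filter Topology in
theorem seg_ev {a m : ℝ × ℝ} {S : Set (ℝ × ℝ)} (hS : IsClosed S)
    (h : Disjoint (segment ℝ a m) S) :
    ∀ᶠ η : ℝ in 𝓝[>] 0, Disjoint (segment ℝ a (m + (η, 0))) S := by
  have hc : IsCompact (segment ℝ a m) := by
    rw [segment_eq_image_lineMap]
    exact isCompact_Icc.image (by fun_prop)
  obtain ⟨δ, hδ, hd⟩ := h.exists_thickenings hc hS
  have : ∀ᶠ η : ℝ in 𝓝[>] 0, η < δ := by
    filter_upwards [Ioo_mem_nhdsGT hδ] with η hη using hη.2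
  filter_upwards [this, self_mem_nhdsWithin] with η h1 h2
  have h2' : 0 < η := h2
  refine hd.mono ?_ (Metric.self_subset_thickening hδ S)
  rintro z ⟨s, t, hs, ht, hst, rfl⟩
  rw [Metric.mem_thickening_iff]
  refine ⟨s • a + t • m, ⟨s, t, hs, ht, hst, rfl⟩, ?_⟩
  rw [dist_eq_norm]
  have : s • a + t • (m + (η, 0)) - (s • a + t • m) = (t * η, 0) := by
    ext <;> simp <;> ring
  rw [this, Prod.norm_def]
  simp only [norm_zero, Real.norm_eq_abs]
  rw [abs_of_nonneg (by positivity)]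
  apply max_lt _ hδ
  nlinarith

theorem exists_below (m : ℕ) (X : ℕ → ℝ) (b : ℝ) :
    ∃ x < b, ∀ v < m, X v < b → X v < x := by
  induction m with
  | zero => exact ⟨b - 1, by linarith, by simp⟩
  | succ m ih =>
    obtain ⟨x, hx, h⟩ := ih
    by_cases hb : X m < b
    · obtain ⟨y, hy1, hy2⟩ := exists_between (max_lt hx hb)
      refine ⟨y, hy2, fun v hv hvb => ?_⟩
      rcases Nat.lt_succ_iff_lt_or_eq.1 hv with h1 | rfl
      · exact ((h v h1 hvb).trans_le (le_max_left _ _)).trans hy1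
      · exact (le_max_right _ _).trans_lt hy1
    · refine ⟨x, hx, fun v hv hvb => ?_⟩
      rcases Nat.lt_succ_iff_lt_or_eq.1 hv with h1 | rfl
      · exact h v h1 hvb
      · exact absurd hvb hb

/-- slope in rotated coordinates -/
noncomputable def sl (P Q : ℝ × ℝ) : ℝ := -(Q.1 - P.1) / (Q.2 - P.2)

structure Good (A : ℕ → ℕ → Prop) (m : ℕ) (X Y : ℕ → ℝ) (p : ℕ → ℝ × ℝ) : Prop where
  injX : ∀ u < m, ∀ v < m, X u = X v → u = v
  injY : ∀ u < m, ∀ v < m, Y u = Y v → u = v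
  monY : ∀ u < m, ∀ v < m, A u v → X u < X v → Y v < Y u
  monp : ∀ u < m, ∀ v < m, A u v → X u < X v → (p u).2 < (p v).2
  star : ∀ u < m, ∀ v < m, ∀ u' < m, ∀ v' < m, A u v' → A u' v → X u' < X v →
    X u < X v → X v < X v' → Y v < Y u → Y u < Y u' → False
  slR : ∀ a < m, ∀ v < m, ∀ v' < m, A a v → A a v' → X a < X v → X v < X v' →
    sl (p a) (p v) < sl (p a) (p v')
  slL : ∀ a < m, ∀ u < m, ∀ u' < m, A u a → A u' a → X u < X a → X u' < X a → Y u' < Y u →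
    sl (p u) (p a) < sl (p u') (p a)
  disj : ∀ u < m, ∀ v < m, ∀ x < m, ∀ y < m, A u v → A x y → u ≠ x → u ≠ y → v ≠ x → v ≠ y →
    Disjoint (segment ℝ (p u) (p v)) (segment ℝ (p x) (p y))

theorem seg_param {P Q z : ℝ × ℝ} (h : z ∈ segment ℝ P Q) :
    ∃ t : ℝ, 0 ≤ t ∧ t ≤ 1 ∧ z.1 = P.1 + t * (Q.1 - P.1) ∧ z.2 = P.2 + t * (Q.2 - P.2) := by
  obtain ⟨s, t, hs, ht, hst, rfl⟩ := h
  refine ⟨t, ht, by linarith, ?_, ?_⟩ <;> simp <;> rw [show s = 1 - t by linarith] <;> ring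

/-- segments from a common point `P` to points on the same side with different slopes -/
theorem seg_meet_same {P Q Q' z : ℝ × ℝ} (h : 0 < (Q.2 - P.2) * (Q'.2 - P.2))
    (hs : sl P Q ≠ sl P Q')
    (h1 : z ∈ segment ℝ P Q) (h2 : z ∈ segment ℝ P Q') : z = P := by
  obtain ⟨t, ht, -, e1, e2⟩ := seg_param h1
  obtain ⟨s, hs', -, e3, e4⟩ := seg_param h2
  have hq : Q.2 - P.2 ≠ 0 := by rintro h0; rw [h0] at h; simp at h
  have hq' : Q'.2 - P.2 ≠ 0 := by rintro h0; rw [h0] at h; simp at h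
  have key : t = 0 := by
    by_contra h0
    apply hs
    have f1 : t * (Q.1 - P.1) = s * (Q'.1 - P.1) := by linarith
    have f2 : t * (Q.2 - P.2) = s * (Q'.2 - P.2) := by linarith
    unfold sl
    rw [div_eq_div_iff hq hq']
    have : t * ((Q.1 - P.1) * (Q'.2 - P.2)) = t * ((Q'.1 - P.1) * (Q.2 - P.2)) := by
      linear_combination (Q'.2 - P.2) * f1 - (Q'.1 - P.1) * f2
    have := mul_left_cancel₀ h0 this
    linarith
  subst key
  ext <;> linarith

theorem seg_meet_opp {P Q Q' z : ℝ × ℝ} (h : Q.2 < P.2) (h' : P.2 < Q'.2)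
    (h1 : z ∈ segment ℝ P Q) (h2 : z ∈ segment ℝ P Q') : z = P := by
  obtain ⟨t, ht, -, e1, e2⟩ := seg_param h1
  obtain ⟨s, hs', -, e3, e4⟩ := seg_param h2
  have key : t = 0 := by
    by_contra h0
    have : 0 < t := lt_of_le_of_ne ht (Ne.symm h0)
    nlinarith
  subst key
  ext <;> linarith

theorem sl_symm (P Q : ℝ × ℝ) : sl P Q = sl Q P := by
  unfold sl
  rw [← neg_sub P.2 Q.2, ← neg_sub P.1 Q.1, div_neg, neg_neg, neg_div]

theorem Good.meet {A : ℕ → ℕ → Prop} {m : ℕ} {X Y : ℕ → ℝ} {p : ℕ → ℝ × ℝ}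
    (hs : ∀ u v, A u v → A v u) (hi : ∀ u, ¬ A u u)
    (hG : Good A m X Y p) {u v w : ℕ} (hu : u < m) (hv : v < m) (hw : w < m)
    (huv : A u v) (huw : A u w) (hvw : v ≠ w) {z : ℝ × ℝ}
    (h1 : z ∈ segment ℝ (p u) (p v)) (h2 : z ∈ segment ℝ (p u) (p w)) : z = p u := by
  have n1 : X u ≠ X v := fun h => hi u (by have := hG.injX u hu v hv h; subst this; exact huv)
  have n2 : X u ≠ X w := fun h => hi u (by have := hG.injX u hu w hw h; subst this; exact huw)
  have n3 : X v ≠ X w := fun h => hvw (hG.injX v hv w hw h)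
  have n4 : Y v ≠ Y w := fun h => hvw (hG.injY v hv w hw h)
  rcases lt_or_gt_of_ne n1 with c1 | c1 <;> rcases lt_or_gt_of_ne n2 with c2 | c2
  · have d1 := hG.monp u hu v hv huv c1
    have d2 := hG.monp u hu w hw huw c2
    refine seg_meet_same (mul_pos (by linarith) (by linarith)) ?_ h1 h2
    rcases lt_or_gt_of_ne n3 with c3 | c3
    · exact (hG.slR u hu v hv w hw huv huw c1 c3).ne
    · exact (hG.slR u hu w hw v hv huw huv c2 c3).ne'
  · have d1 := hG.monp u hu v hv huv c1
    have d2 := hG.monp w hw u hu (hs _ _ huw) c2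
    exact seg_meet_opp d2 d1 h2 h1
  · have d1 := hG.monp v hv u hu (hs _ _ huv) c1
    have d2 := hG.monp u hu w hw huw c2
    exact seg_meet_opp d1 d2 h1 h2
  · have d1 := hG.monp v hv u hu (hs _ _ huv) c1
    have d2 := hG.monp w hw u hu (hs _ _ huw) c2
    refine seg_meet_same (mul_pos_of_neg_of_neg (by linarith) (by linarith)) ?_ h1 h2
    rw [sl_symm, sl_symm (p u)]
    rcases lt_or_gt_of_ne n4 with c3 | c3
    · exact (hG.slL u hu w hw v hv (hs _ _ huw) (hs _ _ huv) c2 c1 c3).ne'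
    · exact (hG.slL u hu v hv w hw (hs _ _ huv) (hs _ _ huw) c1 c2 c3).ne

open Filter Topology in
theorem lin_ev {s S k : ℝ} (h : s < S) : ∀ᶠ η : ℝ in 𝓝[>] 0, s < S - k * η := by
  have : Tendsto (fun η : ℝ => S - k * η) (𝓝[>] 0) (𝓝 (S - k * 0)) := by
    apply tendsto_nhdsWithin_of_tendsto_nhds
    exact Continuous.tendsto (by fun_prop) 0
  rw [mul_zero, sub_zero] at this
  exact this.eventually (lt_mem_nhds h)

open Filter Topology in
theorem ev_lt {m : ℕ} {P : ℕ → ℝ → Prop} (h : ∀ v < m, ∀ᶠ η : ℝ in 𝓝[>] 0, P v η) :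
    ∀ᶠ η : ℝ in 𝓝[>] 0, ∀ v < m, P v η := by
  have := (Filter.eventually_all_finite (l := 𝓝[>] (0:ℝ)) (p := fun v η => P v η)
    (Set.finite_Iio m)).2 h
  exact this

theorem isClosed_seg (a b : ℝ × ℝ) : IsClosed (segment ℝ a b) := by
  rw [segment_eq_image_lineMap]
  exact (isCompact_Icc.image (by fun_prop)).isClosed

open Filter Topology in
theorem Good.newp {A : ℕ → ℕ → Prop} {m : ℕ} {X Y : ℕ → ℝ} {p : ℕ → ℝ × ℝ}
    (hs : ∀ u v, A u v → A v u) (hi : ∀ u, ¬ A u u)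
    (hG : Good A m X Y p) {a b : ℕ} (ha : a < m) (hb : b < m)
    (hab : A a b) (hX : X a < X b) :
    ∃ c : ℝ × ℝ, (p a).2 < c.2 ∧ c.2 < (p b).2 ∧
      sl (p a) c < sl (p a) (p b) ∧ sl (p a) (p b) < sl c (p b) ∧
      (∀ v < m, sl (p a) (p v) < sl (p a) (p b) → sl (p a) (p v) < sl (p a) c) ∧
      (∀ u < m, sl (p a) (p b) < sl (p u) (p b) → sl c (p b) < sl (p u) (p b)) ∧
      (∀ x < m, ∀ y < m, A x y → a ≠ x → a ≠ y →
        Disjoint (segment ℝ (p a) c) (segment ℝ (p x) (p y))) ∧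
      (∀ x < m, ∀ y < m, A x y → b ≠ x → b ≠ y →
        Disjoint (segment ℝ (p b) c) (segment ℝ (p x) (p y))) := by
  have hd := hG.monp a ha b hb hab hX
  have hne : a ≠ b := by rintro rfl; exact hi _ hab
  set M : ℝ × ℝ := (((p a).1 + (p b).1) / 2, ((p a).2 + (p b).2) / 2) with hM
  set k : ℝ := 2 / ((p b).2 - (p a).2) with hk
  have hd' : 0 < (p b).2 - (p a).2 := by linarith
  have hk0 : 0 < k := by positivity
  have e1 : ∀ η : ℝ, sl (p a) (M + (η, 0)) = sl (p a) (p b) - k * η := by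
    intro η
    simp only [sl, hM, hk, Prod.fst_add, Prod.snd_add]
    rw [show ((p a).2 + (p b).2) / 2 + 0 - (p a).2 = ((p b).2 - (p a).2) / 2 by ring]
    field_simp
    ring
  have e2 : ∀ η : ℝ, sl (M + (η, 0)) (p b) = sl (p a) (p b) + k * η := by
    intro η
    simp only [sl, hM, hk, Prod.fst_add, Prod.snd_add]
    rw [show (p b).2 - (((p a).2 + (p b).2) / 2 + 0) = ((p b).2 - (p a).2) / 2 by ring]
    field_simp
    ring
  have hMab : M ∈ segment ℝ (p a) (p b) := by
    refine ⟨1/2, 1/2, by norm_num, by norm_num, by norm_num, ?_⟩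
    ext <;> simp [hM] <;> ring
  have sa : segment ℝ (p a) M ⊆ segment ℝ (p a) (p b) :=
    (convex_segment _ _).segment_subset (left_mem_segment _ _ _) hMab
  have sb : segment ℝ (p b) M ⊆ segment ℝ (p a) (p b) :=
    (convex_segment _ _).segment_subset (right_mem_segment _ _ _) hMab
  have na : p b ∉ segment ℝ (p a) M := by
    intro h
    obtain ⟨t, h0, h1, -, h2⟩ := seg_param h
    simp only [hM] at h2
    nlinarith
  have nb : p a ∉ segment ℝ (p b) M := by
    intro h
    obtain ⟨t, h0, h1, -, h2⟩ := seg_param h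
    simp only [hM] at h2
    nlinarith
  have d1 : ∀ x < m, ∀ y < m, A x y → a ≠ x → a ≠ y →
      Disjoint (segment ℝ (p a) M) (segment ℝ (p x) (p y)) := by
    intro x hx y hy hxy h1 h2
    rw [Set.disjoint_left]
    intro z z1 z2
    by_cases hbx : b = x
    · subst hbx
      have := hG.meet hs hi hb ha hy (hs _ _ hab) hxy h2 (by rw [segment_symm]; exact sa z1) z2
      exact na (this ▸ z1)
    by_cases hby : b = y
    · subst hby
      have := hG.meet hs hi hb ha hx (hs _ _ hab) (hs _ _ hxy) h1
        (by rw [segment_symm]; exact sa z1) (by rw [segment_symm]; exact z2)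
      exact na (this ▸ z1)
    exact Set.disjoint_left.1 (hG.disj a ha b hb x hx y hy hab hxy h1 h2 hbx hby) (sa z1) z2
  have d2 : ∀ x < m, ∀ y < m, A x y → b ≠ x → b ≠ y →
      Disjoint (segment ℝ (p b) M) (segment ℝ (p x) (p y)) := by
    intro x hx y hy hxy h1 h2
    rw [Set.disjoint_left]
    intro z z1 z2
    by_cases hbx : a = x
    · subst hbx
      have := hG.meet hs hi ha hb hy hab hxy h2 (sb z1) z2
      exact nb (this ▸ z1)
    by_cases hby : a = y
    · subst hby
      have := hG.meet hs hi ha hb hx hab (hs _ _ hxy) h1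
        (sb z1) (by rw [segment_symm]; exact z2)
      exact nb (this ▸ z1)
    exact Set.disjoint_left.1 (hG.disj a ha b hb x hx y hy hab hxy hbx hby h1 h2) (sb z1) z2
  have v1 : ∀ᶠ η : ℝ in 𝓝[>] 0, ∀ v < m, sl (p a) (p v) < sl (p a) (p b) →
      sl (p a) (p v) < sl (p a) (M + (η, 0)) := by
    apply ev_lt
    intro v hv
    by_cases h : sl (p a) (p v) < sl (p a) (p b)
    · filter_upwards [lin_ev (k := k) h] with η hη _
      rw [e1]; exact hη
    · exact Eventually.of_forall fun η h' => absurd h' h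
  have v2 : ∀ᶠ η : ℝ in 𝓝[>] 0, ∀ u < m, sl (p a) (p b) < sl (p u) (p b) →
      sl (M + (η, 0)) (p b) < sl (p u) (p b) := by
    apply ev_lt
    intro v hv
    by_cases h : sl (p a) (p b) < sl (p v) (p b)
    · filter_upwards [lin_ev (k := k) h] with η hη _
      rw [e2]; linarith
    · exact Eventually.of_forall fun η h' => absurd h' h
  have v3 : ∀ᶠ η : ℝ in 𝓝[>] 0, ∀ x < m, ∀ y < m, A x y → a ≠ x → a ≠ y →
        Disjoint (segment ℝ (p a) (M + (η, 0))) (segment ℝ (p x) (p y)) := by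
    apply ev_lt
    intro x hx
    apply ev_lt
    intro y hy
    by_cases h : A x y ∧ a ≠ x ∧ a ≠ y
    · filter_upwards [seg_ev (isClosed_seg (p x) (p y)) (d1 x hx y hy h.1 h.2.1 h.2.2)]
        with η hη _ _ _ using hη
    · exact Eventually.of_forall fun η h1 h2 h3 => absurd ⟨h1, h2, h3⟩ h
  have v4 : ∀ᶠ η : ℝ in 𝓝[>] 0, ∀ x < m, ∀ y < m, A x y → b ≠ x → b ≠ y →
        Disjoint (segment ℝ (p b) (M + (η, 0))) (segment ℝ (p x) (p y)) := by
    apply ev_lt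
    intro x hx
    apply ev_lt
    intro y hy
    by_cases h : A x y ∧ b ≠ x ∧ b ≠ y
    · filter_upwards [seg_ev (isClosed_seg (p x) (p y)) (d2 x hx y hy h.1 h.2.1 h.2.2)]
        with η hη _ _ _ using hη
    · exact Eventually.of_forall fun η h1 h2 h3 => absurd ⟨h1, h2, h3⟩ h
  have v5 : ∀ᶠ η : ℝ in 𝓝[>] 0, 0 < η := self_mem_nhdsWithin
  obtain ⟨η, w1, w2, w3, w4, w5⟩ := (v1.and (v2.and (v3.and (v4.and v5)))).exists
  have : 0 < k * η := by positivity
  refine ⟨M + (η, 0), ?_, ?_, ?_, ?_, w1, w2, w3, w4⟩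
  · simp only [hM, Prod.snd_add]; linarith
  · simp only [hM, Prod.snd_add]; linarith
  · rw [e1]; linarith
  · rw [e2]; linarith

theorem Good.step {A : ℕ → ℕ → Prop} {m : ℕ} {X Y : ℕ → ℝ} {p : ℕ → ℝ × ℝ}
    (hs : ∀ u v, A u v → A v u) (hi : ∀ u, ¬ A u u)
    (hG : Good A m X Y p) {a b : ℕ} (ha : a < m) (hb : b < m)
    (hab : A a b) (hX : X a < X b) (hm : ∀ w < m, A m w → w = a ∨ w = b) :
    ∃ X' Y' p', Good A (m + 1) X' Y' p' := by
  obtain ⟨c, c1, c2, c3, c4, c5, c6, c7, c8⟩ := hG.newp hs hi ha hb hab hX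
  obtain ⟨x, hxb, hx⟩ := exists_below m X (X b)
  obtain ⟨y, hya, hy⟩ := exists_below m Y (Y a)
  have hm' : ∀ w < m, A w m → w = a ∨ w = b := fun w hw h => hm w hw (hs _ _ h)
  have hYab := hG.monY a ha b hb hab hX
  obtain ⟨X', hX', hXm⟩ : ∃ X' : ℕ → ℝ, (∀ u < m, X' u = X u) ∧ X' m = x :=
    ⟨Function.update X m x, fun u hu => by simp [Function.update_of_ne hu.ne], by simp⟩
  obtain ⟨Y', hY', hYm⟩ : ∃ Y' : ℕ → ℝ, (∀ u < m, Y' u = Y u) ∧ Y' m = y :=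
    ⟨Function.update Y m y, fun u hu => by simp [Function.update_of_ne hu.ne], by simp⟩
  obtain ⟨p', hp', hpm⟩ : ∃ p' : ℕ → ℝ × ℝ, (∀ u < m, p' u = p u) ∧ p' m = c :=
    ⟨Function.update p m c, fun u hu => by simp [Function.update_of_ne hu.ne], by simp⟩
  have hxa : X a < x := hx a ha hX
  have hyb : Y b < y := hy b hb hYab
  have Xne : ∀ v < m, X v ≠ x := fun v hv h => by
    have := hx v hv (h ▸ hxb); linarith
  have Yne : ∀ v < m, Y v ≠ y := fun v hv h => by
    have := hy v hv (h ▸ hya); linarith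
  refine ⟨X', Y', p', ?_, ?_, ?_, ?_, ?_, ?_, ?_, ?_⟩
  · intro u hu v hv
    rcases Nat.lt_succ_iff_lt_or_eq.1 hu with hu | rfl <;>
    rcases Nat.lt_succ_iff_lt_or_eq.1 hv with hv | rfl
    · rw [hX' u hu, hX' v hv]; exact hG.injX u hu v hv
    · rw [hX' u hu, hXm]; intro h; exact absurd h (Xne u hu)
    · rw [hX' v hv, hXm]; intro h; exact absurd h.symm (Xne v hv)
    · simp
  · intro u hu v hv
    rcases Nat.lt_succ_iff_lt_or_eq.1 hu with hu | rfl <;>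
    rcases Nat.lt_succ_iff_lt_or_eq.1 hv with hv | rfl
    · rw [hY' u hu, hY' v hv]; exact hG.injY u hu v hv
    · rw [hY' u hu, hYm]; intro h; exact absurd h (Yne u hu)
    · rw [hY' v hv, hYm]; intro h; exact absurd h.symm (Yne v hv)
    · simp
  · intro u hu v hv
    rcases Nat.lt_succ_iff_lt_or_eq.1 hu with hu | rfl <;>
    rcases Nat.lt_succ_iff_lt_or_eq.1 hv with hv | rfl
    · rw [hX' u hu, hX' v hv, hY' u hu, hY' v hv]; exact hG.monY u hu v hv
    · rw [hX' u hu, hXm, hY' u hu, hYm]; intro h h'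
      rcases hm' u hu h with rfl | rfl <;> linarith
    · rw [hX' v hv, hXm, hY' v hv, hYm]; intro h h'
      rcases hm v hv h with rfl | rfl <;> linarith
    · intro h; exact absurd h (hi _)
  · intro u hu v hv
    rcases Nat.lt_succ_iff_lt_or_eq.1 hu with hu | rfl <;>
    rcases Nat.lt_succ_iff_lt_or_eq.1 hv with hv | rfl
    · rw [hX' u hu, hX' v hv, hp' u hu, hp' v hv]; exact hG.monp u hu v hv
    · rw [hX' u hu, hXm, hp' u hu, hpm]; intro h h'
      rcases hm' u hu h with rfl | rfl <;> linarith
    · rw [hX' v hv, hXm, hp' v hv, hpm]; intro h h'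
      rcases hm v hv h with rfl | rfl <;> linarith
    · intro h; exact absurd h (hi _)
  · intro u hu v hv u' hu' v' hv' h1 h2 h3 h4 h5 h6 h7
    rcases Nat.lt_succ_iff_lt_or_eq.1 hu with hu | rfl
    · rw [hX' u hu] at h4
      rw [hY' u hu] at h6 h7
      rcases Nat.lt_succ_iff_lt_or_eq.1 hv with hv | rfl
      · rw [hX' v hv] at h3 h4 h5
        rw [hY' v hv] at h6
        rcases Nat.lt_succ_iff_lt_or_eq.1 hu' with hu' | rfl <;>
        rcases Nat.lt_succ_iff_lt_or_eq.1 hv' with hv' | rfl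
        · rw [hX' u' hu'] at h3
          rw [hY' u' hu'] at h7
          rw [hX' v' hv'] at h5
          exact hG.star u hu v hv u' hu' v' hv' h1 h2 h3 h4 h5 h6 h7
        · rw [hX' u' hu'] at h3
          rw [hY' u' hu'] at h7
          rw [hXm] at h5
          rcases hm' u hu h1 with rfl | rfl
          · exact hG.star u hu v hv u' hu' b hb hab h2 h3 h4 (by linarith) h6 h7
          · linarith
        · rw [hX' v' hv'] at h5
          rw [hXm] at h3
          rw [hYm] at h7
          rcases hm v hv h2 with rfl | rfl
          · linarith
          · exact hG.star u hu v hv a ha v' hv' h1 hab hX h4 h5 h6 (by linarith)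
        · rw [hXm] at h3 h5; linarith
      · rw [hYm] at h6
        rw [hXm] at h3
        rcases Nat.lt_succ_iff_lt_or_eq.1 hu' with hu' | rfl
        · rw [hY' u' hu'] at h7
          rw [hX' u' hu'] at h3
          rcases hm' u' hu' h2 with rfl | rfl
          · have := hy u hu h7; linarith
          · linarith
        · exact hi _ h2
    · rcases Nat.lt_succ_iff_lt_or_eq.1 hv with hv | rfl
      · rw [hX' v hv] at h4 h5
        rw [hXm] at h4
        rcases Nat.lt_succ_iff_lt_or_eq.1 hv' with hv' | rfl
        · rw [hX' v' hv'] at h5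
          rcases hm v' hv' h1 with rfl | rfl
          · linarith
          · have := hx v hv h5; linarith
        · exact hi _ h1
      · linarith
  · intro q hq v hv v' hv' h1 h2 h3 h4
    rcases Nat.lt_succ_iff_lt_or_eq.1 hq with hq | rfl
    · rw [hX' q hq] at h3
      rw [hp' q hq]
      rcases Nat.lt_succ_iff_lt_or_eq.1 hv with hv | rfl <;>
      rcases Nat.lt_succ_iff_lt_or_eq.1 hv' with hv' | rfl
      · rw [hX' v hv] at h3 h4
        rw [hX' v' hv'] at h4
        rw [hp' v hv, hp' v' hv']
        exact hG.slR q hq v hv v' hv' h1 h2 h3 h4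
      · rw [hX' v hv] at h3 h4
        rw [hXm] at h4
        rw [hp' v hv, hpm]
        rcases hm' q hq h2 with rfl | rfl
        · exact c5 v hv (hG.slR q hq v hv b hb h1 hab h3 (by linarith))
        · linarith
      · rw [hX' v' hv'] at h4
        rw [hXm] at h3 h4
        rw [hp' v' hv', hpm]
        rcases hm' q hq h1 with rfl | rfl
        · by_cases e : v' = b
          · subst e; exact c3
          · have : X b < X v' := by
              rcases lt_trichotomy (X b) (X v') with h | h | h
              · exact h
              · exact absurd (hG.injX _ hb _ hv' h).symm e
              · have := hx v' hv' h; linarith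
            exact c3.trans (hG.slR q hq b hb v' hv' hab h2 hX this)
        · linarith
      · exact absurd h4 (lt_irrefl _)
    · rw [hXm] at h3
      have hv : v < q := by
        rcases Nat.lt_succ_iff_lt_or_eq.1 hv with hv | rfl
        · exact hv
        · exact absurd h1 (hi _)
      have hv' : v' < q := by
        rcases Nat.lt_succ_iff_lt_or_eq.1 hv' with hv | rfl
        · exact hv
        · exact absurd h2 (hi _)
      rw [hX' v hv] at h3 h4
      rw [hX' v' hv'] at h4
      rcases hm v hv h1 with rfl | rfl <;> rcases hm v' hv' h2 with rfl | rfl <;> linarith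
  · intro q hq v hv v' hv' h1 h2 h3 h3' h4
    rcases Nat.lt_succ_iff_lt_or_eq.1 hq with hq | rfl
    · rw [hX' q hq] at h3 h3'
      rw [hp' q hq]
      rcases Nat.lt_succ_iff_lt_or_eq.1 hv with hv | rfl <;>
      rcases Nat.lt_succ_iff_lt_or_eq.1 hv' with hv' | rfl
      · rw [hX' v hv] at h3
        rw [hX' v' hv'] at h3'
        rw [hY' v hv, hY' v' hv'] at h4
        rw [hp' v hv, hp' v' hv']
        exact hG.slL q hq v hv v' hv' h1 h2 h3 h3' h4
      · rw [hX' v hv] at h3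
        rw [hXm] at h3'
        rw [hY' v hv, hYm] at h4
        rw [hp' v hv, hpm]
        rcases hm q hq h2 with rfl | rfl
        · linarith
        · by_cases e : v = a
          · subst e; exact c4
          · have : Y a < Y v := by
              rcases lt_trichotomy (Y a) (Y v) with h | h | h
              · exact h
              · exact absurd (hG.injY _ ha _ hv h).symm e
              · have := hy v hv h; linarith
            exact (hG.slL q hq v hv a ha h1 hab h3 hX this).trans c4
      · rw [hX' v' hv'] at h3'
        rw [hXm] at h3
        rw [hY' v' hv', hYm] at h4
        rw [hp' v' hv', hpm]
        rcases hm q hq h1 with rfl | rfl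
        · linarith
        · exact c6 v' hv' (hG.slL q hq a ha v' hv' hab h2 hX h3' (by linarith))
      · exact absurd h4 (lt_irrefl _)
    · rw [hXm] at h3 h3'
      have hv : v < q := by
        rcases Nat.lt_succ_iff_lt_or_eq.1 hv with hv | rfl
        · exact hv
        · exact absurd h1 (hi _)
      have hv' : v' < q := by
        rcases Nat.lt_succ_iff_lt_or_eq.1 hv' with hv | rfl
        · exact hv
        · exact absurd h2 (hi _)
      rw [hX' v hv] at h3
      rw [hX' v' hv'] at h3'
      rw [hY' v hv, hY' v' hv'] at h4
      rcases hm v hv (hs _ _ h1) with rfl | rfl <;>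
        rcases hm v' hv' (hs _ _ h2) with rfl | rfl <;> linarith
  · have new : ∀ v < m, ∀ x < m, ∀ y < m, A m v → A x y → v ≠ x → v ≠ y →
        Disjoint (segment ℝ c (p v)) (segment ℝ (p x) (p y)) := by
      clear hx hy
      intro v hv x hx y hy h1 h2 h3 h4
      rw [segment_symm]
      rcases hm v hv h1 with h | h
      · rw [h] at h3 h4 ⊢; exact c7 x hx y hy h2 h3 h4
      · rw [h] at h3 h4 ⊢; exact c8 x hx y hy h2 h3 h4
    have new' : ∀ u < m + 1, ∀ v < m + 1, ∀ x < m, ∀ y < m, A u v → A x y → u ≠ x → u ≠ y →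
        v ≠ x → v ≠ y → Disjoint (segment ℝ (p' u) (p' v)) (segment ℝ (p' x) (p' y)) := by
      intro u hu v hv x hx y hy h1 h2 h3 h4 h5 h6
      rw [hp' x hx, hp' y hy]
      rcases Nat.lt_succ_iff_lt_or_eq.1 hu with hu | rfl <;>
      rcases Nat.lt_succ_iff_lt_or_eq.1 hv with hv | rfl
      · rw [hp' u hu, hp' v hv]
        exact hG.disj u hu v hv x hx y hy h1 h2 h3 h4 h5 h6
      · rw [hp' u hu, hpm, segment_symm]
        exact new u hu x hx y hy (hs _ _ h1) h2 h3 h4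
      · rw [hp' v hv, hpm]
        exact new v hv x hx y hy h1 h2 h5 h6
      · exact absurd h1 (hi _)
    intro u hu v hv x hx y hy h1 h2 h3 h4 h5 h6
    by_cases hxy : x < m ∧ y < m
    · exact new' u hu v hv x hxy.1 y hxy.2 h1 h2 h3 h4 h5 h6
    · exact (new' x hx y hy u (by omega) v (by omega) h2 h1 h3.symm h5.symm h4.symm h6.symm).symm

theorem Good.base {A : ℕ → ℕ → Prop} (hi : ∀ u, ¬ A u u) :
    Good A 2 (fun i => (i : ℝ)) (fun i => -(i : ℝ)) (fun i => (0, (i : ℝ))) := by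
  have hi' : ∀ {u v}, A u v → u ≠ v := by rintro u v h rfl; exact hi _ h
  constructor
  · intro u _ v _ h; exact_mod_cast h
  · intro u _ v _ h; simpa using h
  · intro u _ v _ _ h; simpa using h
  · intro u _ v _ _ h; simpa using h
  · intro u _ v _ u' _ v' _ _ _ h1 h2 h3
    norm_cast at *; omega
  · intro u _ v _ v' _ _ _ h1 h2
    norm_cast at *; omega
  · intro u _ v _ v' _ _ _ h1 h2 h3
    simp only [neg_lt_neg_iff] at h3
    norm_cast at *; omega
  · intro u _ v _ x _ y _ h1 h2 h3
    have := hi' h1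
    have := hi' h2
    omega

theorem Good.exists {A : ℕ → ℕ → Prop} (hs : ∀ u v, A u v → A v u) (hi : ∀ u, ¬ A u u) {n : ℕ}
    (hn : 2 ≤ n)
    (hA : ∀ c, 2 ≤ c → c < n → ∃ a < c, ∃ b < c, A a b ∧ ∀ w < c, A c w → w = a ∨ w = b) :
    ∃ X Y p, Good A n X Y p := by
  have : ∀ k, 2 ≤ k → k ≤ n → ∃ X Y p, Good A k X Y p := by
    intro k hk
    induction k, hk using Nat.le_induction with
    | base => intro _; exact ⟨_, _, _, Good.base hi⟩
    | succ k hk ih =>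
      intro hkn
      obtain ⟨X, Y, p, hG⟩ := ih (by omega)
      obtain ⟨a, ha, b, hb, hab, hw⟩ := hA k hk (by omega)
      rcases lt_trichotomy (X a) (X b) with h | h | h
      · exact hG.step hs hi ha hb hab h hw
      · have := hG.injX a ha b hb h
        subst this
        exact absurd hab (hi _)
      · exact hG.step hs hi hb ha (hs _ _ hab) h (fun w h1 h2 => (hw w h1 h2).symm)
  exact this n hn le_rfl

/-- The L-shaped arc. -/
noncomputable def LArc (x y w h : ℝ) (hw : 0 < w) (hh : 0 < h) : Arc where
  toFun t := (x + w * max (2 * t - 1) 0, y + h * max (1 - 2 * t) 0)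
  contOn := by fun_prop
  injOn := by
    intro s _ t _ hst
    simp only [Prod.mk.injEq, add_right_inj, mul_eq_mul_left_iff, hw.ne', hh.ne', or_false] at hst
    obtain ⟨h1, h2⟩ := hst
    rcases le_total (2 * s - 1) 0 with a | a <;> rcases le_total (2 * t - 1) 0 with b | b
    · rw [max_eq_left (by linarith), max_eq_left (by linarith)] at h2; linarith
    · rw [max_eq_right a, max_eq_left b] at h1
      rw [max_eq_left (by linarith), max_eq_right (by linarith)] at h2; linarith
    · rw [max_eq_left a, max_eq_right b] at h1
      rw [max_eq_right (by linarith), max_eq_left (by linarith)] at h2; linarith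
    · rw [max_eq_left a, max_eq_left b] at h1; linarith

theorem LArc_param_h {x y w h : ℝ} (hw : 0 < w) (hh : 0 < h) (s : ℝ) (hs : x ≤ s) :
    (LArc x y w h hw hh).toFun (1 / 2 + (s - x) / (2 * w)) = (s, y) := by
  have h0 : 0 ≤ (s - x) / w := div_nonneg (by linarith) hw.le
  have e : 2 * (1 / 2 + (s - x) / (2 * w)) - 1 = (s - x) / w := by field_simp; ring
  have e' : 1 - 2 * (1 / 2 + (s - x) / (2 * w)) = - ((s - x) / w) := by rw [← e]; ring
  simp only [LArc]
  rw [e, e', max_eq_left h0, max_eq_right (by linarith)]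
  ext
  · simp; field_simp; ring
  · simp

theorem LArc_param_v {x y w h : ℝ} (hw : 0 < w) (hh : 0 < h) (s : ℝ) (hs : y ≤ s) :
    (LArc x y w h hw hh).toFun (1 / 2 - (s - y) / (2 * h)) = (x, s) := by
  have h0 : 0 ≤ (s - y) / h := div_nonneg (by linarith) hh.le
  have e : 1 - 2 * (1 / 2 - (s - y) / (2 * h)) = (s - y) / h := by field_simp; ring
  have e' : 2 * (1 / 2 - (s - y) / (2 * h)) - 1 = - ((s - y) / h) := by rw [← e]; ring
  simp only [LArc]
  rw [e, e', max_eq_left h0, max_eq_right (by linarith)]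
  ext
  · simp
  · simp; field_simp; ring

theorem mem_LArc {x y w h : ℝ} (hw : 0 < w) (hh : 0 < h) (q : ℝ × ℝ) :
    q ∈ (LArc x y w h hw hh).img ↔
      (q.1 = x ∧ y ≤ q.2 ∧ q.2 ≤ y + h) ∨ (q.2 = y ∧ x ≤ q.1 ∧ q.1 ≤ x + w) := by
  constructor
  · rintro ⟨t, ⟨h0, h1⟩, rfl⟩
    rcases le_total (2 * t - 1) 0 with a | a
    · left
      simp only [LArc]
      rw [max_eq_right a, max_eq_left (by linarith)]
      refine ⟨by ring, by nlinarith, by nlinarith⟩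
    · right
      simp only [LArc]
      rw [max_eq_left a, max_eq_right (by linarith)]
      refine ⟨by ring, by nlinarith, by nlinarith⟩
  · rintro (⟨h1, h2, h3⟩ | ⟨h1, h2, h3⟩)
    · refine ⟨1 / 2 - (q.2 - y) / (2 * h), ⟨?_, ?_⟩, ?_⟩
      · rw [sub_nonneg, div_le_div_iff₀ (by positivity) (by positivity)]; linarith
      · have : 0 ≤ (q.2 - y) / (2 * h) := div_nonneg (by linarith) (by positivity)
        linarith
      · rw [LArc_param_v hw hh _ h2]; ext <;> simp [h1]
    · refine ⟨1 / 2 + (q.1 - x) / (2 * w), ⟨?_, ?_⟩, ?_⟩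
      · have : 0 ≤ (q.1 - x) / (2 * w) := div_nonneg (by linarith) (by positivity)
        linarith
      · have : (q.1 - x) / (2 * w) ≤ 1 / 2 := by
          rw [div_le_div_iff₀ (by positivity) (by positivity)]; linarith
        linarith
      · rw [LArc_param_h hw hh _ h2]; ext <;> simp [h1]

theorem LArc_isL {x y w h : ℝ} (hw : 0 < w) (hh : 0 < h) : IsLShape (LArc x y w h hw hh) := by
  refine ⟨x, y, w, h, hw, hh, ?_⟩
  ext q
  rw [mem_LArc, Set.mem_union]
  constructor
  · rintro (⟨h1, h2, h3⟩ | ⟨h1, h2, h3⟩)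
    · left
      refine ⟨(q.2 - y) / h, 1 - (q.2 - y) / h, div_nonneg (by linarith) hh.le, ?_, by ring, ?_⟩
      · rw [sub_nonneg, div_le_one hh]; linarith
      · ext
        · simp; rw [← h1]; ring
        · simp; field_simp; ring
    · right
      refine ⟨1 - (q.1 - x) / w, (q.1 - x) / w, ?_, div_nonneg (by linarith) hw.le, by ring, ?_⟩
      · rw [sub_nonneg, div_le_one hw]; linarith
      · ext
        · simp; field_simp; ring
        · simp; rw [← h1]; ring
  · rintro (h1 | h1)
    · obtain ⟨t, h0, h1, e1, e2⟩ := seg_param h1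
      left
      simp only at e1 e2
      refine ⟨by linarith, by nlinarith, by nlinarith⟩
    · obtain ⟨t, h0, h1, e1, e2⟩ := seg_param h1
      right
      simp only at e1 e2
      refine ⟨by linarith, by nlinarith, by nlinarith⟩

/-- scaling homeomorphism -/
noncomputable def scaleH (q : ℝ × ℝ) (ρ : ℝ) (hρ : 0 < ρ) : PartialHomeomorph (ℝ × ℝ) (ℝ × ℝ) where
  toFun z := ((z.1 - q.1) / ρ, (z.2 - q.2) / ρ)
  invFun z := (q.1 + ρ * z.1, q.2 + ρ * z.2)
  source := {z | |z.1 - q.1| < ρ ∧ |z.2 - q.2| < ρ}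
  target := Metric.ball 0 1
  map_source' := by
    rintro z ⟨h1, h2⟩
    simp only [Metric.mem_ball, dist_zero_right, Prod.norm_def, Real.norm_eq_abs, max_lt_iff,
      abs_div, abs_of_pos hρ, div_lt_one hρ]
    exact ⟨h1, h2⟩
  map_target' := by
    intro z hz
    simp only [Metric.mem_ball, dist_zero_right, Prod.norm_def, Real.norm_eq_abs, max_lt_iff] at hz
    simp only [Set.mem_setOf_eq, add_sub_cancel_left, abs_mul, abs_of_pos hρ]
    constructor <;> nlinarith [hz.1, hz.2]
  left_inv' := by
    rintro z -
    ext <;> simp <;> field_simp <;> ring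
  right_inv' := by
    rintro z -
    ext <;> simp <;> field_simp
  continuousOn_toFun := by
    apply Continuous.continuousOn
    fun_prop
  continuousOn_invFun := by
    apply Continuous.continuousOn
    fun_prop

/-- scaling homeomorphism followed by a swap -/
noncomputable def scaleS (q : ℝ × ℝ) (ρ : ℝ) (hρ : 0 < ρ) : PartialHomeomorph (ℝ × ℝ) (ℝ × ℝ) where
  toFun z := ((z.2 - q.2) / ρ, (z.1 - q.1) / ρ)
  invFun z := (q.1 + ρ * z.2, q.2 + ρ * z.1)
  source := {z | |z.1 - q.1| < ρ ∧ |z.2 - q.2| < ρ}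
  target := Metric.ball 0 1
  map_source' := by
    rintro z ⟨h1, h2⟩
    simp only [Metric.mem_ball, dist_zero_right, Prod.norm_def, Real.norm_eq_abs, max_lt_iff,
      abs_div, abs_of_pos hρ, div_lt_one hρ]
    exact ⟨h2, h1⟩
  map_target' := by
    intro z hz
    simp only [Metric.mem_ball, dist_zero_right, Prod.norm_def, Real.norm_eq_abs, max_lt_iff] at hz
    simp only [Set.mem_setOf_eq, add_sub_cancel_left, abs_mul, abs_of_pos hρ]
    constructor <;> nlinarith [hz.1, hz.2]
  left_inv' := by
    rintro z -
    ext <;> simp <;> field_simp <;> ring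
  right_inv' := by
    rintro z -
    ext <;> simp <;> field_simp
  continuousOn_toFun := by
    apply Continuous.continuousOn
    fun_prop
  continuousOn_invFun := by
    apply Continuous.continuousOn
    fun_prop

theorem img_helper (h : PartialHomeomorph (ℝ × ℝ) (ℝ × ℝ)) (S T : Set (ℝ × ℝ))
    (hT : T ⊆ h.target) (hST : ∀ z ∈ h.source, z ∈ S ↔ h z ∈ T) :
    h '' (h.source ∩ S) = T := by
  ext z
  constructor
  · rintro ⟨y, ⟨h1, h2⟩, rfl⟩
    exact (hST y h1).1 h2
  · intro hz
    have e : h (h.invFun z) = z := h.right_inv' (hT hz)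
    have s : h.invFun z ∈ h.source := h.map_target' (hT hz)
    refine ⟨h.invFun z, ⟨s, ?_⟩, e⟩
    rw [hST _ s, e]; exact hz

theorem LArc_cross {x y w h x' y' w' h' : ℝ} (hw : 0 < w) (hh : 0 < h) (hw' : 0 < w') (hh' : 0 < h')
    (h1 : x < x') (h2 : x' < x + w) (h3 : y' < y) (h4 : y < y' + h') :
    CrossesProperlyAt (LArc x y w h hw hh) (LArc x' y' w' h' hw' hh') (x', y) ∧
    CrossesProperlyAt (LArc x' y' w' h' hw' hh') (LArc x y w h hw hh) (x', y) := by
  have i1 : ∃ s ∈ Set.Ioo (0:ℝ) 1, (LArc x y w h hw hh).toFun s = (x', y) := by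
    refine ⟨_, ⟨?_, ?_⟩, LArc_param_h hw hh x' h1.le⟩
    · have : 0 < (x' - x) / (2 * w) := div_pos (by linarith) (by positivity)
      linarith
    · have : (x' - x) / (2 * w) < 1 / 2 := by
        rw [div_lt_div_iff₀ (by positivity) (by positivity)]; linarith
      linarith
  have i2 : ∃ s ∈ Set.Ioo (0:ℝ) 1, (LArc x' y' w' h' hw' hh').toFun s = (x', y) := by
    refine ⟨_, ⟨?_, ?_⟩, LArc_param_v hw' hh' y h3.le⟩
    · have : (y - y') / (2 * h') < 1 / 2 := by
        rw [div_lt_div_iff₀ (by positivity) (by positivity)]; linarith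
      linarith
    · have : 0 < (y - y') / (2 * h') := div_pos (by linarith) (by positivity)
      linarith
  obtain ⟨ρ, hρ, r1⟩ : ∃ ρ > 0, ρ < x' - x ∧ ρ < x + w - x' ∧ ρ < y - y' ∧ ρ < y' + h' - y := by
    obtain ⟨ρ, h0, hr⟩ := exists_between (show (0:ℝ) <
      min (min (x' - x) (x + w - x')) (min (y - y') (y' + h' - y)) by
        simp only [lt_min_iff]; refine ⟨⟨?_, ?_⟩, ?_, ?_⟩ <;> linarith)
    simp only [lt_min_iff] at hr
    exact ⟨ρ, h0, hr.1.1, hr.1.2, hr.2.1, hr.2.2⟩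
  obtain ⟨r1, r2, r3, r4⟩ := r1
  have a1 : ∀ z : ℝ × ℝ, |z.1 - x'| < ρ ∧ |z.2 - y| < ρ →
      (z ∈ (LArc x y w h hw hh).img ↔ (z.2 - y) / ρ = 0) := by
    rintro z ⟨b1, b2⟩
    rw [abs_lt] at b1 b2
    rw [mem_LArc, div_eq_zero_iff]
    constructor
    · rintro (⟨c1, c2, c3⟩ | ⟨c1, c2, c3⟩)
      · linarith [b1.1]
      · left; linarith
    · rintro (c | c)
      · right; refine ⟨?_, ?_, ?_⟩ <;> linarith [b1.1, b1.2]
      · linarith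
  have a2 : ∀ z : ℝ × ℝ, |z.1 - x'| < ρ ∧ |z.2 - y| < ρ →
      (z ∈ (LArc x' y' w' h' hw' hh').img ↔ (z.1 - x') / ρ = 0) := by
    rintro z ⟨b1, b2⟩
    rw [abs_lt] at b1 b2
    rw [mem_LArc, div_eq_zero_iff]
    constructor
    · rintro (⟨c1, c2, c3⟩ | ⟨c1, c2, c3⟩)
      · left; linarith
      · linarith [b2.1]
    · rintro (c | c)
      · left; refine ⟨?_, ?_, ?_⟩ <;> linarith [b2.1, b2.2]
      · linarith
  constructor
  · refine ⟨i1, i2, scaleH (x', y) ρ hρ, ?_, rfl, ?_, ?_, ?_⟩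
    · simp [scaleH, hρ]
    · change ((x' - x') / ρ, (y - y) / ρ) = 0
      simp
    · refine img_helper _ _ _ (fun z hz => hz.1) (fun z hz => ?_)
      rw [a1 z hz]
      exact ⟨fun h => ⟨(scaleH (x', y) ρ hρ).map_source' hz, h⟩, fun h => h.2⟩
    · refine img_helper _ _ _ (fun z hz => hz.1) (fun z hz => ?_)
      rw [a2 z hz]
      exact ⟨fun h => ⟨(scaleH (x', y) ρ hρ).map_source' hz, h⟩, fun h => h.2⟩
  · refine ⟨i2, i1, scaleS (x', y) ρ hρ, ?_, rfl, ?_, ?_, ?_⟩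
    · simp [scaleS, hρ]
    · change ((y - y) / ρ, (x' - x') / ρ) = 0
      simp
    · refine img_helper _ _ _ (fun z hz => hz.1) (fun z hz => ?_)
      rw [a2 z hz]
      exact ⟨fun h => ⟨(scaleS (x', y) ρ hρ).map_source' hz, h⟩, fun h => h.2⟩
    · refine img_helper _ _ _ (fun z hz => hz.1) (fun z hz => ?_)
      rw [a1 z hz]
      exact ⟨fun h => ⟨(scaleS (x', y) ρ hρ).map_source' hz, h⟩, fun h => h.2⟩

theorem arg_lt_of_cross {z z' : ℂ} (h : |z'.arg - z.arg| < Real.pi)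
    (hc : 0 < z.re * z'.im - z.im * z'.re) : z.arg < z'.arg := by
  by_contra hn
  rw [abs_lt] at h
  have hs : Real.sin (z'.arg - z.arg) ≤ 0 :=
    Real.sin_nonpos_of_nonpos_of_neg_pi_le (by linarith) h.1.le
  have : z.re * z'.im - z.im * z'.re = ‖z‖ * ‖z'‖ * Real.sin (z'.arg - z.arg) := by
    rw [Real.sin_sub]
    have e1 := Complex.norm_mul_cos_arg z
    have e2 := Complex.norm_mul_sin_arg z
    have e3 := Complex.norm_mul_cos_arg z'
    have e4 := Complex.norm_mul_sin_arg z'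
    rw [← e1, ← e2, ← e3, ← e4]; ring
  have h2 : ‖z‖ * ‖z'‖ * Real.sin (z'.arg - z.arg) ≤ 0 :=
    mul_nonpos_of_nonneg_of_nonpos (by positivity) hs
  linarith

theorem angle_right {P Q Q' : ℝ × ℝ} (h : P.2 < Q.2) (h' : P.2 < Q'.2) (hs : sl P Q < sl P Q') :
    angleAt P Q < angleAt P Q' := by
  have p1 : 0 < (Q.2 - P.2) := by linarith
  have p2 : 0 < (Q'.2 - P.2) := by linarith
  apply arg_lt_of_cross
  · have a1 : 0 ≤ Complex.arg ⟨Q.1 - P.1, Q.2 - P.2⟩ := Complex.arg_nonneg_iff.2 p1.le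
    have a2 : 0 ≤ Complex.arg ⟨Q'.1 - P.1, Q'.2 - P.2⟩ := Complex.arg_nonneg_iff.2 p2.le
    have b1 : Complex.arg ⟨Q.1 - P.1, Q.2 - P.2⟩ < Real.pi :=
      Complex.arg_lt_pi_iff.2 (Or.inr p1.ne')
    have b2 : Complex.arg ⟨Q'.1 - P.1, Q'.2 - P.2⟩ < Real.pi :=
      Complex.arg_lt_pi_iff.2 (Or.inr p2.ne')
    rw [abs_lt]; constructor <;> linarith
  · simp only [sl] at hs ⊢
    rw [div_lt_div_iff₀ p1 p2] at hs
    linarith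

theorem angle_left {P Q Q' : ℝ × ℝ} (h : Q.2 < P.2) (h' : Q'.2 < P.2) (hs : sl Q P < sl Q' P) :
    angleAt P Q < angleAt P Q' := by
  have p1 : 0 < (P.2 - Q.2) := by linarith
  have p2 : 0 < (P.2 - Q'.2) := by linarith
  apply arg_lt_of_cross
  · have a1 : Complex.arg ⟨Q.1 - P.1, Q.2 - P.2⟩ < 0 :=
      Complex.arg_neg_iff.2 (show Q.2 - P.2 < 0 by linarith)
    have a2 : Complex.arg ⟨Q'.1 - P.1, Q'.2 - P.2⟩ < 0 :=
      Complex.arg_neg_iff.2 (show Q'.2 - P.2 < 0 by linarith)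
    have b1 := Complex.neg_pi_lt_arg ⟨Q.1 - P.1, Q.2 - P.2⟩
    have b2 := Complex.neg_pi_lt_arg ⟨Q'.1 - P.1, Q'.2 - P.2⟩
    rw [abs_lt]; constructor <;> linarith
  · simp only [sl] at hs ⊢
    rw [div_lt_div_iff₀ p1 p2] at hs
    linarith

theorem angle_lr {P Q Q' : ℝ × ℝ} (h : Q.2 < P.2) (h' : P.2 < Q'.2) :
    angleAt P Q < angleAt P Q' := by
  have a1 : Complex.arg ⟨Q.1 - P.1, Q.2 - P.2⟩ < 0 :=
      Complex.arg_neg_iff.2 (show Q.2 - P.2 < 0 by linarith)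
  have a2 : 0 ≤ Complex.arg ⟨Q'.1 - P.1, Q'.2 - P.2⟩ :=
    Complex.arg_nonneg_iff.2 (show 0 ≤ Q'.2 - P.2 by linarith)
  exact a1.trans_le a2

theorem exists_reach {V : Type} [Fintype V] (F : V → ℝ) (N : V → Prop) (v : V) :
    ∃ r, F v < r ∧ (∀ w, N w → F w < r) ∧
      ∀ w, F v < F w → F w ≤ r → ∃ w', N w' ∧ F w ≤ F w' := by
  classical
  let S : Finset V := insert v (Finset.univ.filter N)
  obtain ⟨s, hs, hmax⟩ := S.exists_max_image F ⟨v, by simp [S]⟩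
  let T : Finset V := Finset.univ.filter (fun w => F s < F w)
  obtain ⟨r, hr1, hr2⟩ : ∃ r, F s < r ∧ ∀ w, F s < F w → r < F w := by
    by_cases hT : T.Nonempty
    · obtain ⟨m, hm, hmin⟩ := T.exists_min_image F hT
      obtain ⟨r, h1, h2⟩ := exists_between (Finset.mem_filter.1 hm).2
      exact ⟨r, h1, fun w hw => h2.trans_le (hmin w (by simp [T, hw]))⟩
    · refine ⟨F s + 1, by linarith, fun w hw => absurd ⟨w, by simp [T, hw]⟩ hT⟩
  refine ⟨r, (hmax v (by simp [S])).trans_lt hr1, fun w hw =>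
    (hmax w (by simp [S, hw])).trans_lt hr1, fun w h1 h2 => ?_⟩
  have h3 : F w ≤ F s := by
    by_contra h; push Not at h; exact absurd (hr2 w h) (by linarith)
  have : s ≠ v := by rintro rfl; linarith
  refine ⟨s, ?_, h3⟩
  simp only [S, Finset.mem_insert, Finset.mem_filter, Finset.mem_univ, true_and] at hs
  exact hs.resolve_left this

theorem Good.notOn {A : ℕ → ℕ → Prop} {m : ℕ} {X Y : ℕ → ℝ} {p : ℕ → ℝ × ℝ}
    (hs : ∀ u v, A u v → A v u) (hi : ∀ u, ¬ A u u)
    (hG : Good A m X Y p) (hN : ∀ i < m, ∃ j < m, A i j)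
    {u v w : ℕ} (hu : u < m) (hv : v < m) (hw : w < m)
    (huv : A u v) (h1 : w ≠ u) (h2 : w ≠ v) : p w ∉ segment ℝ (p u) (p v) := by
  intro h
  have ne : ∀ a < m, ∀ b < m, A a b → p a ≠ p b := by
    intro a ha b hb hab e
    rcases lt_trichotomy (X a) (X b) with h | h | h
    · have := hG.monp a ha b hb hab h; rw [e] at this; exact lt_irrefl _ this
    · have := hG.injX a ha b hb h; subst this; exact hi _ hab
    · have := hG.monp b hb a ha (hs _ _ hab) h; rw [e] at this; exact lt_irrefl _ this
  obtain ⟨z, hz, hwz⟩ := hN w hw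
  by_cases e1 : z = u
  · subst e1
    exact ne w hw z hz hwz
      (hG.meet hs hi hz hv hw huv (hs _ _ hwz) h2.symm h (right_mem_segment _ _ _))
  by_cases e2 : z = v
  · subst e2
    exact ne w hw z hz hwz
      (hG.meet hs hi hz hu hw (hs _ _ huv) (hs _ _ hwz) h1.symm (by rw [segment_symm]; exact h)
        (right_mem_segment _ _ _))
  exact Set.disjoint_left.1 (hG.disj w hw z hz u hu v hv hwz huv h1 h2 e1 e2)
    (left_mem_segment _ _ _) h

theorem Good.injp {A : ℕ → ℕ → Prop} {m : ℕ} {X Y : ℕ → ℝ} {p : ℕ → ℝ × ℝ}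
    (hs : ∀ u v, A u v → A v u) (hi : ∀ u, ¬ A u u)
    (hG : Good A m X Y p) (hN : ∀ i < m, ∃ j < m, A i j)
    {u v : ℕ} (hu : u < m) (hv : v < m) (h : p u = p v) : u = v := by
  by_contra hne
  obtain ⟨z, hz, hvz⟩ := hN v hv
  by_cases e : u = z
  · subst e
    rcases lt_trichotomy (X v) (X u) with c | c | c
    · have := hG.monp v hv u hu hvz c; rw [h] at this; exact lt_irrefl _ this
    · exact hne (hG.injX v hv u hu c).symm
    · have := hG.monp u hu v hv (hs _ _ hvz) c; rw [h] at this; exact lt_irrefl _ this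
  · exact hG.notOn hs hi hN hv hz hu hvz hne e (h ▸ left_mem_segment _ _ _)

/-- The construction on the vertex type itself. -/
theorem main_aux {V : Type} [Fintype V] (G : SimpleGraph V) (X Y : V → ℝ) (p : V → ℝ × ℝ)
    (injX : ∀ u v, X u = X v → u = v) (injY : ∀ u v, Y u = Y v → u = v)
    (monY : ∀ u v, G.Adj u v → X u < X v → Y v < Y u)
    (monp : ∀ u v, G.Adj u v → X u < X v → (p u).2 < (p v).2)
    (star : ∀ u v u' v', G.Adj u v' → G.Adj u' v → X u' < X v →
      X u < X v → X v < X v' → Y v < Y u → Y u < Y u' → False)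
    (slR : ∀ a v v', G.Adj a v → G.Adj a v' → X a < X v → X v < X v' →
      sl (p a) (p v) < sl (p a) (p v'))
    (slL : ∀ a u u', G.Adj u a → G.Adj u' a → X u < X a → X u' < X a → Y u' < Y u →
      sl (p u) (p a) < sl (p u') (p a)) :
    ∃ R : OneStringRep G, (∀ v : V, IsLShape (R.γ v)) ∧ OrderPreserving G p R := by
  classical
  choose r r1 r2 r3 using fun v => exists_reach X (fun w => G.Adj v w ∧ X v < X w) v
  choose t t1 t2 t3 using fun v => exists_reach Y (fun w => G.Adj w v ∧ X w < X v) v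
  let γ : V → Arc := fun v => LArc (X v) (Y v) (r v - X v) (t v - Y v)
    (by linarith [r1 v]) (by linarith [t1 v])
  have mem : ∀ v q, q ∈ (γ v).img ↔
      (q.1 = X v ∧ Y v ≤ q.2 ∧ q.2 ≤ t v) ∨ (q.2 = Y v ∧ X v ≤ q.1 ∧ q.1 ≤ r v) := by
    intro v q
    simp only [γ, mem_LArc, add_sub_cancel]
  -- crossings come from edges
  have key : ∀ u v, u ≠ v → X u ≤ X v → X v ≤ r u → Y v ≤ Y u → Y u ≤ t v → G.Adj u v := by
    intro u v huv h1 h2 h3 h4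
    have h1' : X u < X v := lt_of_le_of_ne h1 (fun h => huv (injX _ _ h))
    have h3' : Y v < Y u := lt_of_le_of_ne h3 (fun h => huv (injY _ _ h).symm)
    obtain ⟨v', ⟨a1, a2⟩, a3⟩ := r3 u v h1' h2
    obtain ⟨u', ⟨b1, b2⟩, b3⟩ := t3 v u h3' h4
    by_contra hn
    have c1 : X v < X v' := lt_of_le_of_ne a3 (fun h => hn ((injX _ _ h) ▸ a1))
    have c2 : Y u < Y u' := lt_of_le_of_ne b3 (fun h => hn ((injY _ _ h) ▸ b1))
    exact star u v u' v' a1 b1 b2 h1' c1 h3' c2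
  have edge : ∀ u v, G.Adj u v → X u < X v → X v < r u ∧ Y v < Y u ∧ Y u < t v :=
    fun u v h h' => ⟨r2 u v ⟨h, h'⟩, monY u v h h', t2 v u ⟨h, h'⟩⟩
  -- intersection points
  have inter : ∀ u v, u ≠ v → ∀ q, q ∈ (γ u).img → q ∈ (γ v).img →
      G.Adj u v ∧ ((X u < X v ∧ q = (X v, Y u)) ∨ (X v < X u ∧ q = (X u, Y v))) := by
    intro u v huv q h1 h2
    rw [mem] at h1 h2
    rcases h1 with ⟨a1, a2, a3⟩ | ⟨a1, a2, a3⟩ <;> rcases h2 with ⟨b1, b2, b3⟩ | ⟨b1, b2, b3⟩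
    · exact absurd (injX u v (by rw [← a1, ← b1])) huv
    · rw [a1] at b2 b3
      rw [b1] at a2 a3
      refine ⟨(key v u huv.symm b2 b3 a2 a3).symm, Or.inr ⟨?_, ?_⟩⟩
      · exact lt_of_le_of_ne b2 (fun h => huv (injX _ _ h).symm)
      · ext <;> assumption
    · rw [b1] at a2 a3
      rw [a1] at b2 b3
      refine ⟨key u v huv a2 a3 b2 b3, Or.inl ⟨?_, ?_⟩⟩
      · exact lt_of_le_of_ne a2 (fun h => huv (injX _ _ h))
      · ext <;> assumption
    · exact absurd (injY u v (by rw [← a1, ← b1])) huv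
  have memE : ∀ u v, G.Adj u v → X u < X v → (X v, Y u) ∈ (γ u).img ∧ (X v, Y u) ∈ (γ v).img := by
    intro u v h h'
    obtain ⟨e1, e2, e3⟩ := edge u v h h'
    exact ⟨(mem _ _).2 (Or.inr ⟨rfl, h'.le, e1.le⟩), (mem _ _).2 (Or.inl ⟨rfl, e2.le, e3.le⟩)⟩
  have cross : ∀ u v, G.Adj u v → X u < X v →
      CrossesProperlyAt (γ u) (γ v) (X v, Y u) ∧ CrossesProperlyAt (γ v) (γ u) (X v, Y u) := by
    intro u v h h'
    obtain ⟨e1, e2, e3⟩ := edge u v h h'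
    exact LArc_cross _ _ _ _ h' (by linarith) e2 (by linarith)
  have tri : ∀ u v, G.Adj u v → X u < X v ∨ X v < X u := by
    intro u v h
    exact lt_or_gt_of_ne (fun e => h.ne (injX _ _ e))
  let R : OneStringRep G :=
    { γ := γ
      adj_inter := by
        intro u v h
        rcases tri u v h with h' | h'
        · refine ⟨(X v, Y u), ?_⟩
          refine Set.eq_singleton_iff_unique_mem.2 ⟨Set.mem_inter (memE u v h h').1 (memE u v h h').2, ?_⟩
          rintro q ⟨q1, q2⟩
          rcases (inter u v h.ne q q1 q2).2 with ⟨_, e⟩ | ⟨c, _⟩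
          · exact e
          · exact absurd c (by linarith)
        · refine ⟨(X u, Y v), ?_⟩
          refine Set.eq_singleton_iff_unique_mem.2
            ⟨Set.mem_inter (memE v u h.symm h').2 (memE v u h.symm h').1, ?_⟩
          rintro q ⟨q1, q2⟩
          rcases (inter u v h.ne q q1 q2).2 with ⟨c, _⟩ | ⟨_, e⟩
          · exact absurd c (by linarith)
          · exact e
      nonadj_disjoint := by
        intro u v huv h
        apply Set.eq_empty_of_forall_notMem
        rintro q ⟨q1, q2⟩
        exact h (inter u v huv q q1 q2).1
      proper := by
        rintro u v huv q ⟨q1, q2⟩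
        obtain ⟨h, ⟨h', rfl⟩ | ⟨h', rfl⟩⟩ := inter u v huv q q1 q2
        · exact (cross u v h h').1
        · exact (cross v u h.symm h').2
      no_triple := by
        intro u v w huv huw hvw
        apply Set.eq_empty_of_forall_notMem
        rintro q ⟨⟨q1, q2⟩, q3⟩
        rw [mem] at q1 q2 q3
        rcases q1 with ⟨a, -⟩ | ⟨a, -⟩ <;> rcases q2 with ⟨b, -⟩ | ⟨b, -⟩ <;>
          rcases q3 with ⟨c, -⟩ | ⟨c, -⟩ <;>
        first
        | exact huv (injX _ _ (a.symm.trans b))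
        | exact huv (injY _ _ (a.symm.trans b))
        | exact huw (injX _ _ (a.symm.trans c))
        | exact huw (injY _ _ (a.symm.trans c))
        | exact hvw (injX _ _ (b.symm.trans c))
        | exact hvw (injY _ _ (b.symm.trans c)) }
  refine ⟨R, fun v => LArc_isL (sub_pos.2 (r1 v)) (sub_pos.2 (t1 v)), ?_⟩
  intro v
  let T : V → ℝ := fun w => if X v < X w then 1 / 2 + (X w - X v) / (2 * (r v - X v))
    else 1 / 2 - (Y w - Y v) / (2 * (t v - Y v))
  have dr : 0 < r v - X v := by linarith [r1 v]
  have dt : 0 < t v - Y v := by linarith [t1 v]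
  -- facts about neighbours
  have TR : ∀ w, G.Adj v w → X v < X w → 1 / 2 < T w := by
    intro w h h'
    simp only [T, if_pos h']
    have : 0 < (X w - X v) / (2 * (r v - X v)) := div_pos (by linarith) (by linarith)
    linarith
  have TL : ∀ w, G.Adj v w → X w < X v → T w < 1 / 2 := by
    intro w h h'
    simp only [T, if_neg h'.not_gt]
    have := monY w v h.symm h'
    have : 0 < (Y w - Y v) / (2 * (t v - Y v)) := div_pos (by linarith) (by linarith)
    linarith
  have ang : ∀ w w', G.Adj v w → G.Adj v w' → T w < T w' →
      angleAt (p v) (p w) < angleAt (p v) (p w') := by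
    intro w w' h h' hT
    rcases tri v w h with c | c <;> rcases tri v w' h' with c' | c'
    · refine angle_right (monp v w h c) (monp v w' h' c') (slR v w w' h h' c ?_)
      simp only [T, if_pos c, if_pos c'] at hT
      have := lt_of_add_lt_add_left hT
      rw [div_lt_div_iff_of_pos_right (by linarith)] at this
      linarith
    · linarith [TR w h c, TL w' h' c']
    · exact angle_lr (monp w v h.symm c) (monp v w' h' c')
    · refine angle_left (monp w v h.symm c) (monp w' v h'.symm c')
        (slL v w w' h.symm h'.symm c c' ?_)
      simp only [T, if_neg c.not_gt, if_neg c'.not_gt] at hT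
      have : (Y w' - Y v) / (2 * (t v - Y v)) < (Y w - Y v) / (2 * (t v - Y v)) := by linarith
      rw [div_lt_div_iff_of_pos_right (by linarith)] at this
      linarith
  have Tinj : ∀ w w', G.Adj v w → G.Adj v w' → T w = T w' → w = w' := by
    intro w w' h h' hT
    rcases tri v w h with c | c <;> rcases tri v w' h' with c' | c'
    · simp only [T, if_pos c, if_pos c'] at hT
      have := add_left_cancel hT
      rw [div_left_inj' (by linarith)] at this
      exact injX _ _ (by linarith)
    · linarith [TR w h c, TL w' h' c']
    · linarith [TR w' h' c', TL w h c]
    · simp only [T, if_neg c.not_gt, if_neg c'.not_gt] at hT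
      have : (Y w' - Y v) / (2 * (t v - Y v)) = (Y w - Y v) / (2 * (t v - Y v)) := by linarith
      rw [div_left_inj' (by linarith)] at this
      exact injY _ _ (by linarith)
  let l : List V := (Finset.univ.filter (fun w => G.Adj v w)).toList.insertionSort
    (fun a b => T a ≤ T b)
  have hperm : l.Perm (Finset.univ.filter (fun w => G.Adj v w)).toList :=
    List.perm_insertionSort _ _
  have hnd : l.Nodup := hperm.nodup_iff.2 (Finset.nodup_toList _)
  have hmem : ∀ w, w ∈ l ↔ G.Adj v w := by
    intro w
    rw [hperm.mem_iff]; simp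
  have hsort : l.Pairwise (fun a b => T a ≤ T b) := by
    haveI : Std.Total (fun a b : V => T a ≤ T b) := ⟨fun a b => le_total _ _⟩
    haveI : IsTrans V (fun a b : V => T a ≤ T b) := ⟨fun a b c => le_trans⟩
    exact List.pairwise_insertionSort _ _
  have hlt : l.Pairwise (fun a b => T a < T b) := by
    refine (hsort.and hnd).imp_of_mem ?_
    rintro a b ha hb ⟨h1, h2⟩
    exact lt_of_le_of_ne h1 (fun e => h2 (Tinj a b ((hmem a).1 ha) ((hmem b).1 hb) e))
  refine ⟨l, hnd, hmem, ?_, 0, true, T, ?_, ?_⟩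
  · refine hlt.imp_of_mem ?_
    intro a b ha hb h
    exact ang a b ((hmem a).1 ha) ((hmem b).1 hb) h
  · intro w hw
    have h := (hmem w).1 hw
    rcases tri v w h with c | c
    · obtain ⟨e1, e2, e3⟩ := edge v w h c
      have hT : T w = 1 / 2 + (X w - X v) / (2 * (r v - X v)) := by simp only [T, if_pos c]
      refine ⟨⟨by linarith [TR w h c], ?_⟩, ?_⟩
      · rw [hT]
        have : (X w - X v) / (2 * (r v - X v)) ≤ 1 / 2 := by
          rw [div_le_div_iff₀ (by linarith) (by norm_num)]; linarith
        linarith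
      · rw [hT]
        change (γ v).toFun _ ∈ (γ w).img
        rw [LArc_param_h _ _ _ c.le]
        exact (memE v w h c).2
    · obtain ⟨e1, e2, e3⟩ := edge w v h.symm c
      have hT : T w = 1 / 2 - (Y w - Y v) / (2 * (t v - Y v)) := by simp only [T, if_neg c.not_gt]
      refine ⟨⟨?_, by linarith [TL w h c]⟩, ?_⟩
      · rw [hT]
        have : (Y w - Y v) / (2 * (t v - Y v)) ≤ 1 / 2 := by
          rw [div_le_div_iff₀ (by linarith) (by norm_num)]; linarith
        linarith
      · rw [hT]
        change (γ v).toFun _ ∈ (γ w).img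
        rw [LArc_param_v _ _ _ e2.le]
        exact (memE w v h.symm c).1
  · simpa using hlt

/-- Every partial 2-tree (series-parallel graph) has, for some straight-line plane drawing,
an order-preserving 1-string representation in which every arc is an L-shape. -/
theorem stmt_4 {V : Type} [Fintype V] (G : SimpleGraph V) (h : IsPartialTwoTree G) :
    ∃ p : V → ℝ × ℝ, IsPlaneDrawing G p ∧
      ∃ R : OneStringRep G,
        (∀ v : V, IsLShape (R.γ v)) ∧
        OrderPreserving G p R := by
  obtain ⟨W, H, ⟨n, e, hn, hcl, hS⟩, g, hg⟩ := h
  let A : ℕ → ℕ → Prop := fun i j =>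
    ∃ (hi : i < n) (hj : j < n), H.Adj (e.symm ⟨i, hi⟩) (e.symm ⟨j, hj⟩)
  have hs : ∀ u v, A u v → A v u := fun u v ⟨a, b, c⟩ => ⟨b, a, c.symm⟩
  have hi : ∀ u, ¬ A u u := fun u ⟨_, _, c⟩ => c.ne rfl
  have hAe : ∀ x y : W, H.Adj x y → A (e x).val (e y).val := by
    intro x y hxy
    exact ⟨(e x).2, (e y).2, by simpa using hxy⟩
  have hA : ∀ c, 2 ≤ c → c < n →
      ∃ a < c, ∃ b < c, A a b ∧ A c a ∧ ∀ w < c, A c w → w = a ∨ w = b := by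
    intro c hc hcn
    obtain ⟨S, hcard, hmem, hclS⟩ := hS ⟨c, hcn⟩ hc
    classical
    obtain ⟨s, t, hst, rfl⟩ := Finset.card_eq_two.1 hcard
    have h1 := (hmem s).1 (by simp)
    have h2 := (hmem t).1 (by simp)
    refine ⟨_, h1.2, _, h2.2, hAe _ _ (hclS (by simp) (by simp) hst), ?_, ?_⟩
    · have := hAe _ _ h1.1
      simpa using this
    · rintro w hw ⟨_, hwn, hadj⟩
      have := (hmem (e.symm ⟨w, hwn⟩)).2 ⟨hadj, by simpa using hw⟩
      simp only [Finset.mem_insert, Finset.mem_singleton] at this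
      rcases this with h | h
      · left; rw [← h]; simp
      · right; rw [← h]; simp
  have h01 : A 0 1 := by
    refine ⟨by omega, by omega, ?_⟩
    apply hcl
    · simp
    · simp
    · intro h
      have := e.symm.injective h
      simp at this
  have hN : ∀ i < n, ∃ j < n, A i j := by
    intro i hin
    by_cases h2 : 2 ≤ i
    · obtain ⟨a, ha, _, _, _, h, _⟩ := hA i h2 hin
      exact ⟨a, by omega, h⟩
    · have : i = 0 ∨ i = 1 := by omega
      rcases this with rfl | rfl
      · exact ⟨1, by omega, h01⟩
      · exact ⟨0, by omega, hs _ _ h01⟩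
  obtain ⟨X, Y, p, hG⟩ := Good.exists hs hi hn (fun c h1 h2 => by
    obtain ⟨a, ha, b, hb, hab, _, h⟩ := hA c h1 h2
    exact ⟨a, ha, b, hb, hab, h⟩)
  let f : V → ℕ := fun v => (e (g v)).val
  have hf : ∀ v, f v < n := fun v => (e (g v)).2
  have finj : ∀ u v, f u = f v → u = v := fun u v h => g.injective (e.injective (Fin.ext h))
  have fne : ∀ {u v}, u ≠ v → f u ≠ f v := fun h h' => h (finj _ _ h')
  have fA : ∀ {u v}, G.Adj u v → A (f u) (f v) := fun h => hAe _ _ (hg _ _ h)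
  refine ⟨fun v => p (f v), ⟨?_, ?_, ?_, ?_⟩, ?_⟩
  · intro u v h
    exact finj _ _ (hG.injp hs hi hN (hf u) (hf v) h)
  · intro u v x y h1 h2 h3 h4 h5 h6
    exact Set.disjoint_iff_inter_eq_empty.1 (hG.disj _ (hf u) _ (hf v) _ (hf x) _ (hf y)
      (fA h1) (fA h2) (fne h3) (fne h4) (fne h5) (fne h6))
  · intro u v w h1 h2 h3
    refine Set.eq_singleton_iff_unique_mem.2
      ⟨⟨left_mem_segment _ _ _, left_mem_segment _ _ _⟩, ?_⟩
    rintro z ⟨z1, z2⟩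
    exact hG.meet hs hi (hf u) (hf v) (hf w) (fA h1) (fA h2) (fne h3) z1 z2
  · intro u v w h1 h2 h3
    exact hG.notOn hs hi hN (hf u) (hf v) (hf w) (fA h1) (fne h2) (fne h3)
  · exact main_aux G (fun v => X (f v)) (fun v => Y (f v)) (fun v => p (f v))
      (fun u v h => finj _ _ (hG.injX _ (hf u) _ (hf v) h))
      (fun u v h => finj _ _ (hG.injY _ (hf u) _ (hf v) h))
      (fun u v h => hG.monY _ (hf u) _ (hf v) (fA h))
      (fun u v h => hG.monp _ (hf u) _ (hf v) (fA h))
      (fun u v u' v' h h' => hG.star _ (hf u) _ (hf v) _ (hf u') _ (hf v') (fA h) (fA h'))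
      (fun a v v' h h' => hG.slR _ (hf a) _ (hf v) _ (hf v') (fA h) (fA h'))
      (fun a v v' h h' => hG.slL _ (hf a) _ (hf v) _ (hf v') (fA h) (fA h'))
end

section
/- Every 2-tree G admits a contact representation by touching L-shapes: an assignment of an L-shape to each vertex such that the images of the L-shapes of distinct non-adjacent vertices are disjoint; the images of the L-shapes of two adjacent vertices intersect in exactly one point, which is an endpoint of one of the two arcs and is not an endpoint of the other arc; and no point of ℝ² lies on the images of three distinct L-shapes. -/
structure LP where
  x : ℝ
  y : ℝ
  w : ℝ
  h : ℝ
  hw : 0 < w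
  hh : 0 < h

def LP.On (p : LP) (s t : ℝ) : Prop :=
  (s = p.x ∧ p.y ≤ t ∧ t ≤ p.y + p.h) ∨ (t = p.y ∧ p.x ≤ s ∧ s ≤ p.x + p.w)

/-- contact of the horizontal arm of `a` with the vertical arm of `b`, with free room `d`
to the lower left of the contact point -/
def LGood {V : Type} (P : V → LP) (A : Set V) (a b : V) (d : ℝ) : Prop :=
  0 < d ∧ (P a).x ≤ (P b).x - d ∧ (P b).x ≤ (P a).x + (P a).w ∧
  (P b).y ≤ (P a).y - d ∧ (P a).y ≤ (P b).y + (P b).h ∧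
  ((P b).x = (P a).x + (P a).w ∧ (P a).y ≠ (P b).y + (P b).h ∨
   (P b).x ≠ (P a).x + (P a).w ∧ (P a).y = (P b).y + (P b).h) ∧
  ∀ c ∈ A, c ≠ a → c ≠ b → ∀ s t, (P b).x - d ≤ s → s ≤ (P b).x →
    (P a).y - d ≤ t → t ≤ (P a).y → ¬ (P c).On s t

def LInv {V : Type} (G : SimpleGraph V) (P : V → LP) (A : Set V) : Prop :=
  (∀ u ∈ A, ∀ v ∈ A, G.Adj u v → (∃ d, LGood P A u v d) ∨ (∃ d, LGood P A v u d)) ∧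
  (∀ u ∈ A, ∀ v ∈ A, u ≠ v → ¬ G.Adj u v → ∀ s t, (P u).On s t → ¬ (P v).On s t)

lemma LGood.contact {V : Type} {P : V → LP} {A : Set V} {a b : V} {d : ℝ}
    (h : LGood P A a b d) (s t : ℝ) :
    ((P a).On s t ∧ (P b).On s t) ↔ (s = (P b).x ∧ t = (P a).y) := by
  obtain ⟨h0, h1, h2, h3, h4, -, -⟩ := h
  constructor
  · rintro ⟨h5 | h5, h6 | h6⟩ <;> constructor <;> linarith [h5.1, h5.2.1, h5.2.2, h6.1, h6.2.1, h6.2.2]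
  · rintro ⟨rfl, rfl⟩
    exact ⟨Or.inr ⟨rfl, by linarith, h2⟩, Or.inl ⟨rfl, by linarith, h4⟩⟩

/-- old contacts different from `a,b` survive -/
lemma LGood.old {V : Type} {P P' : V → LP} {A : Set V} {v a b c e : V} {d d' : ℝ}
    (hv : v ∉ A) (hP : ∀ u ∈ A, P' u = P u) (hab : LGood P A a b d) (hce : LGood P A c e d')
    (hc : c ∈ A) (he : e ∈ A) 
    (hne : (c ≠ a ∧ c ≠ b) ∨ (e ≠ a ∧ e ≠ b))
    (hvR : ∀ s t, (P' v).On s t → (P b).x - d ≤ s ∧ s ≤ (P b).x ∧ (P a).y - d ≤ t ∧ t ≤ (P a).y) :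
    ∃ d'', LGood P' (insert v A) c e d'' := by
  have hq := (hce.contact (P e).x (P c).y).2 ⟨rfl, rfl⟩
  have hnot : ¬ ((P b).x - d ≤ (P e).x ∧ (P e).x ≤ (P b).x ∧ (P a).y - d ≤ (P c).y ∧
      (P c).y ≤ (P a).y) := by
    rintro ⟨h1, h2, h3, h4⟩
    rcases hne with hne | hne
    · exact hab.2.2.2.2.2.2 c hc hne.1 hne.2 _ _ h1 h2 h3 h4 hq.1
    · exact hab.2.2.2.2.2.2 e he hne.1 hne.2 _ _ h1 h2 h3 h4 hq.2
  have key : ∃ d'', 0 < d'' ∧ d'' ≤ d' ∧ ∀ s t, (P e).x - d'' ≤ s → s ≤ (P e).x →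
    (P c).y - d'' ≤ t → t ≤ (P c).y → ¬ (P' v).On s t := by
    by_cases h2 : (P e).x ≤ (P b).x
    · by_cases h4 : (P c).y ≤ (P a).y
      · refine ⟨d', hce.1, le_rfl, fun s t g1 g2 g3 g4 g => hnot ?_⟩
        obtain ⟨k1, k2, k3, k4⟩ := hvR s t g
        exact ⟨by linarith, h2, by linarith, h4⟩
      · push Not at h4
        refine ⟨min d' (((P c).y - (P a).y)/2), lt_min hce.1 (by linarith), min_le_left _ _, 
          fun s t g1 g2 g3 g4 g => ?_⟩
        obtain ⟨k1, k2, k3, k4⟩ := hvR s t g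
        linarith [min_le_right d' (((P c).y - (P a).y)/2)]
    · push Not at h2
      refine ⟨min d' (((P e).x - (P b).x)/2), lt_min hce.1 (by linarith), min_le_left _ _, 
          fun s t g1 g2 g3 g4 g => ?_⟩
      obtain ⟨k1, k2, k3, k4⟩ := hvR s t g
      linarith [min_le_right d' (((P e).x - (P b).x)/2)]
  obtain ⟨d'', k0, k1, k2⟩ := key
  obtain ⟨h0, h1, h2, h3, h4, h5, h6⟩ := hce
  refine ⟨d'', k0, ?_⟩
  rw [hP c hc, hP e he]
  refine ⟨by linarith, h2, by linarith, h4, h5, ?_⟩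
  rintro z (rfl | hz) hzc hze s t g1 g2 g3 g4
  · exact k2 s t g1 g2 g3 g4
  · rw [hP z hz]
    exact h6 z hz hzc hze s t (by linarith) g2 (by linarith) g4

lemma LInv.step {V : Type} {G : SimpleGraph V} {P : V → LP} {A : Set V} {v a b : V} {d : ℝ}
    (hI : LInv G P A) (hv : v ∉ A) (ha : a ∈ A) (hb : b ∈ A) (hab : LGood P A a b d)
    (hn : ∀ u ∈ A, G.Adj v u ↔ u = a ∨ u = b) : ∃ P', LInv G P' (insert v A) := by
  classical
  have hd := hab.1
  let N : LP := ⟨(P b).x - d/2, (P a).y - d/2, d/2, d/2, by linarith, by linarith⟩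
  let P' : V → LP := Function.update P v N
  have hP'v : P' v = N := by simp [P']
  have hva : ∀ u ∈ A, u ≠ v := fun u hu h => hv (h ▸ hu)
  have hP : ∀ u ∈ A, P' u = P u := fun u hu => by simp [P', hva u hu]
  have hvR : ∀ s t, (P' v).On s t →
      (P b).x - d ≤ s ∧ s ≤ (P b).x ∧ (P a).y - d ≤ t ∧ t ≤ (P a).y := by
    intro s t h
    rw [hP'v] at h
    rcases h with ⟨h1, h2, h3⟩ | ⟨h1, h2, h3⟩ <;> simp only [N] at h1 h2 h3 <;>
      refine ⟨?_, ?_, ?_, ?_⟩ <;> linarith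
  have hab' := hab
  obtain ⟨-, h1, h2, h3, h4, h5, h6⟩ := hab'
  have hne : a ≠ b := by
    rintro rfl
    linarith
  have hnewab : LGood P' (insert v A) a b (d/4) := by
    refine ⟨by linarith, ?_⟩
    rw [hP a ha, hP b hb]
    refine ⟨by linarith, h2, by linarith, h4, h5, ?_⟩
    rintro c (rfl | hc) hca hcb s t g1 g2 g3 g4
    · rw [hP'v]
      rintro (⟨k1, k2, k3⟩ | ⟨k1, k2, k3⟩) <;> simp only [N] at k1 k2 k3 <;> linarith
    · rw [hP c hc]
      exact h6 c hc hca hcb s t (by linarith) g2 (by linarith) g4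
  have hav : LGood P' (insert v A) a v (d/2) := by
    refine ⟨by linarith, ?_⟩
    rw [hP a ha, hP'v]
    simp only [N]
    refine ⟨by linarith, by linarith, by linarith, by linarith,
      Or.inr ⟨by intro h; linarith, by ring⟩, ?_⟩
    rintro c (rfl | hc) hca hcb s t g1 g2 g3 g4
    · exact absurd rfl hcb
    · rw [hP c hc]
      by_cases hcb' : c = b
      · subst hcb'
        rintro (⟨k1, k2, k3⟩ | ⟨k1, k2, k3⟩) <;> linarith
      · exact h6 c hc hca hcb' s t (by linarith) (by linarith) (by linarith) g4
  have hvb : LGood P' (insert v A) v b (d/2) := by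
    refine ⟨by linarith, ?_⟩
    rw [hP b hb, hP'v]
    simp only [N]
    refine ⟨by linarith, by linarith, by linarith, by linarith,
      Or.inl ⟨by ring, by intro h; linarith⟩, ?_⟩
    rintro c (rfl | hc) hca hcb s t g1 g2 g3 g4
    · exact absurd rfl hca
    · rw [hP c hc]
      by_cases hcb' : c = a
      · subst hcb'
        rintro (⟨k1, k2, k3⟩ | ⟨k1, k2, k3⟩) <;> linarith
      · exact h6 c hc hcb' hcb s t (by linarith) (by linarith) (by linarith) (by linarith)
  have hnon : ∀ u ∈ A, ¬ G.Adj v u → ∀ s t, (P' v).On s t → ¬ (P' u).On s t := by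
    intro u hu huv s t g
    rw [hn u hu] at huv
    push Not at huv
    obtain ⟨k1, k2, k3, k4⟩ := hvR s t g
    rw [hP u hu]
    exact h6 u hu huv.1 huv.2 s t k1 k2 k3 k4
  have hold : ∀ c ∈ A, ∀ e ∈ A, (∃ d', LGood P A c e d') →
      (∃ d', LGood P' (insert v A) c e d') ∨ (∃ d', LGood P' (insert v A) e c d') := by
    rintro c hc e he ⟨d', hce⟩
    have hcene : c ≠ e := by
      rintro rfl
      have := hce.1
      have := hce.2.1
      linarith
    by_cases hq : (c ≠ a ∧ c ≠ b) ∨ (e ≠ a ∧ e ≠ b)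
    · exact Or.inl (hab.old hv hP hce hc he hq hvR)
    · have : (c = a ∧ e = b) ∨ (c = b ∧ e = a) := by grind
      rcases this with ⟨rfl, rfl⟩ | ⟨rfl, rfl⟩
      · exact Or.inl ⟨_, hnewab⟩
      · exact Or.inr ⟨_, hnewab⟩
  refine ⟨P', ?_, ?_⟩
  · rintro u (rfl | hu) z (rfl | hz) huz
    · exact absurd huz (G.irrefl)
    · rcases (hn z hz).1 huz with rfl | rfl
      · exact Or.inr ⟨_, hav⟩
      · exact Or.inl ⟨_, hvb⟩
    · rcases (hn u hu).1 huz.symm with rfl | rfl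
      · exact Or.inl ⟨_, hav⟩
      · exact Or.inr ⟨_, hvb⟩
    · rcases hI.1 u hu z hz huz with h | h
      · exact hold u hu z hz h
      · exact (hold z hz u hu h).symm
  · rintro u (rfl | hu) z (rfl | hz) huz hnadj s t
    · exact absurd rfl huz
    · exact hnon z hz hnadj s t
    · exact fun g1 g2 => hnon u hu (fun h => hnadj h.symm) s t g2 g1
    · rw [hP u hu, hP z hz]
      exact hI.2 u hu z hz huz hnadj s t

lemma LInv.all {V : Type} {G : SimpleGraph V} (h : IsKTree 2 G) :
    ∃ P : V → LP, LInv G P Set.univ := by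
  classical
  obtain ⟨n, e, hn, hcl, hS⟩ := h
  have main : ∀ m, 2 ≤ m → m ≤ n → ∃ P : V → LP, LInv G P {v | (e v).val < m} := by
    intro m hm
    induction m, hm using Nat.le_induction with
    | base =>
      intro _
      let A : LP := ⟨0, 0, 1, 1, by norm_num, by norm_num⟩
      let B : LP := ⟨1, -1, 1, 2, by norm_num, by norm_num⟩
      let P : V → LP := fun v => if (e v).val = 0 then A else B
      have hG : ∀ u v, (e u).val = 0 → (e v).val = 1 →
          LGood P {v | (e v).val < 2} u v (1/2) := by
        intro u v hu hv
        have hPu : P u = A := by simp [P, hu]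
        have hPv : P v = B := by simp [P, hv]
        unfold LGood
        rw [hPu, hPv]
        refine ⟨by norm_num, by norm_num [A, B], by norm_num [A, B], by norm_num [A, B],
          by norm_num [A, B], by norm_num [A, B], ?_⟩
        intro c hc hcu hcv
        exfalso
        have hc' : (e c).val < 2 := hc
        have : (e c).val = 0 ∨ (e c).val = 1 := by omega
        rcases this with h | h
        · exact hcu (e.injective (Fin.ext (by omega)))
        · exact hcv (e.injective (Fin.ext (by omega)))
      refine ⟨P, ?_, ?_⟩
      · intro u hu v hv huv
        have hu' : (e u).val < 2 := hu
        have hv' : (e v).val < 2 := hv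
        have hne : (e u).val ≠ (e v).val := fun h => huv.ne (e.injective (Fin.ext h))
        rcases Nat.lt_or_gt_of_ne hne with h | h
        · exact Or.inl ⟨_, hG u v (by omega) (by omega)⟩
        · exact Or.inr ⟨_, hG v u (by omega) (by omega)⟩
      · intro u hu v hv huv hnadj
        exact absurd (hcl hu hv huv) hnadj
    | succ m hm ih =>
      intro hmn
      obtain ⟨P, hP⟩ := ih (by omega)
      obtain ⟨S, hcard, hmem, hclS⟩ := hS ⟨m, by omega⟩ hm
      obtain ⟨a, b, hab, rfl⟩ := Finset.card_eq_two.1 hcard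
      set v := e.symm ⟨m, by omega⟩ with hv
      have hev : (e v).val = m := by simp [hv]
      have hset : {u | (e u).val < m + 1} = insert v {u | (e u).val < m} := by
        ext u
        simp only [Set.mem_ofPred_eq, Set.mem_insert_iff]
        constructor
        · intro h
          by_cases h' : (e u).val < m
          · exact Or.inr h'
          · exact Or.inl (e.injective (Fin.ext (by omega)))
        · rintro (rfl | h) <;> omega
      have ha := (hmem a).1 (by simp)
      have hb := (hmem b).1 (by simp)
      have hadj : G.Adj a b := hclS (by simp) (by simp) hab
      have hn' : ∀ u ∈ {u | (e u).val < m}, G.Adj v u ↔ u = a ∨ u = b := by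
        intro u hu
        have := hmem u
        simp only [Finset.mem_insert, Finset.mem_singleton] at this
        rw [this]
        exact ⟨fun h => ⟨h, hu⟩, fun h => h.1⟩
      have hvn : v ∉ {u | (e u).val < m} := by
        simp [hev]
      rw [hset]
      rcases hP.1 a ha.2 b hb.2 hadj with ⟨d, hd⟩ | ⟨d, hd⟩
      · exact hP.step hvn ha.2 hb.2 hd hn'
      · exact hP.step hvn hb.2 ha.2 hd (fun u hu => (hn' u hu).trans or_comm)
  obtain ⟨P, hP⟩ := main n hn le_rfl
  refine ⟨P, ?_⟩
  have : {v | (e v).val < n} = Set.univ := by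
    ext v
    simp
  rwa [this] at hP

noncomputable def LP.arc (p : LP) : Arc where
  toFun := fun t => (p.x + p.w * max 0 (2*t-1), p.y + p.h * max 0 (1-2*t))
  contOn := by fun_prop
  injOn := by
    intro s _ t _ hst
    simp only [Prod.mk.injEq, add_right_inj, mul_eq_mul_left_iff, p.hw.ne', p.hh.ne', or_false] at hst
    obtain ⟨h1, h2⟩ := hst
    rcases le_total (2*s) 1 with hs | hs <;> rcases le_total (2*t) 1 with ht | ht
    · rw [max_eq_right (by linarith), max_eq_right (by linarith)] at h2; linarith
    · rw [max_eq_right (by linarith), max_eq_left (by linarith)] at h2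
      rw [max_eq_left (by linarith), max_eq_right (by linarith)] at h1; linarith
    · rw [max_eq_left (by linarith), max_eq_right (by linarith)] at h2
      rw [max_eq_right (by linarith), max_eq_left (by linarith)] at h1; linarith
    · rw [max_eq_right (by linarith), max_eq_right (by linarith)] at h1; linarith

lemma LP.mem_img (p : LP) (q : ℝ × ℝ) : q ∈ p.arc.img ↔ p.On q.1 q.2 := by
  obtain ⟨s, t⟩ := q
  have hw := p.hw
  have hh := p.hh
  simp only [Arc.img, LP.arc, Set.mem_image, Set.mem_Icc, Prod.mk.injEq, LP.On]
  constructor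
  · rintro ⟨r, ⟨h0, h1⟩, rfl, rfl⟩
    rcases le_total (2*r) 1 with hs | hs
    · rw [max_eq_left (by linarith), max_eq_right (by linarith)]
      left
      refine ⟨by ring, ?_, ?_⟩ <;> nlinarith
    · rw [max_eq_right (by linarith), max_eq_left (by linarith)]
      right
      refine ⟨by ring, ?_, ?_⟩ <;> nlinarith
  · rintro (⟨rfl, h1, h2⟩ | ⟨rfl, h1, h2⟩)
    · have k1 : 0 ≤ (t - p.y) / p.h := div_nonneg (by linarith) hh.le
      have k2 : (t - p.y) / p.h ≤ 1 := by rw [div_le_one hh]; linarith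
      refine ⟨(1 - (t - p.y) / p.h) / 2, ⟨by linarith, by linarith⟩, ?_, ?_⟩
      · rw [max_eq_left (by linarith)]; ring
      · rw [max_eq_right (by linarith)]; field_simp; try ring
    · have k1 : 0 ≤ (s - p.x) / p.w := div_nonneg (by linarith) hw.le
      have k2 : (s - p.x) / p.w ≤ 1 := by rw [div_le_one hw]; linarith
      refine ⟨(1 + (s - p.x) / p.w) / 2, ⟨by linarith, by linarith⟩, ?_, ?_⟩
      · rw [max_eq_right (by linarith)]; field_simp; try ring
      · rw [max_eq_left (by linarith)]; ring

lemma LP.mem_ends (p : LP) (q : ℝ × ℝ) : q ∈ p.arc.ends ↔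
    (q.1 = p.x ∧ q.2 = p.y + p.h) ∨ (q.1 = p.x + p.w ∧ q.2 = p.y) := by
  obtain ⟨s, t⟩ := q
  simp only [Arc.ends, LP.arc, Set.mem_insert_iff, Set.mem_singleton_iff, Prod.mk.injEq]
  norm_num

lemma seg_vert (x y h : ℝ) (hh : 0 < h) (q : ℝ × ℝ) :
    q ∈ segment ℝ (x, y + h) (x, y) ↔ q.1 = x ∧ y ≤ q.2 ∧ q.2 ≤ y + h := by
  obtain ⟨s, t⟩ := q
  rw [segment_symm, ← Prod.image_mk_segment_right, segment_eq_Icc (by linarith)]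
  simp only [Set.mem_image, Set.mem_Icc, Prod.mk.injEq]
  constructor
  · rintro ⟨r, hr, rfl, rfl⟩; exact ⟨rfl, hr⟩
  · rintro ⟨rfl, hr⟩; exact ⟨t, hr, rfl, rfl⟩

lemma seg_horiz (x y w : ℝ) (hw : 0 < w) (q : ℝ × ℝ) :
    q ∈ segment ℝ (x, y) (x + w, y) ↔ q.2 = y ∧ x ≤ q.1 ∧ q.1 ≤ x + w := by
  obtain ⟨s, t⟩ := q
  rw [← Prod.image_mk_segment_left, segment_eq_Icc (by linarith)]
  simp only [Set.mem_image, Set.mem_Icc, Prod.mk.injEq]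
  constructor
  · rintro ⟨r, hr, rfl, rfl⟩; exact ⟨rfl, hr⟩
  · rintro ⟨rfl, hr⟩; exact ⟨s, hr, rfl, rfl⟩

lemma LP.isL (p : LP) : IsLShape p.arc := by
  refine ⟨p.x, p.y, p.w, p.h, p.hw, p.hh, ?_⟩
  ext q
  rw [p.mem_img, Set.mem_union, seg_vert _ _ _ p.hh, seg_horiz _ _ _ p.hw]
  rfl

lemma LGood.touch {V : Type} {P : V → LP} {A : Set V} {a b : V} {d : ℝ}
    (h : LGood P A a b d) : ∃ q : ℝ × ℝ, (P a).arc.img ∩ (P b).arc.img = {q} ∧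
        ((q ∈ (P a).arc.ends ∧ q ∉ (P b).arc.ends) ∨
          (q ∈ (P b).arc.ends ∧ q ∉ (P a).arc.ends)) := by
  refine ⟨((P b).x, (P a).y), ?_, ?_⟩
  · ext ⟨s, t⟩
    rw [Set.mem_inter_iff, LP.mem_img, LP.mem_img, h.contact s t]
    simp
  · obtain ⟨h0, h1, h2, h3, h4, h5, -⟩ := h
    have := (P a).hh
    have := (P b).hw
    simp only [LP.mem_ends]
    rcases h5 with ⟨k1, k2⟩ | ⟨k1, k2⟩
    · left
      refine ⟨Or.inr ⟨k1, trivial⟩, ?_⟩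
      rintro (⟨-, g⟩ | ⟨g, -⟩)
      · exact k2 g
      · linarith
    · right
      refine ⟨Or.inl ⟨trivial, k2⟩, ?_⟩
      rintro (⟨-, g⟩ | ⟨g, -⟩)
      · linarith
      · exact k1 g

/-- Every 2-tree has a contact representation by touching L-shapes: non-adjacent vertices get
disjoint L-shapes; adjacent vertices get L-shapes meeting in exactly one point, which is an
endpoint of exactly one of the two arcs; and no point lies on three of the L-shapes. -/
theorem stmt_5 {V : Type} [Fintype V] (G : SimpleGraph V) (h : IsKTree 2 G) :
    ∃ L : V → Arc,
      (∀ v : V, IsLShape (L v)) ∧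
      (∀ u v : V, u ≠ v → ¬G.Adj u v → (L u).img ∩ (L v).img = ∅) ∧
      (∀ u v : V, G.Adj u v → ∃ q : ℝ × ℝ, (L u).img ∩ (L v).img = {q} ∧
        ((q ∈ (L u).ends ∧ q ∉ (L v).ends) ∨ (q ∈ (L v).ends ∧ q ∉ (L u).ends))) ∧
      (∀ u v w : V, u ≠ v → u ≠ w → v ≠ w →
        (L u).img ∩ (L v).img ∩ (L w).img = ∅) := by
  obtain ⟨P, hP⟩ := LInv.all h
  have hdis : ∀ u v : V, u ≠ v → ¬G.Adj u v → (P u).arc.img ∩ (P v).arc.img = ∅ := by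
    intro u v huv hn
    ext q
    simp only [Set.mem_inter_iff, LP.mem_img, Set.mem_empty_iff_false, iff_false]
    rintro ⟨h1, h2⟩
    exact hP.2 u trivial v trivial huv hn _ _ h1 h2
  refine ⟨fun v => (P v).arc, fun v => (P v).isL, hdis, ?_, ?_⟩
  · intro u v huv
    rcases hP.1 u trivial v trivial huv with ⟨d, hd⟩ | ⟨d, hd⟩
    · exact hd.touch
    · obtain ⟨q, h1, h2⟩ := hd.touch
      exact ⟨q, by rw [Set.inter_comm]; exact h1, h2.symm⟩
  · intro u v w huv huw hvw
    by_cases hadj : G.Adj u v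
    · have key : ∀ a b c : V, c ≠ a → c ≠ b → (∃ d, LGood P Set.univ a b d) → ∀ s t,
          (P a).On s t → (P b).On s t → ¬ (P c).On s t := by
        rintro a b c hca hcb ⟨d, hd⟩ s t g1 g2
        obtain ⟨rfl, rfl⟩ := (hd.contact s t).1 ⟨g1, g2⟩
        have := hd.1
        exact hd.2.2.2.2.2.2 c trivial hca hcb _ _ (by linarith) le_rfl (by linarith) le_rfl
      ext q
      simp only [Set.mem_inter_iff, LP.mem_img, Set.mem_empty_iff_false, iff_false]
      rintro ⟨⟨h1, h2⟩, h3⟩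
      rcases hP.1 u trivial v trivial hadj with hd | hd
      · exact key u v w huw.symm hvw.symm hd _ _ h1 h2 h3
      · exact key v u w hvw.symm huw.symm hd _ _ h2 h1 h3
    · show (P u).arc.img ∩ (P v).arc.img ∩ _ = ∅
      rw [hdis u v huv hadj, Set.empty_inter]
end
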